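/- arXiv:2402.19152 — 4 statements merged into one kernel-verified Lean document; each statement's English description precedes it below -/
import Mathlib

section
/- Let (Ω, Σ, μ) be a σ-finite measure space and let h_1, …, h_n : Ω → ℝ be measurable functions each of which is integrable on every set of finite measure. Set h = Σ_{k=1}^n |h_k|. For every ε > 0 there exists a sequence (U_i) of pairwise disjoint measurable sets with 0 < μ(U_i) < ∞ for all i such that, μ-almost everywhere, |h_k − P_𝒰 h_k| ≤ ε·h for every 1 ≤ k ≤ n, where P_𝒰 f = Σ_i (μ(U_i)^{-1} ∫_{U_i} f dμ)·χ_{U_i} is the conditional expectation over the family 𝒰 = (U_i). -/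
open MeasureTheory

noncomputable section

/-- Given finitely many functions `h₁, …, hₙ` on a σ-finite measure space, each integrable on
sets of finite measure, and `ε > 0`, there is a countable family `𝒰 = (Uᵢ)` of pairwise
disjoint measurable sets of finite positive measure such that a.e.
`|h_k − P_𝒰 h_k| ≤ ε · Σ_j |h_j|` for each `k`, where
`P_𝒰 f = Σᵢ (μ(Uᵢ)⁻¹ ∫_{Uᵢ} f dμ) · χ_{Uᵢ}` is the conditional expectation over `𝒰`. -/
theorem statement5 {Ω : Type*} [MeasurableSpace Ω] (μ : Measure Ω) [SigmaFinite μ]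
    (n : ℕ) (h : Fin n → Ω → ℝ) (hmeas : ∀ k, Measurable (h k))
    (hint : ∀ (k : Fin n) (A : Set Ω), MeasurableSet A → μ A < ⊤ → IntegrableOn (h k) A μ)
    (ε : ℝ) (hε : 0 < ε) :
    ∃ (ι : Type) (_ : Countable ι) (U : ι → Set Ω),
      (∀ i, MeasurableSet (U i)) ∧
      Pairwise (Function.onFun Disjoint U) ∧
      (∀ i, 0 < μ (U i) ∧ μ (U i) < ⊤) ∧
      ∀ k : Fin n, ∀ᵐ ω ∂μ,
        |h k ω - ∑' i : ι, Set.indicator (U i)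
            (fun _ => (∫ x in U i, h k x ∂μ) / (μ (U i)).toReal) ω|
          ≤ ε * ∑ j : Fin n, |h j ω| := by
  classical
  let H : Ω → ℝ := fun ω => ∑ j : Fin n, |h j ω|
  have hH : Measurable H := Finset.measurable_sum _ (fun j _ => (hmeas j).abs)
  let m : Ω → ℤ := fun ω => ⌊Real.log (H ω)⌋
  have hm : Measurable m := Int.measurable_floor.comp (Real.measurable_log.comp hH)
  let G : Ω → ℕ × ℤ × (Fin n → ℤ) := fun ω =>
    (spanningSetsIndex μ ω, m ω, fun k => ⌊h k ω / (ε * Real.exp (m ω))⌋)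
  have hmR : Measurable (fun ω => ((m ω : ℤ) : ℝ)) := (measurable_from_top (f := fun z : ℤ => (z : ℝ))).comp hm
  have hG : Measurable G := by
    refine (measurableSet_spanningSetsIndex μ).prodMk (hm.prodMk ?_)
    refine measurable_pi_lambda _ fun k => ?_
    exact Int.measurable_floor.comp
      ((hmeas k).div (measurable_const.mul (Real.measurable_exp.comp hmR)))
  let C : ℕ × ℤ × (Fin n → ℤ) → Set Ω := fun p => G ⁻¹' {p} ∩ {ω | 0 < H ω}
  have hC : ∀ p, MeasurableSet (C p) := fun p =>
    (hG (measurableSet_singleton p)).inter (measurableSet_lt measurable_const hH)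
  have hfin : ∀ p, μ (C p) < ⊤ := by
    intro p
    refine lt_of_le_of_lt (measure_mono ?_) (measure_spanningSets_lt_top μ p.1)
    rintro ω ⟨h1, -⟩
    have h2 : G ω = p := h1
    have h3 : spanningSetsIndex μ ω = p.1 := by rw [← h2]
    rw [← h3]
    exact mem_spanningSetsIndex μ ω
  have hosc : ∀ p, ∀ x ∈ C p, ∀ y ∈ C p, ∀ k, |h k x - h k y| ≤ ε * H x := by
    rintro p x ⟨hx, hx0⟩ y ⟨hy, -⟩ k
    have hxy : G x = G y := by
      rw [show G x = p from hx, show G y = p from hy]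
    have h1 : m x = m y := congrArg (fun q => q.2.1) hxy
    have h2 : ⌊h k x / (ε * Real.exp (m x))⌋ = ⌊h k y / (ε * Real.exp (m y))⌋ :=
      congrArg (fun q => q.2.2 k) hxy
    rw [← h1] at h2
    have h3 := Int.abs_sub_lt_one_of_floor_eq_floor h2
    have hpos : 0 < ε * Real.exp (m x) := by positivity
    rw [← sub_div, abs_div, abs_of_pos hpos, div_lt_one hpos] at h3
    have h4 : Real.exp (m x) ≤ H x := by
      rw [← Real.le_log_iff_exp_le hx0]
      exact Int.floor_le _
    exact h3.le.trans (mul_le_mul_of_nonneg_left h4 hε.le)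
  refine ⟨{p : ℕ × ℤ × (Fin n → ℤ) // 0 < μ (C p)}, inferInstance, fun i => C i.1,
    fun i => hC _, ?_, fun i => ⟨i.2, hfin _⟩, ?_⟩
  · intro i j hij
    refine Set.disjoint_left.2 ?_
    rintro ω ⟨h1, -⟩ ⟨h2, -⟩
    exact hij (Subtype.ext ((show G ω = i.1 from h1).symm.trans h2))
  · intro k
    have hae : ∀ᵐ ω ∂μ, ∀ p, ω ∈ C p → 0 < μ (C p) := by
      rw [ae_all_iff]
      intro p
      by_cases hp : 0 < μ (C p)
      · exact Filter.Eventually.of_forall fun _ _ => hp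
      · have h0 : μ (C p) = 0 := by simpa using hp
        filter_upwards [measure_eq_zero_iff_ae_notMem.1 h0] with ω hω h'
        exact absurd h' hω
    filter_upwards [hae] with ω hω
    change _ ≤ ε * H ω
    have hHnn : 0 ≤ H ω := Finset.sum_nonneg fun j _ => abs_nonneg _
    by_cases h0 : 0 < H ω
    · have hmem : ω ∈ C (G ω) := ⟨rfl, h0⟩
      have hp := hω _ hmem
      rw [tsum_eq_single (⟨G ω, hp⟩ : {p : ℕ × ℤ × (Fin n → ℤ) // 0 < μ (C p)})]
      · rw [Set.indicator_of_mem hmem]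
        have hpos : 0 < (μ (C (G ω))).toReal := ENNReal.toReal_pos hp.ne' (hfin _).ne
        have hb : ‖∫ x in C (G ω), (h k ω - h k x) ∂μ‖ ≤ (ε * H ω) * μ.real (C (G ω)) :=
          norm_setIntegral_le_of_norm_le_const (hfin _) fun x hx => hosc _ ω hmem x hx k
        have hI : IntegrableOn (fun _ : Ω => h k ω) (C (G ω)) μ :=
          integrableOn_const (hfin _).ne
        rw [integral_sub hI (hint k _ (hC _) (hfin _)), setIntegral_const, smul_eq_mul,
          Real.norm_eq_abs] at hb
        change |_ * _ - _| ≤ _ * (μ (C (G ω))).toReal at hb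
        rw [show h k ω - (∫ x in C (G ω), h k x ∂μ) / (μ (C (G ω))).toReal
          = ((μ (C (G ω))).toReal * h k ω - ∫ x in C (G ω), h k x ∂μ) / (μ (C (G ω))).toReal by
            field_simp, abs_div, abs_of_pos hpos, div_le_iff₀ hpos]
        exact hb
      · intro j hj
        refine Set.indicator_of_notMem ?_ _
        rintro ⟨h1, -⟩
        exact hj (Subtype.ext (show G ω = j.1 from h1).symm)
    · have hk : |h k ω| ≤ H ω :=
        Finset.single_le_sum (f := fun j => |h j ω|) (fun j _ => abs_nonneg _) (Finset.mem_univ k)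
      have hz : ∀ i : {p : ℕ × ℤ × (Fin n → ℤ) // 0 < μ (C p)}, Set.indicator (C i.1)
            (fun _ => (∫ x in C i.1, h k x ∂μ) / (μ (C i.1)).toReal) ω = 0 := fun i =>
        Set.indicator_of_notMem (fun hi => h0 hi.2) _
      have hk0 : h k ω = 0 := abs_eq_zero.1 (le_antisymm (hk.trans (not_lt.1 h0)) (abs_nonneg _))
      rw [tsum_congr hz, tsum_zero, hk0, sub_zero, abs_zero]
      exact mul_nonneg hε.le hHnn
end
end

section
/- Let (Ω, Σ, μ) be a measure space and 1 < r < p < ∞. For measurable f, h : Ω → ℝ define ‖f‖_{L^{p,∞}_r(μ)} = sup{μ(A)^{(1/p)−(1/r)}(∫_A |f|^r dμ)^{1/r} : A ∈ Σ, 0 < μ(A) < ∞} and, for a measure ν on Σ, ‖h‖_{L^{p,∞}_1(ν)} = sup{ν(A)^{(1/p)−1} ∫_A |h| dν : A ∈ Σ, 0 < ν(A) < ∞}; let L^{p,∞}_r(μ) and L^{p,∞}_1(ν) denote the corresponding Banach lattices of (a.e.-classes of) functions with finite norm, ordered a.e. pointwise. Then there exist an index set Γ, measures ν_γ on Σ,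 and vector lattice homomorphisms S_γ : L^{p,∞}_r(μ) → L^{p,∞}_1(ν_γ) with ‖S_γ‖ ≤ 1 for all γ, such that sup_{γ∈Γ} ‖S_γ f‖_{L^{p,∞}_1(ν_γ)} = ‖f‖_{L^{p,∞}_r(μ)} for every f ∈ L^{p,∞}_r(μ); that is, L^{p,∞}_r(μ) embeds lattice isometrically into the ℓ∞-sum (⊕_{γ∈Γ} L^{p,∞}_1(ν_γ))_∞. -/
open MeasureTheory

noncomputable section

/-- The set of values whose supremum is the norm
`‖f‖_{L^{p,∞}_r(μ)} = sup {μ(A)^{1/p−1/r} (∫_A |f|^r dμ)^{1/r} : 0 < μ(A) < ∞}`. -/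
def wrSet {Ω : Type*} [MeasurableSpace Ω] (p r : ℝ) (μ : Measure Ω)
    (f : Ω →ₘ[μ] ℝ) : Set ℝ :=
  {t : ℝ | ∃ A : Set Ω, MeasurableSet A ∧ 0 < μ A ∧ μ A < ⊤ ∧
    t = (μ A).toReal ^ (1/p - 1/r) * (∫ x in A, |f x| ^ r ∂μ) ^ (1/r)}

/-- The set of values whose supremum is the norm
`‖h‖_{L^{p,∞}_1(ν)} = sup {ν(A)^{1/p−1} ∫_A |h| dν : 0 < ν(A) < ∞}`. -/
def w1Set {Ω : Type*} [MeasurableSpace Ω] (p : ℝ) (ν : Measure Ω)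
    (h : Ω →ₘ[ν] ℝ) : Set ℝ :=
  {t : ℝ | ∃ A : Set Ω, MeasurableSet A ∧ 0 < ν A ∧ ν A < ⊤ ∧
    t = (ν A).toReal ^ (1/p - 1) * ∫ x in A, |h x| ∂ν}

open scoped ENNReal NNReal


/-- Young constant. -/
def kY (P : ℝ) : ℝ := (1 - 1/P)^(P-1) / P

lemma kY_pos {P : ℝ} (hP : 1 < P) : 0 < kY P := by
  have : 0 < 1 - 1/P := by
    have : 1/P < 1 := by rw [div_lt_one] <;> linarith
    linarith
  unfold kY; positivity

lemma young_le {P s c T : ℝ} (hP : 1 < P) (hs : 0 < s) (hc : 0 < c) (hT : 0 ≤ T) :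
    s * T^(1-1/P) ≤ c * T + kY P * s^P * c^(1-P) := by
  have hb : 0 < 1 - 1/P := by
    have : 1/P < 1 := by rw [div_lt_one] <;> linarith
    linarith
  have hP0 : 0 < P := by linarith
  set b := 1 - 1/P with hbdef
  set y := b^(P-1) * s^P * c^(1-P) with hy
  have hy0 : 0 ≤ y := by positivity
  have h1P : 0 ≤ 1/P := by positivity
  have := Real.geom_mean_le_arith_mean2_weighted hb.le h1P (p₁ := c*T/b) (p₂ := y)
    (by positivity) hy0 (by simp [hbdef])
  have e1 : b * (c*T/b) = c * T := by field_simp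
  have e2 : 1/P * y = kY P * s^P * c^(1-P) := by rw [hy]; unfold kY; rw [← hbdef]; ring
  rw [e1, e2] at this
  refine le_trans (le_of_eq ?_) this
  have e3 : y^(1/P) = b^b * s * c^(-b) := by
    rw [hy, Real.mul_rpow (by positivity) (by positivity), Real.mul_rpow (by positivity) (by positivity),
      ← Real.rpow_mul hb.le, ← Real.rpow_mul hs.le, ← Real.rpow_mul hc.le]
    have h1 : (P-1) * (1/P) = b := by rw [hbdef]; field_simp
    have h2 : P * (1/P) = 1 := by field_simp
    have h3 : (1-P) * (1/P) = -b := by rw [hbdef]; field_simp; ring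
    rw [h1, h2, h3, Real.rpow_one]
  rw [e3, Real.div_rpow (by positivity) hb.le, Real.mul_rpow hc.le hT, Real.rpow_neg hc.le]
  have : 0 < c^b := by positivity
  have : 0 < b^b := by positivity
  field_simp

lemma young_eq {P s T : ℝ} (hP : 1 < P) (hs : 0 < s) (hT : 0 < T) :
    ∃ c, 0 < c ∧ c * T + kY P * s^P * c^(1-P) = s * T^(1-1/P) := by
  have hb : 0 < 1 - 1/P := by
    have : 1/P < 1 := by rw [div_lt_one] <;> linarith
    linarith
  have hP0 : 0 < P := by linarith
  set b := 1 - 1/P with hbdef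
  refine ⟨b * s * T^(-(1/P)), by positivity, ?_⟩
  have e1 : (b * s * T^(-(1/P)))^(1-P) = b^(1-P) * s^(1-P) * T^b := by
    rw [Real.mul_rpow (by positivity) (by positivity), Real.mul_rpow (by positivity) (by positivity),
      ← Real.rpow_mul hT.le]
    congr 2
    rw [hbdef]; field_simp; ring
  have e2 : T^b = T^(-(1/P)) * T := by
    nth_rw 3 [← Real.rpow_one T]
    rw [← Real.rpow_add hT]; congr 1; rw [hbdef]; ring
  have e3 : b^(P-1) * b^(1-P) = 1 := by
    rw [← Real.rpow_add hb]; simp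
  have e4 : s^P * s^(1-P) = s := by
    rw [← Real.rpow_add hs]; simp
  have e5 : 1/P = 1 - b := by rw [hbdef]; ring
  calc b * s * T^(-(1/P)) * T + kY P * s^P * (b * s * T^(-(1/P)))^(1-P)
      = b * s * (T^(-(1/P)) * T) + (b^(P-1) * b^(1-P)) * (s^P * s^(1-P)) * T^b * (1/P) := by
        rw [e1]; unfold kY; rw [← hbdef]; ring
    _ = b * s * T^b + s * T^b * (1/P) := by rw [e3, e4, ← e2]; ring
    _ = _ := by rw [e5]; ring

section
variable {Ω : Type*} [MeasurableSpace Ω]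

/-- first form of norm bound -/
def BdA (ν : Measure Ω) (h : Ω → ℝ) (P s : ℝ) : Prop :=
  ∀ A, MeasurableSet A → ν A < ⊤ →
    ∫⁻ x in A, ENNReal.ofReal (h x) ∂ν ≤ ENNReal.ofReal (s * (ν A).toReal ^ (1-1/P))

/-- second form of norm bound -/
def BdB (ν : Measure Ω) (h : Ω → ℝ) (P s : ℝ) : Prop :=
  ∀ c, 0 < c → ∀ A, MeasurableSet A → ν A < ⊤ →
    ∫⁻ x in A, ENNReal.ofReal (h x - c) ∂ν ≤ ENNReal.ofReal (kY P * s^P * c^(1-P))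

lemma BdA.toB {ν : Measure Ω} {h : Ω → ℝ} {P s : ℝ} (hP : 1 < P) (hs : 0 < s)
    (hm : Measurable h) (H : BdA ν h P s) : BdB ν h P s := by
  intro c hc A hA hAf
  set A' := A ∩ {x | c < h x} with hA'
  have hA'm : MeasurableSet A' := hA.inter (measurableSet_lt measurable_const hm)
  have hA'f : ν A' < ⊤ := (measure_mono Set.inter_subset_left).trans_lt hAf
  have h1 : ∫⁻ x in A, ENNReal.ofReal (h x - c) ∂ν = ∫⁻ x in A', ENNReal.ofReal (h x - c) ∂ν := by
    rw [← lintegral_indicator hA, ← lintegral_indicator hA'm]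
    congr 1; ext x
    by_cases hx : x ∈ A
    · by_cases hx2 : c < h x
      · rw [Set.indicator_of_mem hx, Set.indicator_of_mem (show x ∈ A' from ⟨hx, hx2⟩)]
      · rw [Set.indicator_of_mem hx, Set.indicator_of_notMem (fun h => hx2 h.2)]
        exact ENNReal.ofReal_of_nonpos (by linarith [not_lt.1 hx2])
    · rw [Set.indicator_of_notMem hx, Set.indicator_of_notMem (fun h => hx h.1)]
  have h2 : ∫⁻ x in A', ENNReal.ofReal (h x - c) ∂ν + ENNReal.ofReal (c * (ν A').toReal)
      = ∫⁻ x in A', ENNReal.ofReal (h x) ∂ν := by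
    have : ENNReal.ofReal (c * (ν A').toReal) = ∫⁻ x in A', ENNReal.ofReal c ∂ν := by
      rw [setLIntegral_const, ENNReal.ofReal_mul hc.le, ENNReal.ofReal_toReal hA'f.ne]
    rw [this, ← lintegral_add_right _ measurable_const]
    refine setLIntegral_congr_fun hA'm (fun x hx => ?_)
    have := hx.2
    have this : c < h x := this
    rw [← ENNReal.ofReal_add (by linarith) hc.le]; congr 1; ring
  rw [h1]
  have h3 := H A' hA'm hA'f
  rw [← h2] at h3
  have h4 := h3.trans (ENNReal.ofReal_le_ofReal (young_le hP hs hc (T := (ν A').toReal) ENNReal.toReal_nonneg))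
  have hk := kY_pos hP
  rw [ENNReal.ofReal_add (by positivity) (by positivity), add_comm] at h4
  exact (ENNReal.add_le_add_iff_left ENNReal.ofReal_ne_top).1 h4

lemma BdB.toA {ν : Measure Ω} {h : Ω → ℝ} {P s : ℝ} (hP : 1 < P) (hs : 0 < s)
    (H : BdB ν h P s) : BdA ν h P s := by
  intro A hA hAf
  rcases eq_or_ne (ν A) 0 with h0 | h0
  · rw [Measure.restrict_eq_zero.2 h0]; simp
  have hT : 0 < (ν A).toReal := ENNReal.toReal_pos h0 hAf.ne
  obtain ⟨c, hc, he⟩ := young_eq hP hs hT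
  have hk := kY_pos hP
  rw [← he, ENNReal.ofReal_add (by positivity) (by positivity)]
  have h1 : ENNReal.ofReal (c * (ν A).toReal) = ∫⁻ x in A, ENNReal.ofReal c ∂ν := by
      rw [setLIntegral_const, ENNReal.ofReal_mul hc.le, ENNReal.ofReal_toReal hAf.ne]
  refine le_trans ?_ (add_le_add le_rfl (H c hc A hA hAf))
  rw [h1, ← lintegral_add_left measurable_const]
  refine lintegral_mono (fun x => ?_)
  refine le_trans (ENNReal.ofReal_le_ofReal (by linarith)) (ENNReal.ofReal_add_le (p := c) (q := h x - c))

lemma wr_toA {μ : Measure Ω} {f : Ω →ₘ[μ] ℝ} {p r s : ℝ} (hr : 1 ≤ r) (hrp : r < p) (hs : 0 < s)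
    (H : ∀ t ∈ wrSet p r μ f, t ≤ s) : BdA μ (fun x => |f x|^r) (p/r) (s^r) := by
  have hr0 : 0 < r := by linarith
  have hp0 : 0 < p := by linarith
  have hfm : Measurable (fun x => f x) := f.measurable
  have hm : Measurable (fun x => |f x|^r) := (hfm.abs).pow_const r
  intro A hA hAf
  let B : ℕ → Set Ω := fun n => A ∩ {x | |f x|^r ≤ n}
  have hBm : ∀ n, MeasurableSet (B n) := fun n => hA.inter (measurableSet_le hm measurable_const)
  have hBf : ∀ n, μ (B n) < ⊤ := fun n => (measure_mono Set.inter_subset_left).trans_lt hAf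
  have hU : A = ⋃ n, B n := by
    rw [← Set.inter_iUnion]
    refine (Set.inter_eq_left.2 fun x _ => ?_).symm
    obtain ⟨n, hn⟩ := exists_nat_ge (|f x|^r)
    exact Set.mem_iUnion.2 ⟨n, hn⟩
  have hmono : Monotone B := by
    intro m n hmn x hx
    have h2 : |f x|^r ≤ m := hx.2
    exact ⟨hx.1, (le_trans h2 (by exact_mod_cast hmn) : |f x|^r ≤ n)⟩
  have hb : 0 ≤ 1 - 1/(p/r) := by
    have : 1/(p/r) ≤ 1 := by rw [one_div_div, div_le_one hp0]; exact hrp.le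
    linarith
  have key : ∀ n, ∫⁻ x in B n, ENNReal.ofReal (|f x|^r) ∂μ ≤ ENNReal.ofReal (s^r * (μ A).toReal ^ (1-1/(p/r))) := by
    intro n
    have hint : IntegrableOn (fun x => |f x|^r) (B n) μ := by
      refine Measure.integrableOn_of_bounded (M := n) (hBf n).ne hm.aestronglyMeasurable ?_
      refine (ae_restrict_iff' (hBm n)).2 (Filter.Eventually.of_forall fun x hx => ?_)
      rw [Real.norm_of_nonneg (by positivity)]; exact hx.2
    rw [← ofReal_integral_eq_lintegral_ofReal hint (Filter.Eventually.of_forall fun x => by positivity)]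
    refine ENNReal.ofReal_le_ofReal ?_
    rcases eq_or_ne (μ (B n)) 0 with h0 | h0
    · rw [Measure.restrict_eq_zero.2 h0]; simp; positivity
    have hT : 0 < (μ (B n)).toReal := ENNReal.toReal_pos h0 (hBf n).ne
    set T := (μ (B n)).toReal
    have := H _ ⟨B n, hBm n, pos_iff_ne_zero.2 h0, hBf n, rfl⟩
    set I := ∫ x in B n, |f x|^r ∂μ
    have hI : 0 ≤ I := integral_nonneg fun x => by positivity
    have h1 := Real.rpow_le_rpow (by positivity) this hr0.le
    rw [Real.mul_rpow (by positivity) (by positivity), ← Real.rpow_mul hT.le, ← Real.rpow_mul hI] at h1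
    have e1 : 1/r*r = 1 := by field_simp
    have e2 : (1/p-1/r)*r = -(1-1/(p/r)) := by field_simp; ring
    rw [e1, e2, Real.rpow_one, Real.rpow_neg hT.le] at h1
    have hTp : 0 < T ^ (1-1/(p/r)) := by positivity
    have h2 : I ≤ s^r * T^(1-1/(p/r)) := by
      rw [inv_mul_le_iff₀ hTp] at h1; linarith
    refine h2.trans ?_
    have : T ≤ (μ A).toReal := ENNReal.toReal_mono hAf.ne (measure_mono Set.inter_subset_left)
    gcongr
  nth_rw 1 [hU]
  rw [setLIntegral_iUnion_of_directed _ hmono.directed_le]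
  exact iSup_le key

lemma wr_ofA {μ : Measure Ω} {f : Ω →ₘ[μ] ℝ} {p r s : ℝ} (hr : 1 ≤ r) (hrp : r < p) (hs : 0 < s)
    (H : BdA μ (fun x => |f x|^r) (p/r) (s^r)) : ∀ t ∈ wrSet p r μ f, t ≤ s := by
  have hr0 : 0 < r := by linarith
  have hp0 : 0 < p := by linarith
  have hfm : Measurable (fun x => f x) := f.measurable
  have hm : Measurable (fun x => |f x|^r) := (hfm.abs).pow_const r
  rintro t ⟨A, hA, hA0, hAf, rfl⟩
  have hT : 0 < (μ A).toReal := ENNReal.toReal_pos hA0.ne' hAf.ne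
  have h1 := H A hA hAf
  have h2 : ∫ x in A, |f x|^r ∂μ ≤ s^r * (μ A).toReal ^ (1-1/(p/r)) := by
    rw [integral_eq_lintegral_of_nonneg_ae (Filter.Eventually.of_forall fun x => by positivity)
      hm.aestronglyMeasurable]
    exact ENNReal.toReal_le_of_le_ofReal (by positivity) h1
  set T := (μ A).toReal
  set I := ∫ x in A, |f x|^r ∂μ
  have hI : 0 ≤ I := integral_nonneg fun x => by positivity
  have h3 := Real.rpow_le_rpow hI h2 (z := 1/r) (by positivity)
  rw [Real.mul_rpow (by positivity) (by positivity), ← Real.rpow_mul hT.le, ← Real.rpow_mul hs.le] at h3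
  have e1 : r*(1/r) = 1 := by field_simp
  have e2 : (1-1/(p/r))*(1/r) = -(1/p-1/r) := by field_simp; ring
  rw [e1, e2, Real.rpow_one, Real.rpow_neg hT.le] at h3
  have hTp : 0 < T ^ (1/p-1/r) := by positivity
  rw [← div_eq_mul_inv, le_div_iff₀ hTp] at h3
  linarith

lemma w1Set_eq (p : ℝ) (ν : Measure Ω) (h : Ω →ₘ[ν] ℝ) : w1Set p ν h = wrSet p 1 ν h := by
  unfold w1Set wrSet
  simp only [Real.rpow_one, div_one]

lemma wrSet_iff {μ : Measure Ω} {f : Ω →ₘ[μ] ℝ} {p r s : ℝ} (hr : 1 ≤ r) (hrp : r < p) (hs : 0 < s) :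
    (∀ t ∈ wrSet p r μ f, t ≤ s) ↔ BdB μ (fun x => |f x|^r) (p/r) (s^r) := by
  have hfm : Measurable (fun x => f x) := f.measurable
  have hm : Measurable (fun x => |f x|^r) := (hfm.abs).pow_const r
  have hP : 1 < p/r := by rw [one_lt_div] <;> linarith
  have hs' : 0 < s^r := by positivity
  exact ⟨fun h => (wr_toA hr hrp hs h).toB hP hs' hm, fun h => wr_ofA hr hrp hs (h.toA hP hs')⟩

lemma wrSet_nonneg {μ : Measure Ω} {f : Ω →ₘ[μ] ℝ} {p r : ℝ} : ∀ t ∈ wrSet p r μ f, 0 ≤ t := by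
  rintro t ⟨A, hA, hA0, hAf, rfl⟩
  have : 0 ≤ ∫ x in A, |f x|^r ∂μ := integral_nonneg fun x => by positivity
  positivity

lemma BdB.sum_le {ν : Measure Ω} {ψ : Ω → ℝ≥0∞} {C : ℝ≥0∞}
    (H : ∀ A, MeasurableSet A → ν A < ⊤ → ∫⁻ x in A, ψ x ∂ν ≤ C)
    {J : Type*} {T : J → Set Ω} (hT : ∀ j, MeasurableSet (T j)) (hTf : ∀ j, ν (T j) < ⊤)
    (hd : Pairwise (Function.onFun (AEDisjoint ν) T)) :
    ∑' j, ∫⁻ x in T j, ψ x ∂ν ≤ C := by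
  rw [ENNReal.tsum_eq_iSup_sum]
  refine iSup_le fun F => ?_
  have h1 := H (⋃ j ∈ F, T j) (F.measurableSet_biUnion fun j _ => hT j)
    (by
      refine (measure_biUnion_finset_le F T).trans_lt ?_
      exact ENNReal.sum_lt_top.2 fun j _ => hTf j)
  rwa [lintegral_biUnion_finset₀ (fun i _ j _ hij => hd hij) (fun j _ => (hT j).nullMeasurableSet)] at h1
end

lemma pl_sum (q ρ x : ℝ) (hq : 1 < q) (n : ℕ) :
    ∑ k ∈ Finset.range (n+1), (if k = 0 then (ρ*q-1)/(q-1) else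
      q^k * ((ρ*q-1)/(q-1)) * (ρ^k - ρ^(k-1))) * (x * (q^k)⁻¹ - 1)
      = (ρ*q-1)/(q-1) * ρ^n*(x - q^n) + (ρ*q)^n - 1 := by
  have hq0 : q ≠ 0 := by positivity
  have hq1 : q - 1 ≠ 0 := by linarith
  induction n with
  | zero => simp
  | succ n ih =>
    rw [Finset.sum_range_succ, ih]
    simp only [Nat.add_eq_zero_iff, one_ne_zero, and_false, if_false, Nat.add_sub_cancel]
    field_simp
    ring

/-- countably many atoms approximating `z ^ r - 1`. -/
lemma pl_exists {r q : ℝ} (hr : 1 < r) (hq : 1 < q) : ∃ m u : ℕ → ℝ, (∀ k, 0 < m k) ∧ (∀ k, 0 < u k) ∧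
    ∀ z, 0 ≤ z → ENNReal.ofReal ((z/q^2)^r - 1) ≤ ∑' k, ENNReal.ofReal (m k * (z * u k - 1)) ∧
      ∑' k, ENNReal.ofReal (m k * (z * u k - 1)) ≤ ENNReal.ofReal (z^r-1) := by
  have hq0 : 0 < q := by linarith
  set ρ := q^(r-1) with hρ
  have hρ1 : 1 < ρ := Real.one_lt_rpow hq (by linarith)
  have hρq : ρ*q = q^r := by
    rw [hρ]; nth_rw 2 [← Real.rpow_one q]; rw [← Real.rpow_add hq0]; ring_nf
  have hρq1 : 1 < ρ*q := by nlinarith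
  have hσ : 0 < (ρ*q-1)/(q-1) := div_pos (by linarith) (by linarith)
  set m : ℕ → ℝ := fun k => (if k = 0 then (ρ*q-1)/(q-1) else
      q^k * ((ρ*q-1)/(q-1)) * (ρ^k - ρ^(k-1))) with hm
  have hmpos : ∀ k, 0 < m k := by
    intro k
    rcases k with _ | k
    · simpa [hm] using hσ
    · simp only [hm, Nat.add_eq_zero_iff, one_ne_zero, and_false, if_false, Nat.add_sub_cancel]
      have : 0 < ρ^(k+1) - ρ^k := by
        have := pow_lt_pow_right₀ hρ1 (show k < k+1 by omega)
        linarith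
      positivity
  refine ⟨m, fun k => (q^(k+1))⁻¹, hmpos, fun k => by positivity, fun z hz => ?_⟩
  obtain ⟨x, rfl⟩ : ∃ x, z = x * q := ⟨z/q, by field_simp⟩
  have hx : 0 ≤ x := by
    by_contra h; push Not at h; nlinarith
  have e1 : ∀ k, x * q * (q^(k+1))⁻¹ = x * (q^k)⁻¹ := fun k => by rw [pow_succ]; field_simp
  have e2 : x*q/q^2 = x/q := by field_simp
  simp only [e1, e2]
  rcases lt_or_ge x 1 with h1 | h1
  · have h0 : ∀ k, ENNReal.ofReal (m k * (x * (q^k)⁻¹ - 1)) = 0 := by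
      intro k
      refine ENNReal.ofReal_of_nonpos (mul_nonpos_of_nonneg_of_nonpos (hmpos k).le ?_)
      have : (q^k)⁻¹ ≤ 1 := inv_le_one_of_one_le₀ (one_le_pow₀ hq.le)
      nlinarith
    simp only [h0, tsum_zero]
    refine ⟨?_, zero_le⟩
    rw [nonpos_iff_eq_zero]
    refine ENNReal.ofReal_of_nonpos ?_
    have : (x/q)^r ≤ 1 := Real.rpow_le_one (by positivity) (by rw [div_le_one hq0]; linarith) (by linarith)
    linarith
  obtain ⟨n, hn1, hn2⟩ := exists_nat_pow_near h1 hq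
  have hqn : ∀ k : ℕ, (ρ*q)^k = (q^k)^r := by
    intro k
    rw [hρq, ← Real.rpow_natCast, ← Real.rpow_mul hq0.le, mul_comm, Real.rpow_mul hq0.le, Real.rpow_natCast]
  have hs : ∑' k, ENNReal.ofReal (m k * (x * (q^k)⁻¹ - 1))
      = ENNReal.ofReal ((ρ*q-1)/(q-1) * ρ^n*(x - q^n) + (ρ*q)^n - 1) := by
    rw [← pl_sum q ρ x hq n, ENNReal.ofReal_sum_of_nonneg]
    · refine tsum_eq_sum fun k hk => ?_
      have hk' : n + 1 ≤ k := by simpa using hk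
      refine ENNReal.ofReal_of_nonpos (mul_nonpos_of_nonneg_of_nonpos (hmpos k).le ?_)
      have : q^(n+1) ≤ q^k := pow_le_pow_right₀ hq.le hk'
      have : x * (q^k)⁻¹ ≤ 1 := by
        rw [← div_eq_mul_inv, div_le_one (by positivity)]; linarith
      linarith
    · intro k hk
      have hk' : k ≤ n := by simpa [Nat.lt_succ_iff] using hk
      have : q^k ≤ q^n := pow_le_pow_right₀ hq.le hk'
      refine mul_nonneg (hmpos k).le ?_
      have : 1 ≤ x * (q^k)⁻¹ := by
        rw [← div_eq_mul_inv, le_div_iff₀ (by positivity)]; linarith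
      linarith
  rw [hs]
  constructor
  · refine ENNReal.ofReal_le_ofReal ?_
    have h3 : (x/q)^r ≤ (ρ*q)^n := by
      rw [hqn]
      refine Real.rpow_le_rpow (by positivity) ?_ (by linarith)
      rw [div_le_iff₀ hq0, ← pow_succ]; exact hn2.le
    have : 0 ≤ (ρ*q-1)/(q-1) * ρ^n*(x - q^n) := mul_nonneg (by positivity) (by linarith)
    linarith
  · refine ENNReal.ofReal_le_ofReal ?_
    have h3 : (ρ*q)^(n+1) ≤ (x*q)^r := by
      rw [hqn]
      refine Real.rpow_le_rpow (by positivity) ?_ (by linarith)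
      rw [pow_succ]; gcongr
    have h4 : (ρ*q-1)/(q-1) * ρ^n*(x - q^n) ≤ (ρ*q-1)/(q-1) * ρ^n*(q^(n+1) - q^n) := by
      gcongr
    have h5 : (ρ*q-1)/(q-1) * ρ^n*(q^(n+1) - q^n) = (ρ*q)^(n+1) - (ρ*q)^n := by
      have : q - 1 ≠ 0 := by linarith
      field_simp
      ring
    linarith

/-- one atom tangent to `z ^ r - 1`. -/
lemma tan_exists {r : ℝ} (hr : 1 < r) (z0 : ℝ) : ∃ t v : ℝ, 0 < t ∧ 0 < v ∧
    (∀ z, 0 ≤ z → ENNReal.ofReal (t * (z * v - 1)) ≤ ENNReal.ofReal (z^r-1)) ∧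
    (0 ≤ z0 → ENNReal.ofReal (z0^r-1) ≤ ENNReal.ofReal (t * (z0 * v - 1))) := by
  set y := max 1 z0 with hy
  have hy1 : 1 ≤ y := le_max_left _ _
  have hy0 : 0 < y := by linarith
  have ht : 0 < (r-1)*y^r+1 := by
    have : 0 < r - 1 := by linarith
    positivity
  refine ⟨(r-1)*y^r+1, r*y^(r-1)/((r-1)*y^r+1), ht, by positivity, fun z hz => ?_, fun hz => ?_⟩
  · refine ENNReal.ofReal_le_ofReal ?_
    have e : ((r-1)*y^r+1) * (z * (r*y^(r-1)/((r-1)*y^r+1)) - 1) = r * (y^(r-1) * z) - (r-1)*y^r - 1 := by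
      field_simp; ring
    rw [e]
    have h1 : 1 + r * (z/y - 1) ≤ (1 + (z/y-1))^r :=
      one_add_mul_self_le_rpow_one_add (by have : 0 ≤ z/y := by positivity
                                           linarith) hr.le
    have e2 : (1 + (z/y-1))^r = z^r/y^r := by
      rw [← Real.div_rpow hz hy0.le]; congr 1; ring
    rw [e2, le_div_iff₀ (by positivity)] at h1
    have e3 : y^(r-1) = y^r / y := by rw [Real.rpow_sub hy0, Real.rpow_one]
    have e4 : (1 + r * (z/y - 1)) * y^r = r * (y^(r-1)*z) - (r-1)*y^r := by
      rw [e3]; field_simp; ring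
    linarith
  · rcases le_total z0 1 with h | h
    · rw [ENNReal.ofReal_of_nonpos (p := z0^r-1)]
      · exact zero_le
      · have := Real.rpow_le_one hz h (z := r) (by linarith); linarith
    · refine ENNReal.ofReal_le_ofReal (le_of_eq ?_)
      have : y = z0 := max_eq_right h
      rw [← this]
      have e3 : y^(r-1) * y = y^r := by rw [Real.rpow_sub hy0, Real.rpow_one]; field_simp
      have e : ((r-1)*y^r+1) * (y * (r*y^(r-1)/((r-1)*y^r+1)) - 1) = r * (y^(r-1) * y) - (r-1)*y^r - 1 := by
        field_simp; ring
      rw [e, e3]; ring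


section KM
variable {Ω : Type*} {m m0 : MeasurableSpace Ω}

/-- The weak-star compact set of functionals given by functions between 0 and 1 with
prescribed integrals on `m`-measurable sets. -/
def KMset {Ω : Type*} (m : MeasurableSpace Ω) [m0 : MeasurableSpace Ω] (μ : Measure Ω) [IsFiniteMeasure μ] (h : Ω → ℝ) :
    Set (WeakDual ℝ (Lp ℝ 2 μ)) :=
  {φ | (∀ A (hA : MeasurableSet A), 0 ≤ φ (indicatorConstLp 2 hA (measure_ne_top μ A) (1:ℝ)) ∧
        φ (indicatorConstLp 2 hA (measure_ne_top μ A) (1:ℝ)) ≤ μ.real A) ∧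
      ∀ A (hA : MeasurableSet A), MeasurableSet[m] A →
        φ (indicatorConstLp 2 hA (measure_ne_top μ A) (1:ℝ)) = ∫ x in A, h x ∂μ}

def Wd (μ : Measure Ω) (g : Lp ℝ 2 μ) : WeakDual ℝ (Lp ℝ 2 μ) :=
  StrongDual.toWeakDual (InnerProductSpace.toDual ℝ (Lp ℝ 2 μ) g)

lemma Wd_apply (μ : Measure Ω) [IsFiniteMeasure μ] (g : Lp ℝ 2 μ) {A : Set Ω} (hA : MeasurableSet A) :
    Wd μ g (indicatorConstLp 2 hA (measure_ne_top μ A) (1:ℝ)) = ∫ x in A, g x ∂μ := by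
  rw [← L2.inner_indicatorConstLp_one hA (measure_ne_top μ A), real_inner_comm]
  rfl

lemma Wd_mem {μ : Measure Ω} [IsFiniteMeasure μ] {h : Ω → ℝ} (g : Lp ℝ 2 μ) :
    Wd μ g ∈ KMset m μ h ↔ (0 ≤ᵐ[μ] g ∧ g ≤ᵐ[μ] (fun _ => (1:ℝ))) ∧
      ∀ A, MeasurableSet A → MeasurableSet[m] A → ∫ x in A, g x ∂μ = ∫ x in A, h x ∂μ := by
  have hgi : Integrable g μ := (Lp.memLp g).integrable (by norm_num)
  have hc : Integrable (fun _ : Ω => (1:ℝ)) μ := integrable_const _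
  have e : ∀ A : Set Ω, ∫ x in A, (1:ℝ) ∂μ = μ.real A := fun A => by simp
  constructor
  · rintro ⟨h1, h2⟩
    refine ⟨⟨?_, ?_⟩, fun A hA hAm => ?_⟩
    · refine ae_nonneg_of_forall_setIntegral_nonneg hgi fun A hA _ => ?_
      rw [← Wd_apply μ g hA]; exact (h1 A hA).1
    · refine ae_le_of_forall_setIntegral_le hgi hc fun A hA _ => ?_
      rw [← Wd_apply μ g hA, e]; exact (h1 A hA).2
    · rw [← Wd_apply μ g hA]; exact h2 A hA hAm
  · rintro ⟨⟨h1, h1'⟩, h2⟩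
    refine ⟨fun A hA => ?_, fun A hA hAm => ?_⟩
    · rw [Wd_apply μ g hA]
      refine ⟨setIntegral_nonneg_of_ae h1, ?_⟩
      rw [← e]
      exact setIntegral_mono_ae hgi.integrableOn hc.integrableOn h1'
    · rw [Wd_apply μ g hA]; exact h2 A hA hAm

lemma Wd_surj (μ : Measure Ω) (φ : WeakDual ℝ (Lp ℝ 2 μ)) : ∃ g, φ = Wd μ g := by
  refine ⟨(InnerProductSpace.toDual ℝ (Lp ℝ 2 μ)).symm (WeakDual.toStrongDual φ), ?_⟩
  unfold Wd
  simp

lemma Wd_add (μ : Measure Ω) (g g' : Lp ℝ 2 μ) : Wd μ (g + g') = Wd μ g + Wd μ g' := by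
  unfold Wd; rw [map_add, map_add]

lemma Wd_smul (μ : Measure Ω) (c : ℝ) (g : Lp ℝ 2 μ) : Wd μ (c • g) = c • Wd μ g := by
  unfold Wd
  rw [LinearIsometryEquiv.map_smulₛₗ, map_smul]; rfl

lemma Wd_inj (μ : Measure Ω) {g g' : Lp ℝ 2 μ} (h : Wd μ g = Wd μ g') : g = g' := by
  unfold Wd at h
  simpa using h

lemma KMset_compact {Ω : Type*} (m : MeasurableSpace Ω) [m0 : MeasurableSpace Ω] (μ : Measure Ω) [IsFiniteMeasure μ] (h : Ω → ℝ) :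
    IsCompact (KMset m μ h) := by
  apply WeakDual.isCompact_of_bounded_of_closed
  · have : KMset m μ h ⊆ WeakDual.toStrongDual ⁻¹' (Metric.closedBall 0 ((measureUnivNNReal μ : ℝ) ^ (2:ℝ≥0∞).toReal⁻¹ * 1)) := by
      intro φ hφ
      obtain ⟨g, rfl⟩ := Wd_surj μ φ
      have hg := ((Wd_mem g).1 hφ).1
      have : ‖g‖ ≤ (measureUnivNNReal μ : ℝ) ^ (2:ℝ≥0∞).toReal⁻¹ * 1 := by
        apply Lp.norm_le_of_ae_bound zero_le_one
        filter_upwards [hg.1, hg.2] with x h1 h2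
        rw [Real.norm_of_nonneg h1]; exact h2
      rw [Set.mem_preimage, mem_closedBall_zero_iff]
      have e : WeakDual.toStrongDual (Wd μ g) = InnerProductSpace.toDual ℝ (Lp ℝ 2 μ) g := rfl
      rw [e, LinearIsometryEquiv.norm_map]
      exact this
    exact (WeakDual.isBounded_closedBall _ _).subset this
  · have : KMset m μ h = (⋂ (A : Set Ω), ⋂ (hA : MeasurableSet A),
        {φ : WeakDual ℝ (Lp ℝ 2 μ) | 0 ≤ φ (indicatorConstLp 2 hA (measure_ne_top μ A) (1:ℝ)) ∧
        φ (indicatorConstLp 2 hA (measure_ne_top μ A) (1:ℝ)) ≤ μ.real A}) ∩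
        ⋂ (A : Set Ω), ⋂ (hA : MeasurableSet A), ⋂ (_ : MeasurableSet[m] A),
          {φ : WeakDual ℝ (Lp ℝ 2 μ) | φ (indicatorConstLp 2 hA (measure_ne_top μ A) (1:ℝ)) = ∫ x in A, h x ∂μ} := by
      ext φ
      simp [KMset]
    rw [this]
    refine IsClosed.inter ?_ ?_
    · refine isClosed_iInter fun A => isClosed_iInter fun hA => ?_
      exact (isClosed_le continuous_const (WeakDual.eval_continuous _)).inter
        (isClosed_le (WeakDual.eval_continuous _) continuous_const)
    · refine isClosed_iInter fun A => isClosed_iInter fun hA => isClosed_iInter fun hAm => ?_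
      exact isClosed_eq (WeakDual.eval_continuous _) continuous_const

/-- A bounded nonzero perturbation supported in `E` with zero conditional expectation. -/
lemma exists_perturb (hm : m ≤ m0) {μ : Measure Ω} [IsFiniteMeasure μ]
    {E F : Set Ω} (hE : MeasurableSet E) (hF : MeasurableSet F)
    (hEF : ∀ G, MeasurableSet[m] G → ¬ F =ᵐ[μ.restrict E] G) :
    ∃ w : Ω → ℝ, Measurable w ∧ (∀ᵐ x ∂μ, |w x| ≤ 1) ∧ (∀ x, x ∉ E → w x = 0) ∧ ¬ w =ᵐ[μ] 0 ∧
      ∀ A, MeasurableSet[m] A → ∫ x in A, w x ∂μ = 0 := by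
  set e : Ω → ℝ := E.indicator (fun _ => 1) with he
  set f : Ω → ℝ := (E ∩ F).indicator (fun _ => 1) with hf
  have hem : Measurable e := measurable_const.indicator hE
  have hfm : Measurable f := measurable_const.indicator (hE.inter hF)
  have hei : Integrable e μ := (integrable_const 1).indicator hE
  have hfi : Integrable f μ := (integrable_const 1).indicator (hE.inter hF)
  have he01 : ∀ x, 0 ≤ e x ∧ e x ≤ 1 := fun x => by
    by_cases hx : x ∈ E <;> simp [he, hx]
  have hf01 : ∀ x, 0 ≤ f x ∧ f x ≤ 1 := fun x => by
    by_cases hx : x ∈ E ∩ F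
    · rw [hf, Set.indicator_of_mem hx]; simp
    · rw [hf, Set.indicator_of_notMem hx]; simp
  set a := μ[e | m] with ha
  set b := μ[f | m] with hb
  have ham : StronglyMeasurable[m] a := stronglyMeasurable_condExp
  have hbm : StronglyMeasurable[m] b := stronglyMeasurable_condExp
  have cond01 : ∀ g : Ω → ℝ, Integrable g μ → (∀ x, 0 ≤ g x ∧ g x ≤ 1) →
      ∀ᵐ x ∂μ, 0 ≤ (μ[g | m]) x ∧ (μ[g | m]) x ≤ 1 := by
    intro g hg hg01
    have h1 : 0 ≤ᵐ[μ] μ[g | m] := condExp_nonneg (Filter.Eventually.of_forall fun x => (hg01 x).1)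
    have h2 : μ[g | m] ≤ᵐ[μ] μ[(fun _ => (1:ℝ)) | m] :=
      condExp_mono hg (integrable_const _) (Filter.Eventually.of_forall fun x => (hg01 x).2)
    rw [condExp_const hm] at h2
    filter_upwards [h1, h2] with x h1 h2 using ⟨h1, h2⟩
  have ha01 := cond01 e hei he01
  have hb01 := cond01 f hfi hf01
  have hfa : Integrable (f * a) μ := by
    refine (integrable_const (1:ℝ)).mono' (hfm.mul (ham.mono hm).measurable).aestronglyMeasurable ?_
    filter_upwards [ha01] with x hx
    rw [Pi.mul_apply, Real.norm_of_nonneg (mul_nonneg (hf01 x).1 hx.1)]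
    nlinarith [hf01 x, hx.1, hx.2]
  have heb : Integrable (e * b) μ := by
    refine (integrable_const (1:ℝ)).mono' (hem.mul (hbm.mono hm).measurable).aestronglyMeasurable ?_
    filter_upwards [hb01] with x hx
    rw [Pi.mul_apply, Real.norm_of_nonneg (mul_nonneg (he01 x).1 hx.1)]
    nlinarith [he01 x, hx.1, hx.2]
  have c1 : μ[f * a | m] =ᵐ[μ] b * a := condExp_mul_of_stronglyMeasurable_right ham hfa hfi
  have c2 : μ[e * b | m] =ᵐ[μ] a * b := condExp_mul_of_stronglyMeasurable_right hbm heb hei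
  refine ⟨f * a - e * b, (hfm.mul (ham.mono hm).measurable).sub (hem.mul (hbm.mono hm).measurable), ?_, ?_, ?_, ?_⟩
  · filter_upwards [ha01, hb01] with x h1 h2
    have h3 := hf01 x
    have h4 := he01 x
    simp only [Pi.sub_apply, Pi.mul_apply]
    have h5 : 0 ≤ f x * a x := mul_nonneg h3.1 h1.1
    have h6 : 0 ≤ e x * b x := mul_nonneg h4.1 h2.1
    have h7 : f x * a x ≤ 1 := mul_le_one₀ h3.2 h1.1 h1.2
    have h8 : e x * b x ≤ 1 := mul_le_one₀ h4.2 h2.1 h2.2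
    rw [abs_le]; constructor <;> linarith
  · intro x hx
    simp [he, hf, hx]
  · intro h0
    have hG : MeasurableSet[m] {x | 0 < b x} := hbm.measurable measurableSet_Ioi
    refine hEF _ hG ?_
    -- on E, a > 0 a.e.
    have hapos : ∀ᵐ x ∂μ, x ∈ E → 0 < a x := by
      have hZ : MeasurableSet[m] {x | a x ≤ 0} := ham.measurable measurableSet_Iic
      have h1 : ∫ x in {x | a x ≤ 0}, e x ∂μ ≤ 0 := by
        rw [← setIntegral_condExp hm hei hZ]
        exact setIntegral_nonpos (hm _ hZ) fun x hx => hx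
      have h2 : ∫ x in {x | a x ≤ 0}, e x ∂μ = μ.real (E ∩ {x | a x ≤ 0}) := by
        rw [he, integral_indicator hE, Measure.restrict_restrict hE]; simp
      have h3 : μ (E ∩ {x | a x ≤ 0}) = 0 := by
        rw [h2] at h1
        have := le_antisymm h1 measureReal_nonneg
        rwa [measureReal_eq_zero_iff] at this
      filter_upwards [measure_eq_zero_iff_ae_notMem.1 h3] with x hx hxE
      by_contra hcon
      exact hx ⟨hxE, not_lt.1 hcon⟩
    refine (ae_restrict_iff' hE).2 ?_
    filter_upwards [h0, hapos] with x hx hx2 hxE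
    have hx2 := hx2 hxE
    simp only [Pi.sub_apply, Pi.mul_apply, Pi.zero_apply, he, Set.indicator_of_mem hxE, one_mul] at hx
    apply propext
    show x ∈ F ↔ 0 < b x
    by_cases hxF : x ∈ F
    · have : f x = 1 := by rw [hf, Set.indicator_of_mem (show x ∈ E ∩ F from ⟨hxE, hxF⟩)]
      rw [this] at hx
      simp only [hxF, true_iff]; linarith
    · have : f x = 0 := by rw [hf, Set.indicator_of_notMem (fun h => hxF h.2)]
      rw [this] at hx
      simp only [hxF, false_iff]; linarith
  · intro A hA
    have h1 : ∫ x in A, (f * a) x ∂μ = ∫ x in A, (e * b) x ∂μ := by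
      rw [← setIntegral_condExp hm hfa hA, ← setIntegral_condExp hm heb hA]
      refine setIntegral_congr_ae (hm _ hA) ?_
      filter_upwards [c1, c2] with x h1 h2 _
      rw [h1, h2]; simp [mul_comm]
    have := integral_sub (hfa.integrableOn (s := A)) (heb.integrableOn (s := A))
    simp only [Pi.sub_apply] at this ⊢
    rw [this, h1, sub_self]

/-- Maharam-Lyapunov lemma. -/
lemma rel_atomless (hm : m ≤ m0) {μ : Measure Ω} [IsFiniteMeasure μ]
    (hNG : ∀ E, MeasurableSet E → μ E ≠ 0 → ∃ F, MeasurableSet F ∧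
      ∀ G, MeasurableSet[m] G → ¬ F =ᵐ[μ.restrict E] G)
    {h : Ω → ℝ} (hh : Measurable h) (h01 : ∀ x, 0 ≤ h x ∧ h x ≤ 1) :
    ∃ B, MeasurableSet B ∧ ∀ A, MeasurableSet[m] A → μ.real (B ∩ A) = ∫ x in A, h x ∂μ := by
  have hmem : MemLp h 2 μ := MemLp.of_bound hh.aestronglyMeasurable 1
    (Filter.Eventually.of_forall fun x => by rw [Real.norm_of_nonneg (h01 x).1]; exact (h01 x).2)
  have hne : (KMset m μ h).Nonempty := by
    refine ⟨Wd μ (hmem.toLp h), (Wd_mem _).2 ⟨⟨?_, ?_⟩, fun A hA hAm => ?_⟩⟩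
    · filter_upwards [hmem.coeFn_toLp] with x hx
      rw [hx]; exact (h01 x).1
    · filter_upwards [hmem.coeFn_toLp] with x hx
      rw [hx]; exact (h01 x).2
    · refine setIntegral_congr_ae hA ?_
      filter_upwards [hmem.coeFn_toLp] with x hx _ using hx
  have : LocallyConvexSpace ℝ (WeakDual ℝ (Lp ℝ 2 μ)) :=
    (WeakDual.withSeminorms ℝ (Lp ℝ 2 μ)).toLocallyConvexSpace
  obtain ⟨φ, hφ⟩ := (KMset_compact m μ h).extremePoints_nonempty hne
  rw [mem_extremePoints] at hφ
  obtain ⟨hφK, hext⟩ := hφ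
  obtain ⟨g, rfl⟩ := Wd_surj μ φ
  obtain ⟨⟨hg0, hg1⟩, hgm⟩ := (Wd_mem g).1 hφK
  have hgmeas : Measurable g := (Lp.stronglyMeasurable g).measurable
  have key : ∀ n : ℕ, μ {x | 1/((n:ℝ)+1) ≤ g x ∧ g x ≤ 1 - 1/((n:ℝ)+1)} = 0 := by
    intro n
    by_contra hpos
    set δ : ℝ := 1/((n:ℝ)+1) with hδ
    have hδ0 : 0 < δ := by positivity
    set E := {x | δ ≤ g x ∧ g x ≤ 1 - δ} with hEdef
    have hE : MeasurableSet E := (measurableSet_le measurable_const hgmeas).inter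
      (measurableSet_le hgmeas measurable_const)
    obtain ⟨F, hF, hFG⟩ := hNG E hE hpos
    obtain ⟨w, hwm, hw1, hwE, hw0, hwA⟩ := exists_perturb hm hE hF hFG
    have hwL : MemLp w 2 μ := MemLp.of_bound hwm.aestronglyMeasurable 1 (by simpa using hw1)
    have hmemK : ∀ σ : ℝ, |σ| ≤ δ → Wd μ (g + σ • hwL.toLp w) ∈ KMset m μ h := by
      intro σ hσ
      have hco : (g + σ • hwL.toLp w : Lp ℝ 2 μ) =ᵐ[μ] fun x => g x + σ * w x := by
        filter_upwards [Lp.coeFn_add g (σ • hwL.toLp w), Lp.coeFn_smul σ (hwL.toLp w), hwL.coeFn_toLp]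
          with x h1 h2 h3
        rw [h1, Pi.add_apply, h2, Pi.smul_apply, h3]; simp
      have hbd : ∀ᵐ x ∂μ, 0 ≤ g x + σ * w x ∧ g x + σ * w x ≤ 1 := by
        filter_upwards [hw1, hg0, hg1] with x h1 h2 h3
        by_cases hx : x ∈ E
        · have h4 : δ ≤ g x ∧ g x ≤ 1 - δ := hx
          have : |σ * w x| ≤ δ := by
            rw [abs_mul]
            nlinarith [abs_nonneg σ, abs_nonneg (w x)]
          rw [abs_le] at this
          constructor <;> linarith [h4.1, h4.2]
        · rw [hwE x hx, mul_zero, add_zero]; exact ⟨h2, h3⟩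
      refine (Wd_mem _).2 ⟨⟨?_, ?_⟩, fun A hA hAm => ?_⟩
      · filter_upwards [hco, hbd] with x h1 h2
        rw [h1]; exact h2.1
      · filter_upwards [hco, hbd] with x h1 h2
        rw [h1]; exact h2.2
      · rw [← hgm A hA hAm, setIntegral_congr_ae hA (hco.mono fun x hx _ => hx)]
        have hgi : Integrable g μ := (Lp.memLp g).integrable (by norm_num)
        have hwi : Integrable w μ := hwL.integrable (by norm_num)
        rw [integral_add hgi.integrableOn (hwi.const_mul σ).integrableOn, integral_const_mul, hwA A hAm]
        simp
    have hm1 := hmemK δ (by rw [abs_of_pos hδ0])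
    have hm2 := hmemK (-δ) (by rw [abs_neg, abs_of_pos hδ0])
    have hseg : Wd μ g ∈ openSegment ℝ (Wd μ (g + δ • hwL.toLp w)) (Wd μ (g + (-δ) • hwL.toLp w)) := by
      refine ⟨1/2, 1/2, by norm_num, by norm_num, by norm_num, ?_⟩
      rw [← Wd_smul, ← Wd_smul, ← Wd_add]
      congr 1
      module
    have := Wd_inj μ (hext _ hm1 _ hm2 hseg).1
    have h0 : hwL.toLp w = 0 := by
      have h1 : δ • hwL.toLp w = 0 := by simpa using this
      exact (smul_eq_zero.1 h1).resolve_left hδ0.ne'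
    apply hw0
    have h2 := hwL.coeFn_toLp
    rw [h0] at h2
    exact h2.symm.trans (Lp.coeFn_zero _ _ _)
  have h01ae : ∀ᵐ x ∂μ, g x = 0 ∨ g x = 1 := by
    have : ∀ᵐ x ∂μ, ∀ n : ℕ, ¬ (1/((n:ℝ)+1) ≤ g x ∧ g x ≤ 1 - 1/((n:ℝ)+1)) :=
      ae_all_iff.2 fun n => measure_eq_zero_iff_ae_notMem.1 (key n)
    filter_upwards [this, hg0, hg1] with x hx h0 h1
    by_contra hcon
    push Not at hcon
    have h0' : 0 < g x := lt_of_le_of_ne h0 (Ne.symm hcon.1)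
    have h1' : g x < 1 := lt_of_le_of_ne h1 hcon.2
    obtain ⟨n, hn⟩ := exists_nat_one_div_lt (show 0 < min (g x) (1 - g x) from lt_min h0' (by linarith))
    refine hx n ⟨?_, ?_⟩
    · linarith [min_le_left (g x) (1 - g x)]
    · linarith [min_le_right (g x) (1 - g x)]
  have hBm : MeasurableSet {x | g x = 1} := hgmeas (measurableSet_singleton 1)
  refine ⟨{x | g x = 1}, hBm, fun A hA => ?_⟩
  rw [← hgm A (hm _ hA) hA]
  have : ∫ x in A, g x ∂μ = ∫ x in A, ({x | g x = 1}).indicator (fun _ => (1:ℝ)) x ∂μ := by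
    refine setIntegral_congr_ae (hm _ hA) ?_
    filter_upwards [h01ae] with x hx _
    rcases hx with hx | hx
    · rw [Set.indicator_of_notMem, hx]
      intro h; have h : g x = 1 := h
      rw [hx] at h; norm_num at h
    · rw [Set.indicator_of_mem, hx]; exact hx
  rw [this, integral_indicator hBm, Measure.restrict_restrict hBm]
  simp
end KM


section Maharam
universe u
variable {Ω : Type u} [MeasurableSpace Ω]

/-- `μ1` embeds into `μ2`: a map on measurable functions preserving distributions and
commuting with binary measurable operations. -/
def Emb (μ1 μ2 : Measure Ω) : Prop :=
  ∃ T : (Ω → ℝ) → (Ω → ℝ), (∀ f, Measurable f → Measurable (T f)) ∧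
    (∀ Φ : ℝ × ℝ → ℝ, Measurable Φ → ∀ f1 f2 f3, Measurable f1 → Measurable f2 → Measurable f3 →
      (f3 =ᵐ[μ1] fun x => Φ (f1 x, f2 x)) → T f3 =ᵐ[μ2] fun x => Φ (T f1 x, T f2 x)) ∧
    (∀ φ : ℝ → ℝ≥0∞, Measurable φ → ∀ f, Measurable f → ∫⁻ x, φ (T f x) ∂μ2 = ∫⁻ x, φ (f x) ∂μ1)

lemma Emb.refl (μ : Measure Ω) : Emb μ μ :=
  ⟨id, fun _ h => h, fun _ _ _ _ _ _ _ _ h => h, fun _ _ _ _ => rfl⟩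

lemma Emb.of_maps {E : Type*} [MeasurableSpace E] {μ1 μ2 : Measure Ω} {X Y : Ω → E}
    (hX : Measurable X) (hY : Measurable Y) (hXY : μ1.map X = μ2.map Y)
    (hrep : ∀ f : Ω → ℝ, Measurable f → ∃ g : E → ℝ, Measurable g ∧ f =ᵐ[μ1] g ∘ X) :
    Emb μ1 μ2 := by
  classical
  choose! g hg hfg using hrep
  refine ⟨fun f => g f ∘ Y, fun f hf => (hg f hf).comp hY, ?_, ?_⟩
  · intro Φ hΦ f1 f2 f3 h1 h2 h3 he
    have e1 : (g f3 ∘ X) =ᵐ[μ1] ((fun x => Φ (g f1 x, g f2 x)) ∘ X) := by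
      filter_upwards [he, hfg f1 h1, hfg f2 h2, hfg f3 h3] with x a b c d
      rw [← d, a, b, c]; rfl
    have hS : MeasurableSet {y | g f3 y = Φ (g f1 y, g f2 y)} :=
      measurableSet_eq_fun (hg f3 h3) (hΦ.comp ((hg f1 h1).prodMk (hg f2 h2)))
    have e2 : ∀ᵐ y ∂(μ1.map X), g f3 y = Φ (g f1 y, g f2 y) :=
      (ae_map_iff hX.aemeasurable hS).2 e1
    rw [hXY] at e2
    exact (ae_map_iff hY.aemeasurable hS).1 e2
  · intro φ hφ f hf
    have h1 : ∫⁻ y, φ (g f y) ∂(μ2.map Y) = ∫⁻ x, φ (g f (Y x)) ∂μ2 :=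
      lintegral_map (hφ.comp (hg f hf)) hY
    have h2 : ∫⁻ y, φ (g f y) ∂(μ1.map X) = ∫⁻ x, φ (g f (X x)) ∂μ1 :=
      lintegral_map (hφ.comp (hg f hf)) hX
    show ∫⁻ x, φ (g f (Y x)) ∂μ2 = _
    rw [← h1, ← hXY, h2]
    refine lintegral_congr_ae ?_
    filter_upwards [hfg f hf] with x hx
    rw [hx]; rfl

/-- `𝒜` generates the measure algebra of `μ`. -/
def Gn (μ : Measure Ω) (A : Set (Set Ω)) : Prop :=
  (∀ s ∈ A, MeasurableSet s) ∧ ∀ F, MeasurableSet F →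
    ∃ G, MeasurableSet[MeasurableSpace.generateFrom A] G ∧ F =ᵐ[μ] G

/-- Maharam-type cardinal. -/
def mty (μ : Measure Ω) : Cardinal.{u} := sInf {c | ∃ A : Set (Set Ω), Gn μ A ∧ Cardinal.mk A = c}

lemma mty_mem (μ : Measure Ω) : ∃ A : Set (Set Ω), Gn μ A ∧ Cardinal.mk A = mty μ := by
  have : mty μ ∈ {c | ∃ A : Set (Set Ω), Gn μ A ∧ Cardinal.mk A = c} :=
    csInf_mem ⟨_, {s | MeasurableSet s}, ⟨fun s hs => hs, fun F hF =>
      ⟨F, MeasurableSpace.measurableSet_generateFrom hF, ae_eq_refl _⟩⟩, rfl⟩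
  exact this

lemma mty_le {μ : Measure Ω} {A : Set (Set Ω)} (h : Gn μ A) : mty μ ≤ Cardinal.mk A :=
  csInf_le' ⟨A, h, rfl⟩

lemma Gn.congr {μ ν : Measure Ω} (h : ae μ = ae ν) {A : Set (Set Ω)} (hA : Gn μ A) : Gn ν A :=
  ⟨hA.1, fun F hF => by
    obtain ⟨G, h1, h2⟩ := hA.2 F hF
    exact ⟨G, h1, by rwa [← h]⟩⟩

lemma mty_congr {μ ν : Measure Ω} (h : ae μ = ae ν) : mty μ = mty ν := by
  unfold mty
  congr 1
  ext c
  exact ⟨fun ⟨A, h1, h2⟩ => ⟨A, h1.congr h, h2⟩, fun ⟨A, h1, h2⟩ => ⟨A, h1.congr h.symm, h2⟩⟩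

/-- Code map of a family of sets. -/
def cod {J : Type*} (a : J → Set Ω) : Ω → (J → Prop) := fun x j => x ∈ a j

lemma cod_meas {J : Type*} {a : J → Set Ω} (ha : ∀ j, MeasurableSet (a j)) : Measurable (cod a) :=
  measurable_pi_iff.2 fun j => measurableSet_setOfPred.1 (ha j)

lemma comap_cod_le {J : Type*} {m : MeasurableSpace Ω} (a : J → Set Ω) (h : ∀ j, MeasurableSet[m] (a j)) :
    MeasurableSpace.comap (cod a) inferInstance ≤ m := by
  rw [← measurable_iff_comap_le]
  exact measurable_pi_iff.2 fun j => measurableSet_setOfPred.1 (h j)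

lemma le_comap_cod {J : Type*} (a : J → Set Ω) :
    MeasurableSpace.generateFrom (Set.range a) ≤ MeasurableSpace.comap (cod a) inferInstance := by
  refine MeasurableSpace.generateFrom_le ?_
  rintro _ ⟨j, rfl⟩
  refine ⟨{x | x j}, measurableSet_setOfPred.2 (measurable_pi_apply j), rfl⟩

lemma cod_map_eq {J : Type*} {a b : J → Set Ω} {μ1 μ2 : Measure Ω} [IsFiniteMeasure μ1]
    (ha : ∀ j, MeasurableSet (a j)) (hb : ∀ j, MeasurableSet (b j))
    (h : ∀ F : Finset J, μ1 (⋂ j ∈ F, a j) = μ2 (⋂ j ∈ F, b j)) :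
    μ1.map (cod a) = μ2.map (cod b) := by
  have hS : ∀ F : Finset J, MeasurableSet {x : J → Prop | ∀ j ∈ F, x j} := by
    intro F
    have : {x : J → Prop | ∀ j ∈ F, x j} = ⋂ j ∈ F, {x | x j} := by ext; simp
    rw [this]
    exact F.measurableSet_biInter fun j _ => measurableSet_setOfPred.2 (measurable_pi_apply j)
  have hpa : ∀ (c : J → Set Ω) (F : Finset J), cod c ⁻¹' {x | ∀ j ∈ F, x j} = ⋂ j ∈ F, c j := by
    intro c F; ext x; simp [cod]
  have key : ∀ F : Finset J, μ1.map (cod a) {x | ∀ j ∈ F, x j} = μ2.map (cod b) {x | ∀ j ∈ F, x j} := by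
    intro F
    rw [Measure.map_apply (cod_meas ha) (hS F), Measure.map_apply (cod_meas hb) (hS F), hpa, hpa, h]
  have : IsFiniteMeasure (μ1.map (cod a)) := inferInstance
  refine ext_of_generate_finite (Set.range fun F : Finset J => {x : J → Prop | ∀ j ∈ F, x j}) ?_ ?_ ?_ ?_
  · apply le_antisymm
    · refine iSup_le fun j => ?_
      rw [← measurable_iff_comap_le]
      refine @measurableSet_setOfPred _ (_) _ |>.1 ?_
      exact MeasurableSpace.measurableSet_generateFrom ⟨{j}, by simp⟩
    · refine MeasurableSpace.generateFrom_le ?_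
      rintro _ ⟨F, rfl⟩
      exact hS F
  · classical
    rintro _ ⟨F, rfl⟩ _ ⟨G, rfl⟩ _
    refine ⟨F ∪ G, ?_⟩
    ext x
    simp only [Set.mem_ofPred_eq, Set.mem_inter_iff, Finset.mem_union]
    exact ⟨fun h => ⟨fun j hj => h j (Or.inl hj), fun j hj => h j (Or.inr hj)⟩,
      fun h j hj => hj.elim (h.1 j) (h.2 j)⟩
  · rintro _ ⟨F, rfl⟩; exact key F
  · simpa using key ∅

lemma step_lemma {J : Type*} {a b : J → Set Ω} {μ1 μ2 : Measure Ω} [IsFiniteMeasure μ1] [IsFiniteMeasure μ2]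
    (ha : ∀ j, MeasurableSet (a j)) (hb : ∀ j, MeasurableSet (b j))
    (h : ∀ F : Finset J, μ1 (⋂ j ∈ F, a j) = μ2 (⋂ j ∈ F, b j))
    (hNG : ∀ E, MeasurableSet E → μ2 E ≠ 0 → ¬ Gn (μ2.restrict E) (Set.range b))
    {A : Set Ω} (hA : MeasurableSet A) :
    ∃ B, MeasurableSet B ∧ ∀ F : Finset J, μ1 (A ∩ ⋂ j ∈ F, a j) = μ2 (B ∩ ⋂ j ∈ F, b j) := by
  have hX := cod_meas ha
  have hY := cod_meas hb
  have hl := cod_map_eq ha hb h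
  set l := μ1.map (cod a) with hldef
  set ρ := (μ1.restrict A).map (cod a) with hρ
  have hρl : ρ ≤ l := Measure.map_mono Measure.restrict_le_self hX
  have : IsFiniteMeasure l := by rw [hldef]; infer_instance
  have : IsFiniteMeasure ρ := by rw [hρ]; infer_instance
  have hac : ρ ≪ l := hρl.absolutelyContinuous
  set k : (J → Prop) → ℝ := fun y => min (ρ.rnDeriv l y).toReal 1 with hk
  have hkm : Measurable k := ((Measure.measurable_rnDeriv ρ l).ennreal_toReal).min measurable_const
  have hk01 : ∀ y, 0 ≤ k y ∧ k y ≤ 1 := fun y =>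
    ⟨le_min ENNReal.toReal_nonneg zero_le_one, min_le_right _ _⟩
  have hd1 : ρ.rnDeriv l ≤ᵐ[l] 1 := Measure.rnDeriv_le_one_of_le hρl
  have hkS : ∀ S, MeasurableSet S → ∫ y in S, k y ∂l = ρ.real S := by
    intro S hS
    rw [← Measure.setIntegral_toReal_rnDeriv hac S]
    refine setIntegral_congr_ae hS ?_
    filter_upwards [hd1] with y hy _
    refine min_eq_left ?_
    exact ENNReal.toReal_mono ENNReal.one_ne_top hy
  have hNG' : ∀ E, MeasurableSet E → μ2 E ≠ 0 → ∃ F, MeasurableSet F ∧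
      ∀ G, MeasurableSet[MeasurableSpace.comap (cod b) inferInstance] G → ¬ F =ᵐ[μ2.restrict E] G := by
    intro E hE hE0
    have := hNG E hE hE0
    by_contra hcon
    push Not at hcon
    refine this ⟨by rintro _ ⟨j, rfl⟩; exact hb j, fun F hF => ?_⟩
    obtain ⟨G, hG, hFG⟩ := hcon F hF
    exact ⟨G, comap_cod_le (m := MeasurableSpace.generateFrom (Set.range b)) b
      (fun j => MeasurableSpace.measurableSet_generateFrom ⟨j, rfl⟩) _ hG, hFG⟩
  obtain ⟨B, hB, hBA⟩ := rel_atomless (m := MeasurableSpace.comap (cod b) inferInstance)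
    (μ := μ2) (comap_cod_le b hb) (h := k ∘ cod b) hNG' (hkm.comp hY) (fun x => hk01 _)
  · refine ⟨B, hB, fun F => ?_⟩
    set S := {x : J → Prop | ∀ j ∈ F, x j} with hSdef
    have hS : MeasurableSet S := by
      have : {x : J → Prop | ∀ j ∈ F, x j} = ⋂ j ∈ F, {x | x j} := by ext; simp
      rw [hSdef, this]
      exact F.measurableSet_biInter fun j _ => measurableSet_setOfPred.2 (measurable_pi_apply j)
    have hpa : ∀ (c : J → Set Ω), cod c ⁻¹' S = ⋂ j ∈ F, c j := by
      intro c; ext x; simp [cod, hSdef]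
    have h1 := hBA (cod b ⁻¹' S) ⟨S, hS, rfl⟩
    have h2 : ∫ x in cod b ⁻¹' S, (k ∘ cod b) x ∂μ2 = ∫ y in S, k y ∂l := by
      rw [hl, setIntegral_map hS hkm.aestronglyMeasurable hY.aemeasurable]; rfl
    rw [h2, hkS S hS, hpa] at h1
    have h3 : ρ.real S = μ1.real (A ∩ ⋂ j ∈ F, a j) := by
      rw [measureReal_def, hρ, Measure.map_apply hX hS, Measure.restrict_apply (hX hS), hpa, Set.inter_comm, measureReal_def]
    rw [h3] at h1
    exact ((ENNReal.toReal_eq_toReal_iff' (measure_ne_top _ _) (measure_ne_top _ _)).1 h1).symm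
end Maharam


section Maharam2
universe u
variable {Ω : Type u} [MeasurableSpace Ω]

lemma exists_codes {μ1 μ2 : Measure Ω} [IsFiniteMeasure μ1] [IsFiniteMeasure μ2]
    (h12 : μ1 Set.univ = μ2 Set.univ) {ι : Type*} [LinearOrder ι] [WellFoundedLT ι]
    {a : ι → Set Ω} (ha : ∀ i, MeasurableSet (a i))
    (hNG : ∀ i, ∀ b : ι → Set Ω, ∀ E, MeasurableSet E → μ2 E ≠ 0 →
      ¬ Gn (μ2.restrict E) (Set.range fun j : Set.Iio i => b j.1)) :
    ∃ b : ι → Set Ω, (∀ i, MeasurableSet (b i)) ∧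
      ∀ F : Finset ι, μ1 (⋂ j ∈ F, a j) = μ2 (⋂ j ∈ F, b j) := by
  classical
  let good : ι → (ι → Set Ω) → Set Ω → Prop := fun i c B => MeasurableSet B ∧
    ∀ F : Finset ι, (∀ j ∈ F, j < i) → μ1 (a i ∩ ⋂ j ∈ F, a j) = μ2 (B ∩ ⋂ j ∈ F, c j)
  have good_congr : ∀ i c c' B, (∀ j, j < i → c j = c' j) → good i c B → good i c' B := by
    intro i c c' B hc hB
    refine ⟨hB.1, fun F hF => ?_⟩
    rw [hB.2 F hF]
    congr 2
    exact Set.iInter₂_congr fun j hj => hc j (hF j hj)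
  let step : ι → (ι → Set Ω) → Set Ω := fun i c => if h : ∃ B, good i c B then h.choose else ∅
  have step_good : ∀ i c, (∃ B, good i c B) → good i c (step i c) := by
    intro i c h
    simp only [step, dif_pos h]
    exact h.choose_spec
  have wf : WellFounded ((· < ·) : ι → ι → Prop) := wellFounded_lt
  let b : ι → Set Ω := wf.fix fun i prev => step i fun j => if h : j < i then prev j h else Set.univ
  have hb : ∀ i, b i = step i fun j => if j < i then b j else Set.univ := by
    intro i
    simp only [b]
    rw [wf.fix_eq]
    simp only [dite_eq_ite]
  have fin : ∀ G : Set ι, (∀ j ∈ G, good j b (b j)) → ∀ F : Finset ι, (∀ j ∈ F, j ∈ G) →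
      μ1 (⋂ j ∈ F, a j) = μ2 (⋂ j ∈ F, b j) := by
    intro G hG F hF
    rcases F.eq_empty_or_nonempty with rfl | hne
    · simpa using h12
    · have hM := F.max'_mem hne
      rw [← Finset.insert_erase hM, Finset.set_biInter_insert, Finset.set_biInter_insert]
      refine (hG _ (hF _ hM)).2 _ fun j hj => ?_
      exact lt_of_le_of_ne (F.le_max' j (Finset.mem_of_mem_erase hj)) (Finset.ne_of_mem_erase hj)
  have main : ∀ i, good i b (b i) := by
    intro i
    induction i using wf.induction with
    | _ i ih =>
    have hfin := fin (Set.Iio i) ih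
    obtain ⟨B, hB, hBF⟩ := step_lemma (μ1 := μ1) (μ2 := μ2) (J := Set.Iio i)
      (a := fun j => a j.1) (b := fun j => b j.1) (fun j => ha j.1) (fun j => (ih j.1 j.2).1)
      (fun F => by
        have := hfin (F.map (Function.Embedding.subtype _))
          (by simp only [Finset.mem_map]; rintro _ ⟨j, -, rfl⟩; exact j.2)
        simpa using this) (hNG i b) (ha i)
    have hex : good i b B := by
      refine ⟨hB, fun F hF => ?_⟩
      have := hBF (F.subtype (· ∈ Set.Iio i))
      have e : ∀ c : ι → Set Ω, (⋂ j ∈ F.subtype (· ∈ Set.Iio i), c j) = ⋂ j ∈ F, c j := by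
        intro c
        ext x
        simp only [Set.mem_iInter, Finset.mem_subtype]
        exact ⟨fun h j hj => h ⟨j, hF j hj⟩ hj, fun h j hj => h j hj⟩
      rw [e a, e b] at this
      exact this
    rw [hb i]
    refine good_congr i (fun j => if j < i then b j else Set.univ) b _ (fun j hj => if_pos hj)
      (step_good _ _ ⟨B, ?_⟩)
    exact good_congr i b _ B (fun j hj => (if_pos hj).symm) hex
  exact ⟨b, fun i => (main i).1, fun F => fin Set.univ (fun j _ => main j) F (fun _ _ => trivial)⟩

lemma rep_of_gen {Ω : Type*} {m : MeasurableSpace Ω} [m0 : MeasurableSpace Ω] {μ : Measure Ω}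
    (h : ∀ F, MeasurableSet F → ∃ G, MeasurableSet[m] G ∧ F =ᵐ[μ] G) {f : Ω → ℝ} (hf : Measurable f) :
    ∃ g : Ω → ℝ, Measurable[m] g ∧ f =ᵐ[μ] g := by
  classical
  have h' : ∀ q : ℚ, ∃ G, MeasurableSet[m] G ∧ {x | f x < q} =ᵐ[μ] G := fun q =>
    h _ (measurableSet_lt hf measurable_const)
  choose H hH hfH using h'
  let g : Ω → EReal := fun x => ⨅ q : ℚ, if x ∈ H q then ((q : ℝ) : EReal) else ⊤
  have hg : Measurable[m] g := by
    refine Measurable.iInf fun q => ?_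
    exact Measurable.ite (hH q) measurable_const measurable_const
  refine ⟨fun x => (g x).toReal, measurable_ereal_toReal.comp hg, ?_⟩
  have : ∀ᵐ x ∂μ, ∀ q : ℚ, (f x < q ↔ x ∈ H q) := by
    refine ae_all_iff.2 fun q => ?_
    filter_upwards [hfH q] with x hx
    exact iff_of_eq hx
  filter_upwards [this] with x hx
  have : g x = (f x : EReal) := by
    apply le_antisymm
    · refine le_of_forall_gt fun c hc => ?_
      obtain ⟨q, hq1, hq2⟩ := EReal.exists_rat_btwn_of_lt hc
      refine lt_of_le_of_lt (iInf_le _ q) ?_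
      rw [if_pos ((hx q).1 (by exact_mod_cast hq1))]
      exact hq2
    · refine le_iInf fun q => ?_
      by_cases hq : x ∈ H q
      · rw [if_pos hq]
        exact_mod_cast ((hx q).2 hq).le
      · rw [if_neg hq]; exact le_top
  show f x = (g x).toReal
  rw [this, EReal.toReal_coe]

lemma Emb.of_mty {μ1 μ2 : Measure Ω} [IsFiniteMeasure μ1] [IsFiniteMeasure μ2]
    (h12 : μ1 Set.univ = μ2 Set.univ)
    (h : ∀ E, MeasurableSet E → μ2 E ≠ 0 → mty μ1 ≤ mty (μ2.restrict E)) : Emb μ1 μ2 := by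
  obtain ⟨A, hA, hAc⟩ := mty_mem μ1
  have hcard : Cardinal.mk (mty μ1).ord.ToType = Cardinal.mk A := by rw [Cardinal.mk_ord_toType, hAc]
  obtain ⟨e⟩ := Cardinal.eq.1 hcard
  let a : (mty μ1).ord.ToType → Set Ω := fun i => (e i : Set Ω)
  have ha : ∀ i, MeasurableSet (a i) := fun i => hA.1 _ (e i).2
  have hra : Set.range a = A := by
    ext s
    exact ⟨by rintro ⟨i, rfl⟩; exact (e i).2, fun hs => ⟨e.symm ⟨s, hs⟩, by simp [a]⟩⟩
  obtain ⟨b, hb, hab⟩ := exists_codes h12 ha (fun i b E hE hE0 hG => by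
    have h1 := (h E hE hE0).trans (mty_le hG)
    exact absurd (h1.trans Cardinal.mk_range_le) (not_le.2 (Cardinal.mk_Iio_toType_ord_lt i)))
  refine Emb.of_maps (cod_meas ha) (cod_meas hb) (cod_map_eq ha hb hab) fun f hf => ?_
  obtain ⟨g, hg, hfg⟩ := rep_of_gen (m := MeasurableSpace.generateFrom A) hA.2 hf
  rw [← hra] at hg
  have hg' : Measurable[MeasurableSpace.comap (cod a) inferInstance] g := hg.mono (le_comap_cod a) le_rfl
  obtain ⟨k, hk, rfl⟩ := hg'.exists_eq_measurable_comp
  exact ⟨k, hk, hfg⟩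
end Maharam2


section Decomp
universe u
variable {Ω : Type u} [MeasurableSpace Ω]

def HomSet (μ : Measure Ω) (D : Set Ω) : Prop :=
  MeasurableSet D ∧ μ D ≠ 0 ∧ μ D ≠ ⊤ ∧
    ∀ E, MeasurableSet E → E ⊆ D → μ E ≠ 0 → mty (μ.restrict D) ≤ mty (μ.restrict E)

/-- normalized restriction -/
def nrm (μ : Measure Ω) (D S : Set Ω) : Measure Ω := (μ D / μ S) • μ.restrict S

lemma exists_hom {μ : Measure Ω} {A : Set Ω} (hA : MeasurableSet A) (h0 : μ A ≠ 0) (ht : μ A ≠ ⊤) :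
    ∃ D, D ⊆ A ∧ HomSet μ D := by
  let S : Set Cardinal.{u} := {c | ∃ E, MeasurableSet E ∧ E ⊆ A ∧ μ E ≠ 0 ∧ mty (μ.restrict E) = c}
  have hS : S.Nonempty := ⟨_, A, hA, subset_rfl, h0, rfl⟩
  obtain ⟨E, hE, hEA, hE0, hEc⟩ := csInf_mem hS
  refine ⟨E, hEA, hE, hE0, ne_top_of_le_ne_top ht (measure_mono hEA), fun F hF hFE hF0 => ?_⟩
  rw [hEc]
  exact csInf_le' ⟨F, hF, hFE.trans hEA, hF0, rfl⟩

lemma emb_of_hom {μ : Measure Ω} {D S : Set Ω} (hD0 : μ D ≠ 0) (hD : μ D ≠ ⊤)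
    (hS : MeasurableSet S) (hS0 : μ S ≠ 0) (hSt : μ S ≠ ⊤)
    (h : ∀ E, MeasurableSet E → E ⊆ S → μ E ≠ 0 → mty (μ.restrict D) ≤ mty (μ.restrict E)) :
    Emb (μ.restrict D) (nrm μ D S) := by
  have hc0 : μ D / μ S ≠ 0 := ENNReal.div_ne_zero.2 ⟨hD0, hSt⟩
  have hct : μ D / μ S ≠ ⊤ := ENNReal.div_ne_top hD hS0
  have : IsFiniteMeasure (μ.restrict D) := ⟨by simpa using hD.lt_top⟩
  have : IsFiniteMeasure (μ.restrict S) := ⟨by simpa using hSt.lt_top⟩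
  have : IsFiniteMeasure (nrm μ D S) := by
    unfold nrm
    exact Measure.smul_finite _ hct
  refine Emb.of_mty ?_ fun E hE hE0 => ?_
  · simp only [nrm, Measure.smul_apply, Measure.restrict_apply_univ, smul_eq_mul]
    rw [ENNReal.div_mul_cancel hS0 hSt]
  · have e : (nrm μ D S).restrict E = (μ D / μ S) • μ.restrict (E ∩ S) := by
      rw [nrm, Measure.restrict_smul, Measure.restrict_restrict hE]
    have h1 : μ (E ∩ S) ≠ 0 := by
      intro h0
      apply hE0
      rw [nrm, Measure.smul_apply, Measure.restrict_apply hE, h0, smul_zero]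
    rw [e, mty_congr (Measure.ae_ennreal_smul_measure_eq hc0 (μ.restrict (E ∩ S)))]
    exact h _ (hE.inter hS) Set.inter_subset_right h1

def IsAt (μ : Measure Ω) (D : Set Ω) : Prop :=
  ∀ E, MeasurableSet E → μ (D ∩ E) = 0 ∨ μ (D \ E) = 0

lemma mty_at {μ : Measure Ω} {D : Set Ω} (hD : MeasurableSet D) (h : IsAt μ D) :
    mty (μ.restrict D) = 0 := by
  have : Gn (μ.restrict D) ∅ := by
    refine ⟨by simp, fun F hF => ?_⟩
    rcases h F hF with h0 | h0
    · refine ⟨∅, @MeasurableSet.empty _ (_), ?_⟩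
      rw [ae_eq_empty, Measure.restrict_apply hF, Set.inter_comm]; exact h0
    · refine ⟨Set.univ, @MeasurableSet.univ _ (_), ?_⟩
      rw [ae_eq_univ, Measure.restrict_apply hF.compl, Set.inter_comm]; exact h0
  have := mty_le this
  simpa using this

lemma at_of_mty {μ : Measure Ω} {D : Set Ω} (hD : MeasurableSet D) (h : mty (μ.restrict D) = 0) :
    IsAt μ D := by
  obtain ⟨A, hA, hAc⟩ := mty_mem (μ.restrict D)
  rw [h, Cardinal.mk_set_eq_zero_iff] at hAc
  subst hAc
  intro E hE
  obtain ⟨G, hG, hEG⟩ := hA.2 E hE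
  rw [MeasurableSpace.generateFrom_empty, MeasurableSpace.measurableSet_bot_iff] at hG
  rcases hG with rfl | rfl
  · left
    rw [ae_eq_empty, Measure.restrict_apply hE, Set.inter_comm] at hEG; exact hEG
  · right
    rw [ae_eq_univ, Measure.restrict_apply hE.compl, Set.inter_comm] at hEG; exact hEG

lemma exists_split {μ : Measure Ω} {D : Set Ω} (hD : HomSet μ D) (hn : ¬ IsAt μ D) :
    ∃ T : ℕ → Set Ω, (∀ k, MeasurableSet (T k)) ∧ (∀ k, T k ⊆ D) ∧ (∀ k, μ (T k) ≠ 0) ∧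
      ∀ k l, k ≠ l → Disjoint (T k) (T l) := by
  obtain ⟨hDm, hD0, hDt, hmin⟩ := hD
  have hs : ∀ R, MeasurableSet R ∧ R ⊆ D ∧ μ R ≠ 0 → ∃ E, (MeasurableSet E ∧ E ⊆ D ∧ μ E ≠ 0) ∧
      E ⊆ R ∧ μ (R \ E) ≠ 0 := by
    rintro R ⟨hR, hRD, hR0⟩
    have : ¬ IsAt μ R := fun hat => hn (at_of_mty hDm (by
      have := hmin R hR hRD hR0
      rw [mty_at hR hat] at this
      simpa using this))
    unfold IsAt at this
    push Not at this
    obtain ⟨E, hE, h1, h2⟩ := this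
    exact ⟨R ∩ E, ⟨hR.inter hE, Set.inter_subset_left.trans hRD, h1⟩, Set.inter_subset_left, by
      rwa [Set.sdiff_self_inter]⟩
  choose! s hs1 hs2 hs3 using hs
  let R : ℕ → Set Ω := fun n => Nat.rec D (fun _ x => s x) n
  have hR : ∀ n, MeasurableSet (R n) ∧ R n ⊆ D ∧ μ (R n) ≠ 0 := by
    intro n
    induction n with
    | zero => exact ⟨hDm, subset_rfl, hD0⟩
    | succ n ih => exact hs1 _ ih
  have hanti : Antitone R := antitone_nat_of_succ_le fun n => hs2 _ (hR n)
  refine ⟨fun k => R k \ R (k+1), fun k => (hR k).1.diff (hR (k+1)).1,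
    fun k => Set.sdiff_subset.trans (hR k).2.1, fun k => hs3 _ (hR k), ?_⟩
  have key : ∀ k l, k < l → Disjoint (R k \ R (k+1)) (R l \ R (l+1)) := by
    intro k l hkl
    refine Set.disjoint_left.2 fun x hx hx' => hx.2 (hanti hkl hx'.1)
  intro k l hkl
  rcases lt_or_gt_of_ne hkl with h | h
  · exact key k l h
  · exact (key l k h).symm

lemma exists_family (μ : Measure Ω) : ∃ W : Set (Set Ω), (∀ D ∈ W, HomSet μ D) ∧
    (∀ D ∈ W, ∀ D' ∈ W, D ≠ D' → μ (D ∩ D') = 0) ∧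
    ∀ A, MeasurableSet A → μ A ≠ ⊤ → (∀ D ∈ W, μ (A ∩ D) = 0) → μ A = 0 := by
  let P : Set (Set (Set Ω)) := {W | (∀ D ∈ W, HomSet μ D) ∧
    (∀ D ∈ W, ∀ D' ∈ W, D ≠ D' → μ (D ∩ D') = 0)}
  obtain ⟨W, hW⟩ := zorn_subset P (by
    intro c hcP hc
    refine ⟨⋃₀ c, ⟨?_, ?_⟩, fun s hs => Set.subset_sUnion_of_mem hs⟩
    · rintro D ⟨s, hs, hDs⟩
      exact (hcP hs).1 D hDs
    · rintro D ⟨s, hs, hDs⟩ D' ⟨s', hs', hDs'⟩ hne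
      rcases hc.total hs hs' with h | h
      · exact (hcP hs').2 D (h hDs) D' hDs' hne
      · exact (hcP hs).2 D hDs D' (h hDs') hne)
  refine ⟨W, hW.prop.1, hW.prop.2, fun A hA hAt hAD => ?_⟩
  by_contra hA0
  obtain ⟨E, hEA, hE⟩ := exists_hom hA hA0 hAt
  have hED : ∀ D ∈ W, μ (E ∩ D) = 0 := fun D hD =>
    measure_mono_null (Set.inter_subset_inter_left _ hEA) (hAD D hD)
  have hmem : insert E W ∈ P := by
    refine ⟨?_, ?_⟩
    · rintro D (rfl | hD)
      · exact hE
      · exact hW.prop.1 D hD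
    · rintro D (rfl | hD) D' (rfl | hD') hne
      · exact absurd rfl hne
      · exact hED _ hD'
      · rw [Set.inter_comm]; exact hED _ hD
      · exact hW.prop.2 D hD D' hD' hne
  have h1 : E ∈ W := hW.le_of_ge hmem (Set.subset_insert _ _) (Set.mem_insert _ _)
  have := hED E h1
  rw [Set.inter_self] at this
  exact hE.2.1 this

theorem structure_thm (μ : Measure Ω) : ∃ (I : Type u) (D : I → Set Ω) (sp : Finset I) (T : I → ℕ → Set Ω),
    (∀ i, MeasurableSet (D i)) ∧ (∀ i, μ (D i) ≠ 0) ∧ (∀ i, μ (D i) ≠ ⊤) ∧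
    (∀ i j, i ≠ j → μ (D i ∩ D j) = 0) ∧
    (∀ A, MeasurableSet A → μ A ≠ ⊤ → (∀ i, μ (A ∩ D i) = 0) → μ A = 0) ∧
    (∀ i k, MeasurableSet (T i k)) ∧ 
    (∀ i k i' k', (i, k) ≠ (i', k') → μ (T i k ∩ T i' k') = 0) ∧
    (∀ i ∉ sp, ∀ k, Emb (μ.restrict (D i)) (nrm μ (D i) (T i k))) ∧
    (∀ i ∈ sp, IsAt μ (D i) ∧ Emb (μ.restrict (D i)) (nrm μ (D i) (T i 0)) ∧
      ∀ k, k ≠ 0 → nrm μ (D i) (T i k) = 0) := by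
  classical
  obtain ⟨W, hW1, hW2, hW3⟩ := exists_family μ
  let At : Set W := {i | IsAt μ i.1}
  have hna : ∀ i : W, i ∉ At → ∃ T : ℕ → Set Ω, (∀ k, MeasurableSet (T k)) ∧ (∀ k, T k ⊆ i.1) ∧
      (∀ k, μ (T k) ≠ 0) ∧ ∀ k l, k ≠ l → Disjoint (T k) (T l) := fun i hi =>
    exists_split (hW1 i.1 i.2) hi
  choose! U hU1 hU2 hU3 hU4 using hna
  have hUE : ∀ i : W, i ∉ At → ∀ k, Emb (μ.restrict i.1) (nrm μ i.1 (U i k)) := by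
    intro i hi k
    have hH := hW1 i.1 i.2
    exact emb_of_hom hH.2.1 hH.2.2.1 (hU1 i hi k) (hU3 i hi k)
      (ne_top_of_le_ne_top hH.2.2.1 (measure_mono (hU2 i hi k)))
      fun E hE hEU hE0 => hH.2.2.2 E hE (hEU.trans (hU2 i hi k)) hE0
  have hAE : ∀ i ∈ At, ∀ j : W, Emb (μ.restrict i.1) (nrm μ i.1 j.1) := by
    intro i hi j
    have hH := hW1 i.1 i.2
    have hJ := hW1 j.1 j.2
    refine emb_of_hom hH.2.1 hH.2.2.1 hJ.1 hJ.2.1 hJ.2.2.1 fun E hE hEU hE0 => ?_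
    rw [mty_at hH.1 hi]; exact zero_le
  have hWn : ∀ i j : W, i ≠ j → μ (i.1 ∩ j.1) = 0 := fun i j hij =>
    hW2 i.1 i.2 j.1 j.2 (fun h => hij (Subtype.ext h))
  -- generic disjointness
  have hdisj : ∀ (T : W → ℕ → Set Ω) (τ : W → ℕ → W), (∀ i k, T i k ⊆ (τ i k).1) →
      (∀ i k i' k', (i, k) ≠ (i', k') → τ i k = τ i' k' → μ (T i k ∩ T i' k') = 0) →
      ∀ i k i' k', (i, k) ≠ (i', k') → μ (T i k ∩ T i' k') = 0 := by
    intro T τ h1 h2 i k i' k' hne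
    by_cases h : τ i k = τ i' k'
    · exact h2 i k i' k' hne h
    · exact measure_mono_null (Set.inter_subset_inter (h1 i k) (h1 i' k')) (hWn _ _ h)
  by_cases hfin : At.Finite
  · refine ⟨W, fun i => i.1, hfin.toFinset, fun i k => if i ∈ At then (if k = 0 then i.1 else ∅) else U i k,
      fun i => (hW1 i.1 i.2).1, fun i => (hW1 i.1 i.2).2.1, fun i => (hW1 i.1 i.2).2.2.1, hWn, 
      fun A hA hAt h => hW3 A hA hAt fun D hD => h ⟨D, hD⟩, ?_, ?_, ?_, ?_⟩
    · intro i k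
      by_cases hi : i ∈ At
      · by_cases hk : k = 0
        · simpa only [if_pos hi, if_pos hk] using (hW1 i.1 i.2).1
        · simp [if_pos hi, if_neg hk]
      · simpa only [if_neg hi] using hU1 i hi k
    · refine hdisj _ (fun i _ => i) ?_ ?_
      · intro i k
        by_cases hi : i ∈ At
        · by_cases hk : k = 0
          · simp [if_pos hi, if_pos hk]
          · simp [if_pos hi, if_neg hk]
        · simpa only [if_neg hi] using hU2 i hi k
      · intro i k i' k' hne (h : i = i')
        subst h
        have hkk : k ≠ k' := fun h => hne (by rw [h])
        by_cases hi : i ∈ At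
        · by_cases hk : k = 0
          · have hk' : k' ≠ 0 := fun h => hkk (by rw [hk, h])
            simp [if_pos hi, if_neg hk']
          · simp [if_pos hi, if_neg hk]
        · simp only [if_neg hi]
          rw [(hU4 i hi k k' hkk).inter_eq, measure_empty]
    · intro i hi k
      have hi : i ∉ At := by simpa using hi
      simpa only [if_neg hi] using hUE i hi k
    · intro i hi
      have hi : i ∈ At := by simpa using hi
      refine ⟨hi, ?_, fun k hk => ?_⟩
      · simpa only [if_pos hi, if_true] using hAE i hi i
      · simp [if_pos hi, if_neg hk, nrm]
  · have : Infinite At := Set.infinite_coe_iff.2 hfin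
    have hc : Cardinal.mk (At × ℕ) = Cardinal.mk At := by
      rw [Cardinal.mk_prod, Cardinal.lift_id', Cardinal.mk_nat, Cardinal.lift_aleph0]
      exact Cardinal.mul_aleph0_eq (Cardinal.aleph0_le_mk At)
    obtain ⟨σ⟩ := Cardinal.eq.1 hc
    refine ⟨W, fun i => i.1, ∅, fun i k => if h : i ∈ At then (σ (⟨i, h⟩, k)).1.1 else U i k,
      fun i => (hW1 i.1 i.2).1, fun i => (hW1 i.1 i.2).2.1, fun i => (hW1 i.1 i.2).2.2.1, hWn, 
      fun A hA hAt h => hW3 A hA hAt fun D hD => h ⟨D, hD⟩, ?_, ?_, ?_, ?_⟩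
    · intro i k
      by_cases hi : i ∈ At
      · simpa only [dif_pos hi] using (hW1 _ (σ (⟨i, hi⟩, k)).1.2).1
      · simpa only [dif_neg hi] using hU1 i hi k
    · refine hdisj _ (fun i k => if h : i ∈ At then (σ (⟨i, h⟩, k)).1 else i) ?_ ?_
      · intro i k
        by_cases hi : i ∈ At
        · simp only [dif_pos hi]; exact subset_rfl
        · simpa only [dif_neg hi] using hU2 i hi k
      · intro i k i' k' hne h
        by_cases hi : i ∈ At <;> by_cases hi' : i' ∈ At
        · simp only [dif_pos hi, dif_pos hi'] at h
          have := σ.injective (Subtype.ext h)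
          simp only [Prod.mk.injEq, Subtype.mk.injEq] at this
          exact absurd (Prod.ext this.1 this.2) hne
        · simp only [dif_pos hi, dif_neg hi'] at h
          exact absurd (h ▸ (σ (⟨i, hi⟩, k)).2) hi'
        · simp only [dif_pos hi', dif_neg hi] at h
          exact absurd (h ▸ (σ (⟨i', hi'⟩, k')).2) hi
        · simp only [dif_neg hi, dif_neg hi'] at h ⊢
          subst h
          have hkk : k ≠ k' := fun h => hne (by rw [h])
          rw [(hU4 i hi k k' hkk).inter_eq, measure_empty]
    · intro i _ k
      by_cases hi : i ∈ At
      · simpa only [dif_pos hi] using hAE i hi _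
      · simpa only [dif_neg hi] using hUE i hi k
    · simp
end Decomp


section Assembly
universe u

structure Dat {Ω : Type u} [MeasurableSpace Ω] (μ : Measure Ω) where
  I : Type u
  D : I → Set Ω
  sp : Finset I
  T : I × ℕ → Set Ω
  N : I × ℕ → Measure Ω
  Th : I × ℕ → (Ω → ℝ) → (Ω → ℝ)
  w : I × ℕ → ℝ≥0∞
  hD : ∀ i, MeasurableSet (D i)
  hDt : ∀ i, μ (D i) < ⊤
  hDd : Pairwise (Function.onFun (AEDisjoint μ) D)
  cover : ∀ A, MeasurableSet A → μ A ≠ ⊤ → (∀ i, μ (A ∩ D i) = 0) → μ A = 0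
  hT : ∀ j, MeasurableSet (T j)
  hTd : ∀ j j', j ≠ j' → μ (T j ∩ T j') = 0
  hNT : ∀ j, N j (T j)ᶜ = 0
  hNac : ∀ j, N j ≪ μ
  hThm : ∀ j f, Measurable f → Measurable (Th j f)
  hTh : ∀ j, ∀ Φ : ℝ × ℝ → ℝ, Measurable Φ → ∀ f1 f2 f3, Measurable f1 → Measurable f2 → Measurable f3 →
      (f3 =ᵐ[μ.restrict (D j.1)] fun x => Φ (f1 x, f2 x)) →
        Th j f3 =ᵐ[N j] fun x => Φ (Th j f1 x, Th j f2 x)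
  hThi : ∀ j, ∀ φ : ℝ → ℝ≥0∞, Measurable φ → ∀ f, Measurable f →
    ∫⁻ x, φ (Th j f x) ∂(N j) = w j * ∫⁻ x in D j.1, φ (f x) ∂μ
  hw : ∀ i ∉ sp, ∀ k, w (i, k) = 1
  hw0 : ∀ i ∈ sp, w (i, 0) = 1
  hw1 : ∀ i ∈ sp, ∀ k, k ≠ 0 → w (i, k) = 0
  hat : ∀ i ∈ sp, IsAt μ (D i)

variable {Ω : Type u} [MeasurableSpace Ω]

lemma exists_dat (μ : Measure Ω) : Nonempty (Dat μ) := by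
  classical
  obtain ⟨I, D, sp, T, hD, hD0, hDt, hDd, hcov, hT, hTd, hE, hsp⟩ := structure_thm μ
  have key : ∀ j : I × ℕ, ∃ Th : (Ω → ℝ) → (Ω → ℝ), (∀ f, Measurable f → Measurable (Th f)) ∧
    (∀ Φ : ℝ × ℝ → ℝ, Measurable Φ → ∀ f1 f2 f3, Measurable f1 → Measurable f2 → Measurable f3 →
      (f3 =ᵐ[μ.restrict (D j.1)] fun x => Φ (f1 x, f2 x)) →
        Th f3 =ᵐ[nrm μ (D j.1) (T j.1 j.2)] fun x => Φ (Th f1 x, Th f2 x)) ∧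
    (∀ φ : ℝ → ℝ≥0∞, Measurable φ → ∀ f, Measurable f →
      ∫⁻ x, φ (Th f x) ∂(nrm μ (D j.1) (T j.1 j.2)) =
        (if j.1 ∈ sp ∧ j.2 ≠ 0 then 0 else 1) * ∫⁻ x in D j.1, φ (f x) ∂μ) := by
    rintro ⟨i, k⟩
    by_cases h : i ∈ sp ∧ k ≠ 0
    · refine ⟨id, fun _ h => h, ?_, ?_⟩
      · intro Φ _ f1 f2 f3 _ _ _ _
        simp only [(hsp i h.1).2.2 k h.2, ae_zero]
        exact Filter.eventually_bot
      · intro φ _ f _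
        simp only [(hsp i h.1).2.2 k h.2, if_pos h]
        simp
    · have hemb : Emb (μ.restrict (D i)) (nrm μ (D i) (T i k)) := by
        by_cases hi : i ∈ sp
        · have hk : k = 0 := by
            by_contra hk; exact h ⟨hi, hk⟩
          rw [hk]; exact (hsp i hi).2.1
        · exact hE i hi k
      obtain ⟨Th, h1, h2, h3⟩ := hemb
      refine ⟨Th, h1, h2, ?_⟩
      simp only [if_neg h, one_mul]
      exact h3
  choose Th h1 h2 h3 using key
  exact ⟨{
    I := I, D := D, sp := sp, T := fun j => T j.1 j.2, N := fun j => nrm μ (D j.1) (T j.1 j.2)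
    Th := Th, w := fun j => if j.1 ∈ sp ∧ j.2 ≠ 0 then 0 else 1
    hD := hD, hDt := fun i => (hDt i).lt_top, hDd := fun i j hij => hDd i j hij, cover := hcov
    hT := fun j => hT j.1 j.2, hTd := fun j j' h => hTd _ _ _ _ h
    hNT := fun j => by
      rw [nrm, Measure.smul_apply, Measure.restrict_apply (hT _ _).compl]; simp
    hNac := fun j => (Measure.smul_absolutelyContinuous).trans Measure.restrict_le_self.absolutelyContinuous
    hThm := h1, hTh := h2, hThi := h3
    hw := fun i hi k => by simp [hi]
    hw0 := fun i hi => by simp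
    hw1 := fun i hi k hk => by simp [hi, hk]
    hat := fun i hi => (hsp i hi).1 }⟩

variable {μ : Measure Ω} (d : Dat μ)

def Dat.Act (f : Ω → ℝ) : Set d.I := {i | ¬ f =ᵐ[μ.restrict (d.D i)] 0}

lemma Dat.glue (v : d.I × ℕ → ℝ) {f : Ω → ℝ} (hf : Measurable f) (hc : (d.Act f).Countable) :
    ∃ F : Ω → ℝ, Measurable F ∧ ∀ j, F =ᵐ[d.N j] fun x => v j * d.Th j f x := by
  classical
  let K : Set (d.I × ℕ) := {j | j.1 ∈ d.Act f}
  have hK : K.Countable := by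
    have : K = (d.Act f) ×ˢ Set.univ := by ext ⟨a, b⟩; simp [K]
    rw [this]
    exact hc.prod Set.countable_univ
  have : Countable K := hK
  -- disjointified targets
  let T' : Option K → Set Ω := fun o => match o with
    | none => (⋃ j : K, (d.T j.1 \ ⋃ j' : {j' : K // j' ≠ j}, d.T j'.1.1))ᶜ
    | some j => d.T j.1 \ ⋃ j' : {j' : K // j' ≠ j}, d.T j'.1.1
  have hT'm : ∀ o, MeasurableSet (T' o) := by
    intro o
    have h1 : ∀ j : K, MeasurableSet (d.T j.1 \ ⋃ j' : {j' : K // j' ≠ j}, d.T j'.1.1) := fun j =>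
      (d.hT j.1).diff (MeasurableSet.iUnion fun j' => d.hT _)
    cases o with
    | none => exact (MeasurableSet.iUnion h1).compl
    | some j => exact h1 j
  let g : Option K → Ω → ℝ := fun o => match o with
    | none => 0
    | some j => fun x => v j.1 * d.Th j.1 f x
  have hgm : ∀ o, Measurable (g o) := by
    intro o
    cases o with
    | none => exact measurable_zero
    | some j => exact (d.hThm j.1 f hf).const_mul _
  obtain ⟨F, hF, hFg⟩ := exists_measurable_piecewise T' hT'm g hgm (by
    intro o o' hoo x hx
    exfalso
    rcases o with _ | j <;> rcases o' with _ | j'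
    · exact hoo rfl
    · exact hx.1 (Set.mem_iUnion.2 ⟨j', hx.2⟩)
    · exact hx.2 (Set.mem_iUnion.2 ⟨j, hx.1⟩)
    · have hne : j ≠ j' := fun h => hoo (by rw [h])
      exact hx.1.2 (Set.mem_iUnion.2 ⟨⟨j', hne.symm⟩, hx.2.1⟩))
  refine ⟨F, hF, fun j => ?_⟩
  have hTj : ∀ᵐ x ∂(d.N j), x ∈ d.T j := by
    have := measure_eq_zero_iff_ae_notMem.1 (d.hNT j)
    filter_upwards [this] with x hx
    simpa using hx
  have hnot : ∀ᵐ x ∂(d.N j), ∀ j' : K, j'.1 ≠ j → x ∉ d.T j'.1 := by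
    refine ae_all_iff.2 fun j' => ?_
    by_cases hne : j'.1 = j
    · simp [hne]
    · have := measure_eq_zero_iff_ae_notMem.1 (d.hNac j (d.hTd j'.1 j hne))
      filter_upwards [this, hTj] with x hx hx2 _ hx3 using hx ⟨hx3, hx2⟩
  by_cases hj : j ∈ K
  · filter_upwards [hTj, hnot] with x h1 h2
    have : x ∈ T' (some ⟨j, hj⟩) := by
      refine ⟨h1, ?_⟩
      simp only [Set.mem_iUnion, not_exists]
      rintro ⟨j', hj'⟩
      exact h2 j' (fun h => hj' (Subtype.ext h))
    exact hFg (some ⟨j, hj⟩) this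
  · have hz : f =ᵐ[μ.restrict (d.D j.1)] 0 := by
      by_contra h; exact hj h
    have hz2 : d.Th j f =ᵐ[d.N j] fun x => 0 := 
      d.hTh j (fun _ => 0) measurable_const f f f hf hf hf hz
    filter_upwards [hTj, hnot, hz2] with x h1 h2 h3
    have : x ∈ T' none := by
      intro hx
      obtain ⟨j', hj'⟩ := Set.mem_iUnion.1 hx
      exact h2 j' (fun h => hj (h ▸ j'.2)) hj'.1
    rw [h3, mul_zero]
    exact hFg none this

/-- the target measure -/
def Dat.nu (t : d.I × ℕ → ℝ) : Measure Ω := Measure.sum fun j => ENNReal.ofReal (t j) • d.N j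

open Classical in
def Dat.S (t v : d.I × ℕ → ℝ) (f : Ω →ₘ[μ] ℝ) : Ω →ₘ[d.nu t] ℝ :=
  if h : ∃ F : Ω → ℝ, Measurable F ∧ ∀ j, F =ᵐ[d.N j] fun x => v j * d.Th j f x then
    AEEqFun.mk h.choose h.choose_spec.1.aestronglyMeasurable else 0

variable {t v : d.I × ℕ → ℝ}

lemma Dat.ae_of_nu (ht : ∀ j, 0 < t j) {P : Ω → Prop} (h : ∀ᵐ x ∂(d.nu t), P x) (j) : ∀ᵐ x ∂(d.N j), P x := by
  have h1 : (ENNReal.ofReal (t j) • d.N j) ≤ d.nu t := Measure.le_sum _ j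
  have h2 := h1.absolutelyContinuous.ae_le h
  exact (Measure.ae_ennreal_smul_measure_iff (ENNReal.ofReal_pos.2 (ht j)).ne').1 h2

lemma Dat.S_spec (ht : ∀ j, 0 < t j) {f : Ω →ₘ[μ] ℝ} (hc : (d.Act f).Countable) (j) :
    d.S t v f =ᵐ[d.N j] fun x => v j * d.Th j f x := by
  classical
  have h := d.glue v f.measurable hc
  have h1 : d.S t v f = AEEqFun.mk h.choose h.choose_spec.1.aestronglyMeasurable := dif_pos h
  have h2 := d.ae_of_nu ht (AEEqFun.coeFn_mk h.choose h.choose_spec.1.aestronglyMeasurable) j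
  rw [h1]
  exact Filter.EventuallyEq.trans h2 (h.choose_spec.2 j)

lemma Dat.nu_ext {G1 G2 : Ω →ₘ[d.nu t] ℝ} (h : ∀ j, G1 =ᵐ[d.N j] G2) : G1 = G2 := by
  apply AEEqFun.ext
  have hm : MeasurableSet {x | G1 x = G2 x} := measurableSet_eq_fun G1.measurable G2.measurable
  refine (Measure.ae_sum_iff' hm).2 fun j => ?_
  exact Measure.ae_smul_measure (h j) _

lemma Dat.Act_of_op {f g k : Ω →ₘ[μ] ℝ} {Φ : ℝ × ℝ → ℝ} (h0 : Φ (0, 0) = 0)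
    (hk : k =ᵐ[μ] fun x => Φ (f x, g x))
    (hf : (d.Act f).Countable) (hg : (d.Act g).Countable) : (d.Act k).Countable := by
  refine (hf.union hg).mono fun i hi => ?_
  by_contra hcon
  have h1 : f =ᵐ[μ.restrict (d.D i)] 0 := by
    by_contra h; exact hcon (Or.inl h)
  have h2 : g =ᵐ[μ.restrict (d.D i)] 0 := by
    by_contra h; exact hcon (Or.inr h)
  apply hi
  filter_upwards [h1, h2, ae_restrict_of_ae hk] with x a b c
  rw [c, a, b]; exact h0

lemma Dat.S_op (ht : ∀ j, 0 < t j) (f g k : Ω →ₘ[μ] ℝ) {Φ : ℝ × ℝ → ℝ} (hΦ : Measurable Φ)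
    (h0 : ∀ c a b, (∃ j, c = v j) → Φ (c * a, c * b) = c * Φ (a, b)) (h00 : Φ (0, 0) = 0)
    (hk : k =ᵐ[μ] fun x => Φ (f x, g x))
    (hf : (d.Act f).Countable) (hg : (d.Act g).Countable) (j) :
    d.S t v k =ᵐ[d.N j] fun x => Φ (d.S t v f x, d.S t v g x) := by
  have h1 := d.hTh j Φ hΦ f g k f.measurable g.measurable k.measurable (ae_restrict_of_ae hk)
  filter_upwards [h1, d.S_spec (v := v) ht (d.Act_of_op h00 hk hf hg) j, d.S_spec (v := v) ht hf j,
    d.S_spec (v := v) ht hg j] with x a b c e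
  rw [b, c, e, h0 _ _ _ ⟨j, rfl⟩, a]

lemma Dat.S_add (ht : ∀ j, 0 < t j) (f g : Ω →ₘ[μ] ℝ)
    (hf : (d.Act f).Countable) (hg : (d.Act g).Countable) :
    d.S t v (f + g) = d.S t v f + d.S t v g := by
  refine d.nu_ext fun j => ?_
  have h1 := d.S_op (v := v) ht f g (f + g) (Φ := fun z => z.1 + z.2) (by fun_prop) (fun c a b _ => by simp; ring)
    (by simp) (AEEqFun.coeFn_add f g) hf hg j
  filter_upwards [h1, d.ae_of_nu ht (AEEqFun.coeFn_add (d.S t v f) (d.S t v g)) j] with x a b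
  rw [a, b]; rfl

lemma Dat.S_smul (ht : ∀ j, 0 < t j) (c : ℝ) (f : Ω →ₘ[μ] ℝ)
    (hf : (d.Act f).Countable) :
    d.S t v (c • f) = c • d.S t v f := by
  refine d.nu_ext fun j => ?_
  have h1 := d.S_op (v := v) ht f f (c • f) (Φ := fun z => c * z.1) (by fun_prop) (fun c a b _ => by simp; ring)
    (by simp) (AEEqFun.coeFn_smul c f) hf hf j
  filter_upwards [h1, d.ae_of_nu ht (AEEqFun.coeFn_smul c (d.S t v f)) j] with x a b
  rw [a, b]; rfl

lemma Dat.S_sup (ht : ∀ j, 0 < t j) (hv : ∀ j, 0 < v j) (f g : Ω →ₘ[μ] ℝ)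
    (hf : (d.Act f).Countable) (hg : (d.Act g).Countable) :
    d.S t v (f ⊔ g) = d.S t v f ⊔ d.S t v g := by
  refine d.nu_ext fun j => ?_
  have h1 := d.S_op (v := v) ht f g (f ⊔ g) (Φ := fun z => z.1 ⊔ z.2) (by fun_prop)
    (fun c a b ⟨j, hj⟩ => by
      have : 0 ≤ c := by rw [hj]; exact (hv j).le
      exact (mul_max_of_nonneg _ _ this).symm)
    (by simp) (AEEqFun.coeFn_sup f g) hf hg j
  filter_upwards [h1, d.ae_of_nu ht (AEEqFun.coeFn_sup (d.S t v f) (d.S t v g)) j] with x a b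
  rw [a, b]

end Assembly


section Norms
universe u
variable {Ω : Type u} [MeasurableSpace Ω] {μ : Measure Ω} (d : Dat μ) {t v : d.I × ℕ → ℝ}

def Dat.G (t v : d.I × ℕ → ℝ) (i : d.I) (z : ℝ) : ℝ≥0∞ :=
  ∑' k, d.w (i, k) * ENNReal.ofReal (t (i, k) * (z * v (i, k) - 1))

lemma Dat.nu_lint (ψ : Ω → ℝ≥0∞) :
    ∫⁻ x, ψ x ∂(d.nu t) = ∑' j, ENNReal.ofReal (t j) * ∫⁻ x, ψ x ∂(d.N j) := by
  rw [Dat.nu, lintegral_sum_measure]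
  simp only [lintegral_smul_measure, smul_eq_mul]

lemma Dat.norm_formula {α c : ℝ} (hα : 0 < α) (hc : 0 < c) (ht : ∀ j, 0 < t j) (hv : ∀ j, 0 < v j)
    {f : Ω →ₘ[μ] ℝ} (hA : (d.Act f).Countable) :
    ∫⁻ x, ENNReal.ofReal (|d.S (fun j => α * t j) v f x| - c) ∂(d.nu fun j => α * t j) =
      ENNReal.ofReal (α * c) * ∑' i, ∫⁻ x in d.D i, d.G t v i (|f x| / c) ∂μ := by
  have hfm : Measurable (fun x => f x) := f.measurable
  have hj : ∀ j : d.I × ℕ, ENNReal.ofReal (α * t j) *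
      ∫⁻ x, ENNReal.ofReal (|d.S (fun j => α * t j) v f x| - c) ∂(d.N j) =
      ENNReal.ofReal (α * c) * ∫⁻ x in d.D j.1, d.w j * ENNReal.ofReal (t j * (|f x| / c * v j - 1)) ∂μ := by
    intro j
    have h1 : ∫⁻ x, ENNReal.ofReal (|d.S (fun j => α * t j) v f x| - c) ∂(d.N j) =
        ∫⁻ x, (fun y => ENNReal.ofReal (|v j * y| - c)) (d.Th j f x) ∂(d.N j) := by
      refine lintegral_congr_ae ?_
      filter_upwards [d.S_spec (t := fun j => α * t j) (v := v) (fun j => mul_pos hα (ht j)) hA j] with x hx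
      rw [hx]
    rw [h1, d.hThi j (fun y => ENNReal.ofReal (|v j * y| - c)) (by fun_prop) f f.measurable, ← lintegral_const_mul _ (by fun_prop),
      ← lintegral_const_mul _ (by fun_prop), ← lintegral_const_mul _ (by fun_prop)]
    refine lintegral_congr fun x => ?_
    rw [mul_left_comm, mul_left_comm (ENNReal.ofReal (α * c))]
    congr 1
    rw [← ENNReal.ofReal_mul (mul_pos hα (ht j)).le, ← ENNReal.ofReal_mul (mul_pos hα hc).le]
    congr 1
    rw [abs_mul, abs_of_pos (hv j)]
    field_simp
  rw [d.nu_lint, tsum_congr hj, ENNReal.tsum_mul_left]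
  congr 1
  rw [ENNReal.tsum_prod']
  refine tsum_congr fun i => ?_
  unfold Dat.G
  rw [lintegral_tsum]
  intro k
  fun_prop

lemma Dat.act_countable {f : Ω →ₘ[μ] ℝ} {p r s : ℝ} (hr : 1 ≤ r) (hrp : r < p) (hs : 0 < s)
    (H : ∀ x ∈ wrSet p r μ f, x ≤ s) : (d.Act f).Countable := by
  have hfm : Measurable (fun x => f x) := f.measurable
  have hB := (wrSet_iff hr hrp hs).1 H
  have h1 : ∀ n : ℕ, {i | ∫⁻ x in d.D i, ENNReal.ofReal (|f x|^r - 1/((n:ℝ)+1)) ∂μ ≠ 0}.Countable := by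
    intro n
    have := BdB.sum_le (hB (1/((n:ℝ)+1)) (by positivity)) d.hD d.hDt d.hDd
    exact Summable.countable_support_ennreal (ne_top_of_le_ne_top ENNReal.ofReal_ne_top this)
  refine (Set.countable_iUnion h1).mono fun i hi => ?_
  by_contra hcon
  apply hi
  have h2 : ∀ n : ℕ, ∀ᵐ x ∂(μ.restrict (d.D i)), |f x|^r ≤ 1/((n:ℝ)+1) := by
    intro n
    have h3 : ∫⁻ x in d.D i, ENNReal.ofReal (|f x|^r - 1/((n:ℝ)+1)) ∂μ = 0 := by
      by_contra h
      exact hcon (Set.mem_iUnion.2 ⟨n, h⟩)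
    rw [lintegral_eq_zero_iff (by fun_prop)] at h3
    filter_upwards [h3] with x hx
    have := ENNReal.ofReal_eq_zero.1 hx
    linarith
  filter_upwards [ae_all_iff.2 h2] with x hx
  have h3 : |f x|^r ≤ 0 := by
    refine le_of_forall_pos_lt_add fun ε hε => ?_
    obtain ⟨n, hn⟩ := exists_nat_one_div_lt hε
    linarith [hx n]
  by_contra hne
  have : 0 < |f x|^r := Real.rpow_pos_of_pos (abs_pos.2 hne) _
  linarith

lemma Dat.le_sum {ψ : Ω → ℝ≥0∞} {A : Set Ω} (hA : MeasurableSet A) (hAf : μ A < ⊤) :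
    ∫⁻ x in A, ψ x ∂μ ≤ ∑' i, ∫⁻ x in d.D i, ψ x ∂μ := by
  let C : Set d.I := {i | 0 < μ (A ∩ d.D i)}
  have hC : C.Countable := by
    refine Measure.countable_meas_pos_of_disjoint_of_meas_iUnion_ne_top₀ μ
      (fun i => (hA.inter (d.hD i)).nullMeasurableSet) ?_ ?_
    · intro i j hij
      exact measure_mono_null (Set.inter_subset_inter Set.inter_subset_right Set.inter_subset_right) (d.hDd hij)
    · exact ne_top_of_le_ne_top hAf.ne (measure_mono (Set.iUnion_subset fun i => Set.inter_subset_left))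
  have : Countable C := hC
  have h0 : μ (A \ ⋃ i : C, d.D i) = 0 := by
    refine d.cover _ (hA.diff (MeasurableSet.iUnion fun i => d.hD _))
      (ne_top_of_le_ne_top hAf.ne (measure_mono Set.sdiff_subset)) fun i => ?_
    by_cases hi : i ∈ C
    · have : (A \ ⋃ i : C, d.D i) ∩ d.D i = ∅ := by
        ext x
        simp only [Set.mem_inter_iff, Set.mem_empty_iff_false, iff_false]
        rintro ⟨h1, h2⟩
        exact h1.2 (Set.mem_iUnion.2 ⟨⟨i, hi⟩, h2⟩)
      rw [this, measure_empty]
    · have : μ (A ∩ d.D i) = 0 := by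
        by_contra h
        exact hi (pos_iff_ne_zero.2 h)
      exact measure_mono_null (Set.inter_subset_inter_left _ Set.sdiff_subset) this
  calc ∫⁻ x in A, ψ x ∂μ ≤ ∫⁻ x in ⋃ i : C, d.D i, ψ x ∂μ :=
        lintegral_mono' (Measure.restrict_mono' (by
          rw [ae_le_set]; exact h0) le_rfl) le_rfl
    _ ≤ ∑' i : C, ∫⁻ x in d.D i, ψ x ∂μ := lintegral_iUnion_le _ _
    _ ≤ ∑' i, ∫⁻ x in d.D i, ψ x ∂μ :=
        ENNReal.tsum_comp_le_tsum_of_injective Subtype.val_injective _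

lemma Dat.nu_full {C : ℝ≥0∞} {ψ : Ω → ℝ≥0∞} 
    (H : ∀ A, MeasurableSet A → d.nu t A < ⊤ → ∫⁻ x in A, ψ x ∂(d.nu t) ≤ C) :
    ∫⁻ x, ψ x ∂(d.nu t) ≤ C := by
  have hac : d.nu t ≪ μ := by
    refine Measure.absolutelyContinuous_sum_left fun j => ?_
    exact Measure.smul_absolutelyContinuous.trans (d.hNac j)
  have hNfin : ∀ j, d.N j Set.univ < ⊤ := by
    intro j
    have h := d.hThi j (fun _ => 1) measurable_const (fun _ => 0) measurable_const
    simp only [lintegral_const, one_mul, Measure.restrict_apply_univ] at h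
    rw [h]
    have hw : d.w j ≠ ⊤ := by
      obtain ⟨i, k⟩ := j
      by_cases hi : i ∈ d.sp
      · by_cases hk : k = 0
        · rw [hk, d.hw0 i hi]; exact ENNReal.one_ne_top
        · rw [d.hw1 i hi k hk]; exact ENNReal.zero_ne_top
      · rw [d.hw i hi k]; exact ENNReal.one_ne_top
    exact ENNReal.mul_lt_top hw.lt_top (d.hDt _)
  have hoff : ∀ j l, l ≠ j → d.N l (d.T j) = 0 := by
    intro j l hlj
    have h1 : d.T j ⊆ (d.T l)ᶜ ∪ (d.T l ∩ d.T j) := by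
      intro x hx
      by_cases h : x ∈ d.T l
      · exact Or.inr ⟨h, hx⟩
      · exact Or.inl h
    exact measure_mono_null h1 (measure_union_null (d.hNT l) (d.hNac l (d.hTd l j hlj)))
  have hfin : ∀ j, d.nu t (d.T j) < ⊤ := by
    intro j
    rw [Dat.nu, Measure.sum_apply _ (d.hT j), tsum_eq_single j]
    · rw [Measure.smul_apply, smul_eq_mul]
      exact ENNReal.mul_lt_top ENNReal.ofReal_lt_top ((measure_mono (Set.subset_univ _)).trans_lt (hNfin j))
    · intro l hl
      rw [Measure.smul_apply, hoff j l hl, smul_zero]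
  refine le_trans ?_ (BdB.sum_le H d.hT hfin (fun j j' h => hac (d.hTd j j' h)))
  conv_lhs => rw [Dat.nu, lintegral_sum_measure]
  refine ENNReal.tsum_le_tsum fun j => ?_
  have h1 : (ENNReal.ofReal (t j) • d.N j) ≤ d.nu t := Measure.le_sum _ j
  have h2 : ((ENNReal.ofReal (t j) • d.N j).restrict (d.T j)) = ENNReal.ofReal (t j) • d.N j := by
    refine Measure.restrict_eq_self_of_ae_mem ?_
    refine Measure.ae_smul_measure ?_ _
    filter_upwards [measure_eq_zero_iff_ae_notMem.1 (d.hNT j)] with x hx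
    simpa using hx
  rw [← h2]
  exact lintegral_mono' (Measure.restrict_mono le_rfl h1) le_rfl

lemma at_const {D : Set Ω} (hD : MeasurableSet D) (hat : IsAt μ D) {f : Ω → ℝ} (hf : Measurable f)
    (h0 : ∀ x, 0 ≤ f x) : ∃ z, 0 ≤ z ∧ ∀ᵐ x ∂(μ.restrict D), f x = z := by
  by_cases hD0 : μ D = 0
  · refine ⟨0, le_rfl, ?_⟩
    rw [Measure.restrict_eq_zero.2 hD0]; simp
  let U : Set ℝ := {a | ∀ᵐ x ∂(μ.restrict D), f x ≤ a}
  have hdich : ∀ a, a ∈ U ∨ ∀ᵐ x ∂(μ.restrict D), a < f x := by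
    intro a
    rcases hat {x | a < f x} (measurableSet_lt measurable_const hf) with h | h
    · left
      refine (ae_restrict_iff' hD).2 ?_
      filter_upwards [measure_eq_zero_iff_ae_notMem.1 h] with x hx hxD
      by_contra hcon
      exact hx ⟨hxD, not_le.1 hcon⟩
    · right
      refine (ae_restrict_iff' hD).2 ?_
      filter_upwards [measure_eq_zero_iff_ae_notMem.1 h] with x hx hxD
      by_contra hcon
      exact hx ⟨hxD, hcon⟩
  have hne : (ae (μ.restrict D)).NeBot := by
    rw [ae_neBot]; intro h; exact hD0 (Measure.restrict_eq_zero.1 h)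
  have hUne : U.Nonempty := by
    by_contra hcon
    have : ∀ n : ℕ, ∀ᵐ x ∂(μ.restrict D), (n:ℝ) < f x := fun n =>
      (hdich n).resolve_left fun h => hcon ⟨_, h⟩
    obtain ⟨x, hx⟩ := (ae_all_iff.2 this).exists
    obtain ⟨n, hn⟩ := exists_nat_gt (f x)
    linarith [hx n]
  have hlb : ∀ a ∈ U, 0 ≤ a := by
    intro a ha
    obtain ⟨x, hx⟩ := Filter.Eventually.exists (show ∀ᵐ x ∂(μ.restrict D), f x ≤ a from ha)
    exact (h0 x).trans hx
  have hbdd : BddBelow U := ⟨0, hlb⟩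
  refine ⟨sInf U, le_csInf hUne hlb, ?_⟩
  have h1 : ∀ n : ℕ, ∀ᵐ x ∂(μ.restrict D), f x ≤ sInf U + 1/((n:ℝ)+1) := by
    intro n
    obtain ⟨a, ha, hlt⟩ := exists_lt_of_csInf_lt hUne (show sInf U < sInf U + 1/((n:ℝ)+1) by
      have : 0 < 1/((n:ℝ)+1) := by positivity
      linarith)
    filter_upwards [ha] with x hx using hx.trans hlt.le
  have h2 : ∀ n : ℕ, ∀ᵐ x ∂(μ.restrict D), sInf U - 1/((n:ℝ)+1) < f x := by
    intro n
    refine (hdich _).resolve_left fun h => ?_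
    have := csInf_le hbdd h
    have : 0 < 1/((n:ℝ)+1) := by positivity
    linarith
  filter_upwards [ae_all_iff.2 h1, ae_all_iff.2 h2] with x a b
  apply le_antisymm
  · refine le_of_forall_pos_lt_add fun ε hε => ?_
    obtain ⟨n, hn⟩ := exists_nat_one_div_lt hε
    linarith [a n]
  · refine le_of_forall_pos_lt_add fun ε hε => ?_
    obtain ⟨n, hn⟩ := exists_nat_one_div_lt hε
    linarith [b n]

end Norms

section Final
universe u
variable {Ω : Type u} [MeasurableSpace Ω] {μ : Measure Ω} (d : Dat μ)

/-- Normalizing constant. -/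
def alY (p r : ℝ) : ℝ := kY p / kY (p/r)

lemma alY_pos {p r : ℝ} (hr : 1 < r) (hrp : r < p) : 0 < alY p r := by
  have hP : 1 < p/r := by rw [one_lt_div] <;> linarith
  exact div_pos (kY_pos (by linarith)) (kY_pos hP)

lemma Dat.contr {p r s : ℝ} (hr : 1 < r) (hrp : r < p) (hs : 0 < s) {t v : d.I × ℕ → ℝ}
    (ht : ∀ j, 0 < t j) (hv : ∀ j, 0 < v j)
    (hup : ∀ i z, 0 ≤ z → d.G t v i z ≤ ENNReal.ofReal (z^r-1)) {f : Ω →ₘ[μ] ℝ}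
    (H : ∀ x ∈ wrSet p r μ f, x ≤ s) :
    ∀ x ∈ w1Set p (d.nu fun j => alY p r * t j) (d.S (fun j => alY p r * t j) v f), x ≤ s := by
  have hα := alY_pos hr hrp
  have hr0 : 0 < r := by linarith
  have hP : 1 < p/r := by rw [one_lt_div] <;> linarith
  have hk := kY_pos hP
  have hA := d.act_countable hr.le hrp hs H
  have hB := (wrSet_iff hr.le hrp hs).1 H
  rw [w1Set_eq, wrSet_iff le_rfl (hr.trans hrp) hs]
  intro c hc A hAm hAf
  simp only [Real.rpow_one, div_one]
  refine (setLIntegral_le_lintegral A _).trans ?_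
  rw [d.norm_formula hα hc ht hv hA]
  have h1 : ∑' i, ∫⁻ x in d.D i, d.G t v i (|f x| / c) ∂μ ≤
      ENNReal.ofReal (c^(-r)) * ∑' i, ∫⁻ x in d.D i, ENNReal.ofReal (|f x|^r - c^r) ∂μ := by
    rw [← ENNReal.tsum_mul_left]
    refine ENNReal.tsum_le_tsum fun i => ?_
    rw [← lintegral_const_mul' _ _ ENNReal.ofReal_ne_top]
    refine lintegral_mono fun x => ?_
    refine (hup i _ (by positivity)).trans (le_of_eq ?_)
    rw [← ENNReal.ofReal_mul (by positivity)]
    congr 1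
    rw [Real.div_rpow (abs_nonneg _) hc.le, Real.rpow_neg hc.le]
    have : c^r ≠ 0 := by positivity
    field_simp
  have h2 := BdB.sum_le (hB (c^r) (by positivity)) d.hD d.hDt d.hDd
  refine (mul_le_mul_right (h1.trans (mul_le_mul_right h2 _)) _).trans (le_of_eq ?_)
  rw [← ENNReal.ofReal_mul (by positivity), ← ENNReal.ofReal_mul (by positivity)]
  congr 1
  rw [← Real.rpow_mul hs.le, ← Real.rpow_mul hc.le]
  have e1 : r * (p/r) = p := by field_simp
  have e2 : r * (1 - p/r) = r - p := by field_simp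
  have e3 : c^(1-p) = c * (c^(-r) * c^(r-p)) := by
    rw [← Real.rpow_add hc]
    nth_rewrite 2 [← Real.rpow_one c]
    rw [← Real.rpow_add hc]; congr 1; ring
  rw [e1, e2, e3, alY]
  field_simp

lemma Dat.lower {p r s Q : ℝ} (hr : 1 < r) (hrp : r < p) (hs : 0 < s) (hQ : 0 < Q) {f : Ω →ₘ[μ] ℝ}
    (hA : (d.Act f).Countable)
    (H : ∀ c, 0 < c → ∃ t v : d.I × ℕ → ℝ, (∀ j, 0 < t j) ∧ (∀ j, 0 < v j) ∧
      (∀ i, ∀ᵐ x ∂(μ.restrict (d.D i)), ENNReal.ofReal ((|f x|/c/Q)^r-1) ≤ d.G t v i (|f x|/c)) ∧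
      ∀ x ∈ w1Set p (d.nu fun j => alY p r * t j) (d.S (fun j => alY p r * t j) v f), x ≤ s) :
    ∀ x ∈ wrSet p r μ f, x ≤ Q * s := by
  have hα := alY_pos hr hrp
  have hr0 : 0 < r := by linarith
  have hP : 1 < p/r := by rw [one_lt_div] <;> linarith
  have hk := kY_pos hP
  have hkp := kY_pos (hr.trans hrp)
  rw [wrSet_iff hr.le hrp (by positivity)]
  intro δ hδ A hAm hAf
  obtain ⟨c, hc, hcδ⟩ : ∃ c : ℝ, 0 < c ∧ δ = (c*Q)^r := by
    refine ⟨δ^(1/r)/Q, by positivity, ?_⟩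
    rw [div_mul_cancel₀ _ hQ.ne', ← Real.rpow_mul hδ.le, one_div_mul_cancel hr0.ne', Real.rpow_one]
  obtain ⟨t, v, ht, hv, hG, hw⟩ := H c hc
  rw [w1Set_eq, wrSet_iff le_rfl (hr.trans hrp) hs] at hw
  have hw2 := d.nu_full (hw c hc)
  simp only [Real.rpow_one, div_one] at hw2
  rw [d.norm_formula hα hc ht hv hA] at hw2
  refine (d.le_sum hAm hAf).trans ?_
  have h1 : ∑' i, ∫⁻ x in d.D i, ENNReal.ofReal (|f x|^r - δ) ∂μ ≤
      ENNReal.ofReal (δ / (alY p r * c)) * (ENNReal.ofReal (alY p r * c) *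
        ∑' i, ∫⁻ x in d.D i, d.G t v i (|f x| / c) ∂μ) := by
    rw [← mul_assoc, ← ENNReal.ofReal_mul (by positivity), div_mul_cancel₀ _ (by positivity),
      ← ENNReal.tsum_mul_left]
    refine ENNReal.tsum_le_tsum fun i => ?_
    rw [← lintegral_const_mul' _ _ ENNReal.ofReal_ne_top]
    refine lintegral_mono_ae ?_
    filter_upwards [hG i] with x hx
    refine le_trans (le_of_eq ?_) (mul_le_mul_right hx _)
    rw [← ENNReal.ofReal_mul (by positivity)]
    congr 1
    rw [div_div, Real.div_rpow (abs_nonneg _) (by positivity), ← hcδ]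
    field_simp
  refine h1.trans ((mul_le_mul_right hw2 _).trans (le_of_eq ?_))
  rw [← ENNReal.ofReal_mul (by positivity)]
  congr 1
  rw [hcδ, ← Real.rpow_mul (by positivity), ← Real.rpow_mul (by positivity)]
  have e1 : r * (p/r) = p := by field_simp
  have e2 : r * (1 - p/r) = r - p := by field_simp
  rw [e1, e2, Real.rpow_sub (by positivity), Real.mul_rpow hQ.le hs.le, Real.mul_rpow hc.le hQ.le,
    Real.mul_rpow hc.le hQ.le, Real.rpow_sub hc, Real.rpow_one, alY]
  have : c^p ≠ 0 := by positivity
  have : Q^p ≠ 0 := by positivity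
  field_simp
  rw [← Real.rpow_add hQ]; congr 1; ring

lemma Dat.params {r : ℝ} (hr : 1 < r) (n : ℕ) (ζ : Fin d.sp.card → ℝ) :
    ∃ t v : d.I × ℕ → ℝ, (∀ j, 0 < t j) ∧ (∀ j, 0 < v j) ∧
      (∀ i z, 0 ≤ z → d.G t v i z ≤ ENNReal.ofReal (z^r-1)) ∧
      (∀ i ∉ d.sp, ∀ z, 0 ≤ z → ENNReal.ofReal ((z/(1+1/((n:ℝ)+1))^2)^r-1) ≤ d.G t v i z) ∧
      (∀ i (hi : i ∈ d.sp), 0 ≤ ζ (d.sp.equivFin ⟨i, hi⟩) →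
        ENNReal.ofReal (ζ (d.sp.equivFin ⟨i, hi⟩)^r-1) ≤ d.G t v i (ζ (d.sp.equivFin ⟨i, hi⟩))) := by
  classical
  have hq : (1:ℝ) < 1+1/((n:ℝ)+1) := by
    have : (0:ℝ) < 1/((n:ℝ)+1) := by positivity
    linarith
  obtain ⟨m, u, hm, hu, hmu⟩ := pl_exists hr hq
  choose T V hT hV h1 h2 using tan_exists hr
  let e : ∀ i, i ∈ d.sp → ℝ := fun i hi => ζ (d.sp.equivFin ⟨i, hi⟩)
  let t : d.I × ℕ → ℝ := fun j => if h : j.1 ∈ d.sp then T (e j.1 h) else m j.2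
  let v : d.I × ℕ → ℝ := fun j => if h : j.1 ∈ d.sp then V (e j.1 h) else u j.2
  have Gs : ∀ i (hi : i ∈ d.sp) z, d.G t v i z = ENNReal.ofReal (T (e i hi) * (z * V (e i hi) - 1)) := by
    intro i hi z
    unfold Dat.G
    rw [tsum_eq_single 0]
    · simp [t, v, hi, d.hw0 i hi]
    · intro k hk
      rw [d.hw1 i hi k hk, zero_mul]
  have Gn : ∀ i ∉ d.sp, ∀ z, d.G t v i z = ∑' k, ENNReal.ofReal (m k * (z * u k - 1)) := by
    intro i hi z
    unfold Dat.G
    simp [t, v, hi, d.hw i hi]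
  refine ⟨t, v, ?_, ?_, ?_, ?_, ?_⟩
  · intro j
    by_cases h : j.1 ∈ d.sp
    · simp only [t, h, dite_true]; exact hT _
    · simp only [t, h, dite_false]; exact hm _
  · intro j
    by_cases h : j.1 ∈ d.sp
    · simp only [v, h, dite_true]; exact hV _
    · simp only [v, h, dite_false]; exact hu _
  · intro i z hz
    by_cases h : i ∈ d.sp
    · rw [Gs i h]; exact h1 _ z hz
    · rw [Gn i h]; exact (hmu z hz).2
  · intro i hi z hz
    rw [Gn i hi]; exact (hmu z hz).1
  · intro i hi hz
    rw [Gs i hi]; exact h2 _ hz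

end Final

theorem statement17 {Ω : Type*} [MeasurableSpace Ω] (μ : Measure Ω) (p r : ℝ)
    (hr : 1 < r) (hrp : r < p) :
    ∃ (Γ : Type) (ν : Γ → Measure Ω)
      (S : ∀ γ : Γ, (Ω →ₘ[μ] ℝ) → (Ω →ₘ[ν γ] ℝ)),
      -- each S_γ is a vector lattice homomorphism on L^{p,∞}_r(μ)
      (∀ γ, ∀ f g : Ω →ₘ[μ] ℝ, BddAbove (wrSet p r μ f) → BddAbove (wrSet p r μ g) →
        S γ (f + g) = S γ f + S γ g) ∧
      (∀ γ, ∀ (c : ℝ) (f : Ω →ₘ[μ] ℝ), BddAbove (wrSet p r μ f) →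
        S γ (c • f) = c • S γ f) ∧
      (∀ γ, ∀ f g : Ω →ₘ[μ] ℝ, BddAbove (wrSet p r μ f) → BddAbove (wrSet p r μ g) →
        S γ (f ⊔ g) = S γ f ⊔ S γ g) ∧
      -- each S_γ is contractive
      (∀ γ, ∀ f : Ω →ₘ[μ] ℝ, BddAbove (wrSet p r μ f) →
        BddAbove (w1Set p (ν γ) (S γ f)) ∧
          sSup (w1Set p (ν γ) (S γ f)) ≤ sSup (wrSet p r μ f)) ∧
      -- the embedding is a lattice isometry
      (∀ f : Ω →ₘ[μ] ℝ, BddAbove (wrSet p r μ f) →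
        sSup {t : ℝ | ∃ γ, t = sSup (w1Set p (ν γ) (S γ f))} = sSup (wrSet p r μ f)) := by
  classical
  obtain ⟨d⟩ := exists_dat μ
  have hα := alY_pos hr hrp
  have hpar := fun γ : ℕ × (Fin d.sp.card → ℝ) => d.params hr γ.1 γ.2
  choose t v ht hv hup hlo hls using hpar
  have ht' : ∀ γ j, 0 < alY p r * t γ j := fun γ j => mul_pos hα (ht γ j)
  have hact : ∀ f : Ω →ₘ[μ] ℝ, BddAbove (wrSet p r μ f) → (d.Act f).Countable := by
    rintro f ⟨b, hb⟩
    exact d.act_countable (s := max b 1) hr.le hrp (by positivity) fun x hx => (hb hx).trans (le_max_left _ _)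
  have hcon : ∀ γ, ∀ f : Ω →ₘ[μ] ℝ, BddAbove (wrSet p r μ f) →
      ∀ x ∈ w1Set p (d.nu fun j => alY p r * t γ j) (d.S (fun j => alY p r * t γ j) (v γ) f),
        x ≤ sSup (wrSet p r μ f) := by
    intro γ f hf x hx
    have h0 : 0 ≤ sSup (wrSet p r μ f) := Real.sSup_nonneg wrSet_nonneg
    refine le_of_forall_pos_le_add fun ε hε => ?_
    exact d.contr hr hrp (by positivity) (ht γ) (hv γ) (hup γ)
      (fun y hy => (le_csSup hf hy).trans (by linarith)) x hx
  have hcs : ∀ γ, ∀ f : Ω →ₘ[μ] ℝ, BddAbove (wrSet p r μ f) →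
      sSup (w1Set p (d.nu fun j => alY p r * t γ j) (d.S (fun j => alY p r * t γ j) (v γ) f)) ≤
        sSup (wrSet p r μ f) := fun γ f hf =>
    Real.sSup_le (hcon γ f hf) (Real.sSup_nonneg wrSet_nonneg)
  refine ⟨ℕ × (Fin d.sp.card → ℝ), fun γ => d.nu fun j => alY p r * t γ j,
    fun γ => d.S (fun j => alY p r * t γ j) (v γ), ?_, ?_, ?_, ?_, ?_⟩
  · exact fun γ f g hf hg => d.S_add (ht' γ) f g (hact f hf) (hact g hg)
  · exact fun γ c f hf => d.S_smul (ht' γ) c f (hact f hf)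
  · exact fun γ f g hf hg => d.S_sup (ht' γ) (hv γ) f g (hact f hf) (hact g hg)
  · exact fun γ f hf => ⟨⟨_, hcon γ f hf⟩, hcs γ f hf⟩
  intro f hf
  set U : Set ℝ := {y : ℝ | ∃ γ, y = sSup (w1Set p (d.nu fun j => alY p r * t γ j)
    (d.S (fun j => alY p r * t γ j) (v γ) f))} with hU
  have hUb : ∀ y ∈ U, y ≤ sSup (wrSet p r μ f) := by
    rintro y ⟨γ, rfl⟩; exact hcs γ f hf
  have hU0 : 0 ≤ sSup U := by
    refine Real.sSup_nonneg ?_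
    rintro y ⟨γ, rfl⟩
    refine Real.sSup_nonneg ?_
    rw [w1Set_eq]; exact wrSet_nonneg
  refine le_antisymm (Real.sSup_le hUb (Real.sSup_nonneg wrSet_nonneg)) (Real.sSup_le (fun x hx => ?_) hU0)
  refine le_of_forall_pos_le_add fun ε hε => ?_
  have key : ∀ n : ℕ, x ≤ (1+1/((n:ℝ)+1))^2 * (sSup U + ε) := by
    intro n
    refine d.lower hr hrp (by positivity) (by positivity) (hact f hf) (fun c hc => ?_) x hx
    have hz : ∀ i : d.sp, ∃ z, 0 ≤ z ∧ ∀ᵐ x ∂(μ.restrict (d.D i)), |f x| = z := fun i =>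
      at_const (d.hD i) (d.hat i i.2) f.measurable.abs (fun x => abs_nonneg _)
    choose z hz0 hz using hz
    let γ : ℕ × (Fin d.sp.card → ℝ) := (n, fun k => z (d.sp.equivFin.symm k) / c)
    refine ⟨t γ, v γ, ht γ, hv γ, fun i => ?_, fun y hy => ?_⟩
    · by_cases hi : i ∈ d.sp
      · have hg : γ.2 (d.sp.equivFin ⟨i, hi⟩) = z ⟨i, hi⟩ / c := by simp [γ]
        have h1 := hls γ i hi
        rw [hg] at h1
        have hzz := hz0 ⟨i, hi⟩
        have h2 := h1 (by positivity)
        filter_upwards [hz ⟨i, hi⟩] with x hx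
        rw [hx]
        refine le_trans (ENNReal.ofReal_le_ofReal ?_) h2
        refine sub_le_sub_right (Real.rpow_le_rpow (by positivity) ?_ (by linarith)) 1
        refine div_le_self (by positivity) (one_le_pow₀ ?_)
        have : (0:ℝ) < 1/((n:ℝ)+1) := by positivity
        linarith
      · exact Filter.Eventually.of_forall fun x => hlo γ i hi _ (by positivity)
    · have h1 := le_csSup ⟨_, hcon γ f hf⟩ hy
      have h2 : _ ≤ sSup U := le_csSup ⟨_, hUb⟩ ⟨γ, rfl⟩
      linarith
  have hlim : Filter.Tendsto (fun n : ℕ => (1+1/((n:ℝ)+1))^2 * (sSup U + ε)) Filter.atTop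
      (nhds ((1+0)^2 * (sSup U + ε))) :=
    ((tendsto_one_div_add_atTop_nhds_zero_nat.const_add 1).pow 2).mul_const _
  have := ge_of_tendsto' hlim key
  simpa using this
end
end

section
/- Let 1 ≤ p < ∞, let Γ be an index set with measure spaces (Ω_γ, Σ_γ, μ_γ) for γ ∈ Γ, and let Z = (⊕_{γ∈Γ} L^p(μ_γ))_∞ be the Banach lattice of families z = (z_γ)_{γ∈Γ}, z_γ ∈ L^p(μ_γ), with ‖z‖ = sup_γ ‖z_γ‖_{L^p(μ_γ)} < ∞ and coordinatewise (a.e. pointwise) order. Let 0 < c ≤ 1 and let (x_n)_{n∈ℕ} be a sequence of pairwise disjoint positive elements of Z such that c·‖(a_n)‖_{ℓ^p} < ‖Σ_n a_n x_n‖ ≤ ‖(a_n)‖_{ℓ^p} for every nonzero (a_n) ∈ ℓ^p. Then there exists a positive bounded linear projection P from Z onto the closed linear span of (x_n) with ‖P‖ ≤ c^{−p}. In particular, the closed span of a disjoint positive sequence equivalent to the unit vector basis of ℓ^p in Z is the range of a positive projection. -/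
/-- A bundled measure space. -/
structure MeasSp where
  carrier : Type
  [mble : MeasurableSpace carrier]
  meas : MeasureTheory.Measure carrier

attribute [instance] MeasSp.mble

open MeasureTheory
open scoped ENNReal

noncomputable section

lemma aux_young (p : ℝ) (hp : 1 ≤ p) (z y : ℝ) (hz : 0 ≤ z) (hy : 0 ≤ y) :
    p * (z * y ^ (p - 1)) ≤ z ^ p + (p - 1) * y ^ p := by
  have hp0 : 0 < p := by linarith
  have h := Real.geom_mean_le_arith_mean2_weighted (w₁ := 1 / p) (w₂ := 1 - 1 / p)
    (p₁ := z ^ p) (p₂ := y ^ p) (by positivity)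
    (by rw [sub_nonneg, div_le_one hp0]; exact hp) (by positivity) (by positivity) (by ring)
  rw [← Real.rpow_mul hz, ← Real.rpow_mul hy] at h
  have e1 : p * (1 / p) = 1 := by field_simp
  have e2 : p * (1 - 1 / p) = p - 1 := by field_simp
  rw [e1, e2, Real.rpow_one] at h
  have h2 := mul_le_mul_of_nonneg_left h hp0.le
  calc _ ≤ _ := h2
    _ = (p * (1 / p)) * z ^ p + (p * (1 - 1 / p)) * y ^ p := by ring
    _ = _ := by rw [e1, e2]; ring

section LpPart
variable {α : Type*} [MeasurableSpace α] {μ : Measure α} {p : ℝ}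

lemma aux_int (hp : 1 ≤ p) (f : Lp ℝ (ENNReal.ofReal p) μ) :
    Integrable (fun a => |f a| ^ p) μ := by
  have h := (Lp.memLp f).integrable_norm_rpow (by simpa using by linarith) ENNReal.ofReal_ne_top
  rw [ENNReal.toReal_ofReal (by linarith)] at h
  simpa using h

lemma aux_norm (hp : 1 ≤ p) (f : Lp ℝ (ENNReal.ofReal p) μ) :
    ‖f‖ ^ p = ∫ a, |f a| ^ p ∂μ := by
  have hp0 : 0 < p := by linarith
  rw [Lp.norm_def, (Lp.memLp f).eLpNorm_eq_integral_rpow_norm (by simpa using hp0)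
    ENNReal.ofReal_ne_top, ENNReal.toReal_ofReal hp0.le]
  have h0 : 0 ≤ ∫ a, |f a| ^ p ∂μ := integral_nonneg fun a => by positivity
  simp only [Real.norm_eq_abs]
  rw [ENNReal.toReal_ofReal (by positivity), ← Real.rpow_mul h0, inv_mul_cancel₀ hp0.ne',
    Real.rpow_one]

lemma aux_coeFn_sum (x : ℕ → Lp ℝ (ENNReal.ofReal p) μ) (s : Finset ℕ) (a : ℕ → ℝ) :
    ∀ᵐ w ∂μ, (∑ n ∈ s, a n • x n : Lp ℝ (ENNReal.ofReal p) μ) w = ∑ n ∈ s, a n * x n w := by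
  classical
  induction s using Finset.induction_on with
  | empty => 
    filter_upwards [Lp.coeFn_zero ℝ (ENNReal.ofReal p) μ] with w hw
    simpa using hw
  | insert n s hn ih =>
    rw [Finset.sum_insert hn]
    filter_upwards [ih, Lp.coeFn_add (a n • x n) (∑ n ∈ s, a n • x n),
      Lp.coeFn_smul (a n) (x n)] with w h1 h2 h3
    rw [h2, Finset.sum_insert hn, Pi.add_apply, h1, h3]; rfl

lemma aux_ae (x : ℕ → Lp ℝ (ENNReal.ofReal p) μ) (hpos : ∀ n, 0 ≤ x n)
    (hdisj : ∀ n m : ℕ, n ≠ m → |x n| ⊓ |x m| = 0) :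
    ∀ᵐ w ∂μ, (∀ n, 0 ≤ x n w) ∧ ∀ n m, n ≠ m → x n w = 0 ∨ x m w = 0 := by
  refine Filter.Eventually.and ?_ ?_
  · rw [ae_all_iff]
    exact fun n => (Lp.coeFn_nonneg (x n)).2 (hpos n)
  · rw [ae_all_iff]; intro n
    rw [ae_all_iff]; intro m
    by_cases h : n = m
    · simp [h]
    filter_upwards [Lp.coeFn_inf |x n| |x m|, Lp.coeFn_abs (x n), Lp.coeFn_abs (x m),
      Lp.coeFn_zero ℝ (ENNReal.ofReal p) μ] with w h1 h2 h3 h4 _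
    rw [hdisj n m h, h4, Pi.inf_apply, h2, h3] at h1
    simp only [Pi.zero_apply] at h1
    rcases min_choice |x n w| |x m w| with h5 | h5
    · left; have := h1.trans h5; exact abs_eq_zero.1 this.symm
    · right; have := h1.trans h5; exact abs_eq_zero.1 this.symm

lemma aux_sum_pt (hp : 1 ≤ p) (y a : ℕ → ℝ) (hy : ∀ n m, n ≠ m → y n = 0 ∨ y m = 0)
    (s : Finset ℕ) : |∑ n ∈ s, a n * y n| ^ p = ∑ n ∈ s, |a n| ^ p * |y n| ^ p := by
  have hp0 : p ≠ 0 := by linarith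
  by_cases h : ∃ k ∈ s, y k ≠ 0
  · obtain ⟨k, hk, hyk⟩ := h
    have h0 : ∀ m, m ≠ k → y m = 0 := fun m hm => (hy m k hm).resolve_right hyk
    rw [Finset.sum_eq_single_of_mem k hk (fun m _ hm => by simp [h0 m hm]),
      Finset.sum_eq_single_of_mem k hk
        (fun m _ hm => by simp [h0 m hm, Real.zero_rpow hp0]),
      abs_mul, Real.mul_rpow (abs_nonneg _) (abs_nonneg _)]
  · push Not at h
    rw [Finset.sum_eq_zero (fun n hn => by simp [h n hn]),
      Finset.sum_eq_zero (fun n hn => by simp [h n hn, Real.zero_rpow hp0])]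
    simp [Real.zero_rpow hp0]

lemma aux_norm_sum (hp : 1 ≤ p) (x : ℕ → Lp ℝ (ENNReal.ofReal p) μ) (hpos : ∀ n, 0 ≤ x n)
    (hdisj : ∀ n m : ℕ, n ≠ m → |x n| ⊓ |x m| = 0) (s : Finset ℕ) (a : ℕ → ℝ) :
    ‖∑ n ∈ s, a n • x n‖ ^ p = ∑ n ∈ s, |a n| ^ p * ‖x n‖ ^ p := by
  rw [aux_norm hp]
  simp_rw [aux_norm hp (x _), ← integral_const_mul]
  rw [← integral_finsetSum _ (fun n _ => (aux_int hp (x n)).const_mul _)]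
  apply integral_congr_ae
  filter_upwards [aux_coeFn_sum x s a, aux_ae x hpos hdisj] with w h1 h2
  rw [h1]
  exact aux_sum_pt hp (fun n => x n w) a h2.2 s

/-- the density of the functional -/
def auxG (p : ℝ) (t : ℝ) : ℝ := if 0 < t then t ^ (p - 1) else 0

lemma auxG_nonneg (t : ℝ) : 0 ≤ auxG p t := by
  unfold auxG; split_ifs <;> positivity

lemma auxG_meas : Measurable (auxG p) :=
  Measurable.ite measurableSet_Ioi (by fun_prop) measurable_const

/-- Young with indicator -/
lemma auxG_young (hp : 1 ≤ p) (z t x : ℝ) (hz : 0 ≤ z) (ht : 0 ≤ t) :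
    p * t ^ (p - 1) * (z * auxG p x) ≤
      (if 0 < x then z ^ p else 0) + (p - 1) * t ^ p * |x| ^ p := by
  unfold auxG
  split_ifs with h
  · have := aux_young p hp z (t * x) hz (by positivity)
    rw [Real.mul_rpow ht h.le, Real.mul_rpow ht h.le] at this
    rw [abs_of_pos h]; linarith
  · simp only [mul_zero, zero_add]
    have : 0 ≤ p - 1 := by linarith
    positivity

lemma auxG_int (hp : 1 ≤ p) (x z : Lp ℝ (ENNReal.ofReal p) μ) :
    Integrable (fun w => z w * auxG p (x w)) μ := by
  refine Integrable.mono' ((aux_int hp z).add ((aux_int hp x).const_mul (p - 1))) ?_ ?_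
  · exact (Lp.aestronglyMeasurable z).mul
      (auxG_meas.comp_aemeasurable (Lp.aestronglyMeasurable x).aemeasurable).aestronglyMeasurable
  · refine Filter.Eventually.of_forall fun w => ?_
    have h := auxG_young hp |z w| 1 (x w) (abs_nonneg _) zero_le_one
    simp only [Real.one_rpow, mul_one] at h
    have h0 : 0 ≤ |z w| * auxG p (x w) := mul_nonneg (abs_nonneg _) (auxG_nonneg _)
    have h3 : (if 0 < x w then |z w| ^ p else 0) ≤ |z w| ^ p := by
      split_ifs <;> first | exact le_rfl | positivity
    rw [norm_mul, Real.norm_eq_abs, Real.norm_eq_abs, abs_of_nonneg (auxG_nonneg _)]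
    simp only [Pi.add_apply]
    nlinarith

lemma lp_part (hp : 1 ≤ p) (x : ℕ → Lp ℝ (ENNReal.ofReal p) μ) (hpos : ∀ n, 0 ≤ x n)
    (hdisj : ∀ n m : ℕ, n ≠ m → |x n| ⊓ |x m| = 0) :
    ∃ (φ : ℕ → Lp ℝ (ENNReal.ofReal p) μ →ₗ[ℝ] ℝ) (ψ : ℕ → Lp ℝ (ENNReal.ofReal p) μ → ℝ),
      (∀ n z, 0 ≤ z → 0 ≤ φ n z) ∧ (∀ n, φ n (x n) = ‖x n‖ ^ p) ∧
      (∀ n m, n ≠ m → φ n (x m) = 0) ∧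
      (∀ n z t, 0 ≤ t → p * t ^ (p - 1) * |φ n z| ≤ ψ n z + (p - 1) * t ^ p * ‖x n‖ ^ p) ∧
      (∀ (s : Finset ℕ) z, ∑ n ∈ s, ψ n z ≤ ‖z‖ ^ p) := by
  have hp0 : 0 < p := by linarith
  have hψint : ∀ n (z : Lp ℝ (ENNReal.ofReal p) μ),
      Integrable (fun w => if 0 < x n w then |z w| ^ p else 0) μ := by
    intro n z
    refine Integrable.mono' (aux_int hp z) ?_ ?_
    · have hm : Measurable (fun q : ℝ × ℝ => if 0 < q.1 then |q.2| ^ p else 0) :=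
        Measurable.ite (measurableSet_lt measurable_const measurable_fst) (by fun_prop)
          measurable_const
      exact (hm.comp_aemeasurable ((Lp.aestronglyMeasurable (x n)).aemeasurable.prodMk
        (Lp.aestronglyMeasurable z).aemeasurable)).aestronglyMeasurable
    · refine Filter.Eventually.of_forall fun w => ?_
      split_ifs
      · rw [Real.norm_eq_abs, abs_of_nonneg (by positivity)]
      · simp only [norm_zero]; positivity
  refine ⟨fun n =>
    { toFun := fun z => ∫ w, z w * auxG p (x n w) ∂μ
      map_add' := ?_
      map_smul' := ?_ }, fun n z => ∫ w, (if 0 < x n w then |z w| ^ p else 0) ∂μ,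
      ?_, ?_, ?_, ?_, ?_⟩
  · intro y z
    rw [← integral_add (auxG_int hp _ _) (auxG_int hp _ _)]
    apply integral_congr_ae
    filter_upwards [Lp.coeFn_add y z] with w hw
    rw [hw, Pi.add_apply, add_mul]
  · intro r z
    simp only [RingHom.id_apply, smul_eq_mul]
    rw [← integral_const_mul]
    apply integral_congr_ae
    filter_upwards [Lp.coeFn_smul r z] with w hw
    rw [hw, Pi.smul_apply, smul_eq_mul, mul_assoc]
  · intro n z hz
    apply integral_nonneg_of_ae
    filter_upwards [(Lp.coeFn_nonneg z).2 hz] with w hw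
    exact mul_nonneg hw (auxG_nonneg _)
  · intro n
    simp only [LinearMap.coe_mk, AddHom.coe_mk]
    rw [aux_norm hp]
    apply integral_congr_ae
    filter_upwards [aux_ae x hpos hdisj] with w hw
    rcases (hw.1 n).eq_or_lt with h | h
    · simp [← h, Real.zero_rpow hp0.ne']
    · simp only [auxG, if_pos h, abs_of_pos h]
      rw [← Real.rpow_one_add' h.le (by linarith)]
      congr 1; ring
  · intro n m hnm
    simp only [LinearMap.coe_mk, AddHom.coe_mk]
    refine integral_eq_zero_of_ae ?_
    filter_upwards [aux_ae x hpos hdisj] with w hw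
    rcases hw.2 n m hnm with h | h
    · simp [h, auxG]
    · simp [h]
  · intro n z t ht
    simp only [LinearMap.coe_mk, AddHom.coe_mk]
    have h1 : |∫ w, z w * auxG p (x n w) ∂μ| ≤ ∫ w, |z w| * auxG p (x n w) ∂μ := by
      refine abs_integral_le_integral_abs.trans (le_of_eq ?_)
      simp_rw [abs_mul, abs_of_nonneg (auxG_nonneg _)]
    have hi : Integrable (fun w => |z w| * auxG p (x n w)) μ := by
      have := (auxG_int hp (x n) z).abs
      simpa only [abs_mul, abs_of_nonneg (auxG_nonneg _)] using this
    refine (mul_le_mul_of_nonneg_left h1 (by positivity)).trans ?_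
    rw [aux_norm hp, ← integral_const_mul, ← integral_const_mul,
      ← integral_add (hψint n z) ((aux_int hp _).const_mul _)]
    refine integral_mono (hi.const_mul _) ((hψint n z).add ((aux_int hp _).const_mul _)) ?_
    intro w
    exact auxG_young hp |z w| t (x n w) (abs_nonneg _) ht
  · intro s z
    rw [← integral_finsetSum _ (fun n _ => hψint n z), aux_norm hp]
    refine integral_mono_ae (integrable_finsetSum _ (fun n _ => hψint n z)) (aux_int hp z) ?_
    filter_upwards [aux_ae x hpos hdisj] with w hw
    by_cases h : ∃ k ∈ s, 0 < x k w
    · obtain ⟨k, hk, hxk⟩ := h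
      rw [Finset.sum_eq_single_of_mem k hk, if_pos hxk]
      intro m _ hm
      rw [if_neg]
      rw [(hw.2 m k hm).resolve_right hxk.ne']
      exact lt_irrefl _
    · push Not at h
      rw [Finset.sum_eq_zero (fun n hn => if_neg (not_lt.2 (h n hn)))]
      positivity

end LpPart

lemma aux_minimax {Γ : Type*} [Nonempty Γ] (s : Finset ℕ) (w : Γ → ℕ → ℝ) (d : ℝ)
    (h : ∀ b : ℕ → ℝ, (∀ n, 0 ≤ b n) → (∃ n ∈ s, b n ≠ 0) →
      ∃ γ, d * ∑ n ∈ s, b n < ∑ n ∈ s, b n * w γ n) :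
    ∃ (t : Finset Γ) (l : Γ → ℝ), (∀ i ∈ t, 0 ≤ l i) ∧ ∑ i ∈ t, l i = 1 ∧
      ∀ n ∈ s, d < ∑ i ∈ t, l i * w i n := by
  classical
  set v : Γ → (s → ℝ) := fun γ n => w γ n with hv
  set U : Set (s → ℝ) := Set.pi Set.univ (fun _ => Set.Ioi d) with hU
  set T : Set (s → ℝ) := {u | ∃ (t : Finset Γ) (l : Γ → ℝ), (∀ i ∈ t, 0 ≤ l i) ∧
    ∑ i ∈ t, l i = 1 ∧ ∑ i ∈ t, l i • v i = u} with hT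
  have hTh : T = convexHull ℝ (Set.range v) := by
    rw [convexHull_range_eq_exists_affineCombination]
    ext u
    constructor
    · rintro ⟨t, l, h1, h2, h3⟩
      refine ⟨t, l, h1, h2, ?_⟩
      rw [Finset.affineCombination_eq_linear_combination _ _ _ h2, h3]
    · rintro ⟨t, l, h1, h2, h3⟩
      refine ⟨t, l, h1, h2, ?_⟩
      rw [← h3, Finset.affineCombination_eq_linear_combination _ _ _ h2]
  by_contra hcon
  have hd : Disjoint U T := by
    rw [Set.disjoint_left]
    rintro u hu ⟨t, l, h1, h2, h3⟩
    apply hcon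
    refine ⟨t, l, h1, h2, fun n hn => ?_⟩
    have := hu ⟨n, hn⟩ (Set.mem_univ _)
    rw [← h3] at this
    simpa [hv] using this
  obtain ⟨f, a, hfU, hfT⟩ := geometric_hahn_banach_open
    (convex_pi fun _ _ => convex_Ioi d) (isOpen_set_pi Set.finite_univ fun _ _ => isOpen_Ioi)
    (hTh ▸ convex_convexHull ℝ _) hd
  have hfe : ∀ u : s → ℝ, f u = ∑ n, u n * f (Pi.single n 1) := by
    intro u
    conv_lhs => rw [pi_eq_sum_univ' u]
    rw [map_sum]
    refine Finset.sum_congr rfl fun n _ => ?_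
    rw [map_smul, smul_eq_mul]
  have hneg : ∀ n, f (Pi.single n 1) ≤ 0 := by
    intro n
    by_contra hn
    push Not at hn
    set C := f (fun _ => d + 1) with hC
    have : ∀ K : ℝ, 0 ≤ K → C + K * f (Pi.single n 1) < a := by
      intro K hK
      have := hfU ((fun _ => d + 1) + K • Pi.single n 1) (by
        intro m _
        have : 0 ≤ (Pi.single n (1:ℝ) : s → ℝ) m := by
          rw [Pi.single_apply]; split_ifs <;> norm_num
        simp only [Pi.add_apply, Pi.smul_apply, smul_eq_mul, Set.mem_Ioi]
        have := mul_nonneg hK this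
        linarith)
      rwa [map_add, map_smul, smul_eq_mul] at this
    have h1 := this (|a - C| / f (Pi.single n 1)) (by positivity)
    rw [div_mul_cancel₀ _ hn.ne'] at h1
    linarith [le_abs_self (a - C)]
  have hvT : ∀ γ, a ≤ f (v γ) := fun γ => hfT _ (hTh ▸ subset_convexHull ℝ _ ⟨γ, rfl⟩)
  have hda : f (fun _ => d) ≤ a := by
    have hcont : Filter.Tendsto (fun k : ℝ => f (fun _ => d + k)) (nhdsWithin 0 (Set.Ioi 0))
        (nhds (f (fun _ => d))) := by
      have : Continuous (fun k : ℝ => f (fun _ => d + k)) := by fun_prop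
      have h2 := this.tendsto 0
      simp only [add_zero] at h2
      exact h2.mono_left nhdsWithin_le_nhds
    refine le_of_tendsto hcont ?_
    filter_upwards [self_mem_nhdsWithin] with k hk
    refine (hfU _ ?_).le
    intro m _
    simpa using hk
  set b : ℕ → ℝ := fun n => if hn : n ∈ s then - f (Pi.single ⟨n, hn⟩ 1) else 0 with hb
  have hbs : ∀ n : s, b n = - f (Pi.single n 1) := by
    intro n; simp [hb]
  have hb0 : ∀ n, 0 ≤ b n := by
    intro n; simp only [hb]; split_ifs
    · linarith [hneg ⟨n, ‹_›⟩]
    · exact le_rfl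
  have hfb : ∀ u : ℕ → ℝ, f (fun n : s => u n) = - ∑ n ∈ s, b n * u n := by
    intro u
    rw [hfe, ← Finset.sum_coe_sort s, ← Finset.sum_neg_distrib]
    refine Finset.sum_congr rfl fun n _ => ?_
    rw [hbs]; ring
  by_cases hne : ∃ n ∈ s, b n ≠ 0
  · obtain ⟨γ, hγ⟩ := h b hb0 hne
    have h1 := hvT γ
    rw [hv, hfb (w γ)] at h1
    rw [hfb (fun _ => d), ← Finset.sum_mul] at hda
    linarith
  · push Not at hne
    have hz : ∀ u : ℕ → ℝ, f (fun n : s => u n) = 0 := by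
      intro u
      rw [hfb, Finset.sum_eq_zero fun n hn => by rw [hne n hn, zero_mul], neg_zero]
    obtain ⟨γ⟩ := ‹Nonempty Γ›
    have h1 := hvT γ
    have h2 := hfU (fun _ => d + 1) (by intro m _; simp)
    rw [hv, hz (w γ)] at h1
    rw [hz (fun _ => d + 1)] at h2
    linarith

section Zpart
variable {p : ℝ} [Fact (1 ≤ ENNReal.ofReal p)] {Γ : Type*} {M : Γ → MeasSp} {c : ℝ}

/-- the sup-sum -/
abbrev ZZ (p : ℝ) [Fact (1 ≤ ENNReal.ofReal p)] {Γ : Type*} (M : Γ → MeasSp) :=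
  lp (fun γ : Γ => Lp ℝ (ENNReal.ofReal p) (M γ).meas) ∞

lemma aux_apply_sum (x : ℕ → ZZ p M) (s : Finset ℕ) (a : ℕ → ℝ) (γ : Γ) :
    (∑ n ∈ s, a n • x n : ZZ p M) γ = ∑ n ∈ s, a n • x n γ := by
  have := map_sum (lp.evalCLM ℝ (fun γ : Γ => Lp ℝ (ENNReal.ofReal p) (M γ).meas) ∞ γ)
    (fun n => a n • x n) s
  simp only [map_smul] at this
  exact this

lemma aux_finite (hp : 1 ≤ p) (hc0 : 0 < c)
    (x : ℕ → ZZ p M)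
    (hpos : ∀ n γ, 0 ≤ x n γ)
    (hdisj : ∀ n m : ℕ, n ≠ m → ∀ γ, |x n γ| ⊓ |x m γ| = 0)
    (hlp : ∀ (s : Finset ℕ) (a : ℕ → ℝ), (∃ n ∈ s, a n ≠ 0) →
      c * (∑ n ∈ s, |a n| ^ p) ^ (1/p) < ‖∑ n ∈ s, a n • x n‖ ∧
      ‖∑ n ∈ s, a n • x n‖ ≤ (∑ n ∈ s, |a n| ^ p) ^ (1/p)) (s : Finset ℕ) :
    ∃ f : ℕ → ZZ p M →ₗ[ℝ] ℝ,
      (∀ n ∈ s, ∀ z, (∀ γ, 0 ≤ z γ) → 0 ≤ f n z) ∧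
      (∀ n ∈ s, f n (x n) = 1) ∧ (∀ n ∈ s, ∀ m, n ≠ m → f n (x m) = 0) ∧
      (∀ t ⊆ s, ∀ z, ∑ n ∈ t, |f n z| ^ p ≤ (c⁻¹ * ‖z‖) ^ p) := by
  have hp0 : 0 < p := by linarith
  have hne : Nonempty Γ := by
    by_contra hΓ
    rw [not_nonempty_iff] at hΓ
    have h1 := (hlp {0} (fun _ => 1) ⟨0, by simp, by simp⟩).1
    have h2 : ‖∑ n ∈ ({0} : Finset ℕ), (1:ℝ) • x n‖ ≤ 0 :=
      lp.norm_le_of_forall_le le_rfl (fun i => hΓ.elim i)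
    simp only [Finset.sum_singleton, abs_one, Real.one_rpow] at h1 h2
    linarith
  obtain ⟨L, l, hl0, hl1, hD⟩ := aux_minimax s (fun γ n => ‖x n γ‖ ^ p) (c ^ p) (by
    intro b hb hbn
    by_contra hcon
    push Not at hcon
    obtain ⟨n, hn, hbn⟩ := hbn
    have h1 := (hlp s (fun n => b n ^ (1 / p)) ⟨n, hn, by
      have := (hb n).lt_of_ne' hbn
      positivity⟩).1
    have e : ∀ n, |b n ^ (1 / p)| ^ p = b n := by
      intro n
      rw [abs_of_nonneg (by have := hb n; positivity), ← Real.rpow_mul (hb n),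
        one_div_mul_cancel hp0.ne', Real.rpow_one]
    simp only [e] at h1
    have hS : 0 ≤ ∑ n ∈ s, b n := Finset.sum_nonneg fun n _ => hb n
    refine absurd h1 (not_lt.2 (lp.norm_le_of_forall_le (by positivity) fun γ => ?_))
    rw [aux_apply_sum, ← Real.rpow_le_rpow_iff (norm_nonneg _) (by positivity) hp0,
      aux_norm_sum hp (fun n => x n γ) (fun n => hpos n γ) (fun n m h => hdisj n m h γ)]
    simp only [e]
    rw [Real.mul_rpow hc0.le (by positivity), ← Real.rpow_mul hS, one_div_mul_cancel hp0.ne',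
      Real.rpow_one]
    exact hcon γ)
  have hφ := fun γ => lp_part hp (fun n => x n γ) (fun n => hpos n γ)
    (fun n m h => hdisj n m h γ)
  choose φ ψ h1 h2 h3 h4 h5 using hφ
  set D : ℕ → ℝ := fun n => ∑ i ∈ L, l i * ‖x n i‖ ^ p with hDdef
  have hcp : 0 < c ^ p := by positivity
  have hD0 : ∀ n ∈ s, 0 < D n := fun n hn => hcp.trans (hD n hn)
  let ev := fun γ => (lp.evalCLM ℝ (fun γ : Γ => Lp ℝ (ENNReal.ofReal p) (M γ).meas) ∞ γ)
  let f : ℕ → ZZ p M →ₗ[ℝ] ℝ := fun n =>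
    (D n)⁻¹ • ∑ i ∈ L, l i • (φ i n).comp (ev i).toLinearMap
  have hf : ∀ n z, f n z = (D n)⁻¹ * ∑ i ∈ L, l i * φ i n (z i) := by
    intro n z
    simp only [f, LinearMap.smul_apply, LinearMap.sum_apply, LinearMap.comp_apply, smul_eq_mul]
    rfl
  refine ⟨f, ?_, ?_, ?_, ?_⟩
  · intro n hn z hz
    rw [hf]
    exact mul_nonneg (inv_nonneg.2 (hD0 n hn).le)
      (Finset.sum_nonneg fun i hi => mul_nonneg (hl0 i hi) (h1 i n _ (hz i)))
  · intro n hn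
    rw [hf]
    simp only [h2]
    exact inv_mul_cancel₀ (hD0 n hn).ne'
  · intro n hn m hnm
    rw [hf]
    simp only [h3 _ n m hnm, mul_zero, Finset.sum_const_zero]
  · intro t hts z
    have key : ∀ n ∈ t, |f n z| ^ p ≤ (c ^ p)⁻¹ * ∑ i ∈ L, l i * ψ i n (z i) := by
      intro n hn
      have hDn := hD0 n (hts hn)
      set τ := |f n z| with hτ
      have hτ0 : 0 ≤ τ := abs_nonneg _
      have hτD : D n * τ ≤ ∑ i ∈ L, l i * |φ i n (z i)| := by
        rw [hτ, hf, abs_mul, abs_of_pos (inv_pos.2 hDn), mul_inv_cancel_left₀ hDn.ne']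
        refine (Finset.abs_sum_le_sum_abs _ _).trans (Finset.sum_le_sum fun i hi => ?_)
        rw [abs_mul, abs_of_nonneg (hl0 i hi)]
      have hA : p * τ ^ (p - 1) * ∑ i ∈ L, l i * |φ i n (z i)| ≤
          ∑ i ∈ L, l i * ψ i n (z i) + (p - 1) * τ ^ p * D n := by
        rw [hDdef, Finset.mul_sum, Finset.mul_sum, ← Finset.sum_add_distrib]
        refine Finset.sum_le_sum fun i hi => ?_
        have := mul_le_mul_of_nonneg_left (h4 i n (z i) τ hτ0) (hl0 i hi)
        linarith
      have hB := mul_le_mul_of_nonneg_left hτD (show 0 ≤ p * τ ^ (p - 1) by positivity)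
      have hpow : τ ^ (p - 1) * τ = τ ^ p := by
        have := Real.rpow_add_one' hτ0 (y := p - 1) (by linarith)
        rw [← this]; congr 1; ring
      have hC : τ ^ p * D n ≤ ∑ i ∈ L, l i * ψ i n (z i) := by
        have : p * τ ^ (p - 1) * (D n * τ) = p * τ ^ p * D n := by rw [← hpow]; ring
        nlinarith
      rw [inv_mul_eq_div, le_div_iff₀ hcp]
      exact (mul_le_mul_of_nonneg_left (hD n (hts hn)).le (by positivity)).trans hC
    refine (Finset.sum_le_sum key).trans ?_
    rw [← Finset.mul_sum, Finset.sum_comm, Real.mul_rpow (by positivity) (norm_nonneg _),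
      Real.inv_rpow hc0.le]
    refine mul_le_mul_of_nonneg_left ?_ (by positivity)
    calc ∑ i ∈ L, ∑ n ∈ t, l i * ψ i n (z i) ≤ ∑ i ∈ L, l i * ‖z‖ ^ p := by
          refine Finset.sum_le_sum fun i hi => ?_
          rw [← Finset.mul_sum]
          refine mul_le_mul_of_nonneg_left ((h5 i t (z i)).trans ?_) (hl0 i hi)
          exact Real.rpow_le_rpow (norm_nonneg _) (lp.norm_apply_le_norm (by simp) z i) hp0.le
      _ = ‖z‖ ^ p := by rw [← Finset.sum_mul, hl1, one_mul]

lemma aux_limit {Z : Type*} [NormedAddCommGroup Z] [NormedSpace ℝ Z] (hp : 1 ≤ p) (hc0 : 0 < c)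
    (x : ℕ → Z) (K : Set Z)
    (H : ∀ s : Finset ℕ, ∃ f : ℕ → Z →ₗ[ℝ] ℝ,
      (∀ n ∈ s, ∀ z ∈ K, 0 ≤ f n z) ∧
      (∀ n ∈ s, f n (x n) = 1) ∧ (∀ n ∈ s, ∀ m, n ≠ m → f n (x m) = 0) ∧
      (∀ t ⊆ s, ∀ z, ∑ n ∈ t, |f n z| ^ p ≤ (c⁻¹ * ‖z‖) ^ p)) :
    ∃ f : ℕ → Z →ₗ[ℝ] ℝ,
      (∀ n, ∀ z ∈ K, 0 ≤ f n z) ∧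
      (∀ n, f n (x n) = 1) ∧ (∀ n m, n ≠ m → f n (x m) = 0) ∧
      (∀ (t : Finset ℕ) z, ∑ n ∈ t, |f n z| ^ p ≤ (c⁻¹ * ‖z‖) ^ p) := by
  have hp0 : 0 < p := by linarith
  choose F h1 h2 h3 h4 using H
  let U : Ultrafilter (Finset ℕ) := Ultrafilter.of Filter.atTop
  have hU : (U : Filter (Finset ℕ)) ≤ Filter.atTop := Ultrafilter.of_le _
  have hev : ∀ t : Finset ℕ, ∀ᶠ s in (U : Filter (Finset ℕ)), t ⊆ s := fun t =>
    hU (Filter.eventually_ge_atTop t)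
  have hlim : ∀ n z, ∃ y, Filter.Tendsto (fun s => F s n z) U (nhds y) := by
    intro n z
    obtain ⟨y, _, hy⟩ := (isCompact_Icc (a := -(c⁻¹ * ‖z‖)) (b := c⁻¹ * ‖z‖)).ultrafilter_le_nhds
      (U.map (fun s => F s n z)) (by
        rw [Filter.le_principal_iff]
        change ∀ᶠ s in (U : Filter (Finset ℕ)), F s n z ∈ Set.Icc _ _
        filter_upwards [hev {n}] with s hs
        have := h4 s {n} hs z
        rw [Finset.sum_singleton, Real.rpow_le_rpow_iff (abs_nonneg _) (by positivity) hp0] at this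
        exact abs_le.1 this)
    exact ⟨y, hy⟩
  choose g hg using hlim
  refine ⟨fun n => { toFun := g n, map_add' := ?_, map_smul' := ?_ }, ?_, ?_, ?_, ?_⟩
  · intro y z
    refine tendsto_nhds_unique (hg n (y + z)) ?_
    simp only [map_add]
    exact (hg n y).add (hg n z)
  · intro r z
    refine tendsto_nhds_unique (hg n (r • z)) ?_
    simp only [map_smul, RingHom.id_apply]
    exact (hg n z).const_smul r
  · intro n z hz
    refine ge_of_tendsto (hg n z) ?_
    filter_upwards [hev {n}] with s hs
    exact h1 s n (by simpa using hs) z hz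
  · intro n
    refine tendsto_nhds_unique (hg n (x n)) (tendsto_const_nhds.congr' ?_)
    filter_upwards [hev {n}] with s hs
    exact (h2 s n (by simpa using hs)).symm
  · intro n m hnm
    refine tendsto_nhds_unique (hg n (x m)) (tendsto_const_nhds.congr' ?_)
    filter_upwards [hev {n}] with s hs
    exact (h3 s n (by simpa using hs) m hnm).symm
  · intro t z
    refine le_of_tendsto (tendsto_finsetSum t fun n _ =>
      ((hg n z).abs.rpow_const (Or.inr hp0.le))) ?_
    filter_upwards [hev t] with s hs
    exact h4 s t hs z

lemma aux_proj {Z : Type*} [NormedAddCommGroup Z] [NormedSpace ℝ Z] [CompleteSpace Z]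
    (hp : 1 ≤ p) (hc0 : 0 < c)
    (x : ℕ → Z) (f : ℕ → Z →ₗ[ℝ] ℝ)
    (hx : ∀ (s : Finset ℕ) (a : ℕ → ℝ),
      ‖∑ n ∈ s, a n • x n‖ ≤ (∑ n ∈ s, |a n| ^ p) ^ (1/p))
    (h1 : ∀ n, f n (x n) = 1) (h2 : ∀ n m, n ≠ m → f n (x m) = 0)
    (h3 : ∀ (t : Finset ℕ) z, ∑ n ∈ t, |f n z| ^ p ≤ (c⁻¹ * ‖z‖) ^ p) :
    ∃ P : Z →L[ℝ] Z, (∀ z, HasSum (fun n => f n z • x n) (P z)) ∧ (∀ z, P (P z) = P z) ∧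
      Set.range P = closure (Submodule.span ℝ (Set.range x) : Set Z) ∧
      ∀ z, ‖P z‖ ≤ c⁻¹ * ‖z‖ := by
  have hp0 : 0 < p := by linarith
  have hs : ∀ z, Summable (fun n => |f n z| ^ p) := fun z =>
    summable_of_sum_le (fun n => by positivity) (fun t => h3 t z)
  have hS : ∀ z, Summable (fun n => f n z • x n) := by
    intro z
    rw [summable_iff_vanishing_norm]
    intro ε hε
    obtain ⟨s, hs'⟩ := summable_iff_vanishing_norm.1 (hs z) (ε ^ p) (by positivity)
    refine ⟨s, fun t ht => (hx t _).trans_lt ?_⟩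
    have h := (le_abs_self _).trans_lt (hs' t ht)
    have h0 : 0 ≤ ∑ n ∈ t, |f n z| ^ p := Finset.sum_nonneg fun n _ => by positivity
    calc _ < (ε ^ p) ^ (1 / p) := Real.rpow_lt_rpow h0 h (by positivity)
      _ = ε := by rw [← Real.rpow_mul hε.le, mul_one_div_cancel hp0.ne', Real.rpow_one]
  have hb : ∀ z, ‖∑' n, f n z • x n‖ ≤ c⁻¹ * ‖z‖ := by
    intro z
    refine le_of_tendsto (hS z).hasSum.norm (Filter.Eventually.of_forall fun t => ?_)
    have h0 : 0 ≤ ∑ n ∈ t, |f n z| ^ p := Finset.sum_nonneg fun n _ => by positivity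
    calc _ ≤ _ := hx t _
      _ ≤ ((c⁻¹ * ‖z‖) ^ p) ^ (1 / p) := Real.rpow_le_rpow h0 (h3 t z) (by positivity)
      _ = _ := by rw [← Real.rpow_mul (by positivity), mul_one_div_cancel hp0.ne', Real.rpow_one]
  let P0 : Z →ₗ[ℝ] Z :=
    { toFun := fun z => ∑' n, f n z • x n
      map_add' := by
        intro y z
        rw [← (hS y).tsum_add (hS z)]
        simp only [map_add, add_smul]
      map_smul' := by
        intro r z
        simp only [RingHom.id_apply]
        rw [← (hS z).tsum_const_smul]
        simp only [map_smul, smul_eq_mul, mul_smul] }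
  let P : Z →L[ℝ] Z := P0.mkContinuous c⁻¹ hb
  have hP : ∀ z, HasSum (fun n => f n z • x n) (P z) := fun z => (hS z).hasSum
  have hPx : ∀ m, P (x m) = x m := by
    intro m
    refine (hP (x m)).unique ?_
    have := hasSum_single (f := fun n => f n (x m) • x n) m (fun n hn => by simp [h2 n m hn])
    simpa [h1] using this
  have hcl : ∀ z ∈ closure (Submodule.span ℝ (Set.range x) : Set Z), P z = z := by
    have hclosed : IsClosed {z | P z = z} := isClosed_eq P.continuous continuous_id
    refine fun z hz => closure_minimal (t := {z | P z = z}) ?_ hclosed hz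
    intro z hz
    induction hz using Submodule.span_induction with
    | mem z hz => obtain ⟨m, rfl⟩ := hz; exact hPx m
    | zero => exact map_zero P
    | add y z _ _ hy hz => change P (y + z) = y + z; rw [map_add, hy, hz]
    | smul r z _ hz => change P (r • z) = r • z; rw [map_smul, hz]
  have hmem : ∀ z, P z ∈ closure (Submodule.span ℝ (Set.range x) : Set Z) := fun z =>
    mem_closure_of_tendsto (hP z) (Filter.Eventually.of_forall fun t =>
      Submodule.sum_mem _ fun n _ => Submodule.smul_mem _ _ (Submodule.subset_span ⟨n, rfl⟩))
  refine ⟨P, hP, fun z => hcl _ (hmem z), ?_, hb⟩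
  ext z
  exact ⟨fun ⟨y, hy⟩ => hy ▸ hmem y, fun hz => ⟨z, hcl z hz⟩⟩

end Zpart

/-- In an `ℓ∞`-sum `Z = (⊕_γ L^p(μ_γ))_∞`, the closed linear span of a pairwise disjoint
positive sequence equivalent to the unit vector basis of `ℓ^p` (with constants `c` and `1`)
is the range of a positive bounded projection of norm at most `c^{-p}`. -/
theorem statement18 (p : ℝ) (hp : 1 ≤ p) [Fact (1 ≤ ENNReal.ofReal p)]
    (Γ : Type*) (M : Γ → MeasSp)
    (c : ℝ) (hc0 : 0 < c) (hc1 : c ≤ 1)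
    (x : ℕ → lp (fun γ : Γ => Lp ℝ (ENNReal.ofReal p) (M γ).meas) ∞)
    (hpos : ∀ n γ, 0 ≤ x n γ)
    (hdisj : ∀ n m : ℕ, n ≠ m → ∀ γ, |x n γ| ⊓ |x m γ| = 0)
    (hlp : ∀ (s : Finset ℕ) (a : ℕ → ℝ), (∃ n ∈ s, a n ≠ 0) →
      c * (∑ n ∈ s, |a n| ^ p) ^ (1/p) < ‖∑ n ∈ s, a n • x n‖ ∧
      ‖∑ n ∈ s, a n • x n‖ ≤ (∑ n ∈ s, |a n| ^ p) ^ (1/p)) :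
    ∃ P : lp (fun γ : Γ => Lp ℝ (ENNReal.ofReal p) (M γ).meas) ∞ →L[ℝ]
        lp (fun γ : Γ => Lp ℝ (ENNReal.ofReal p) (M γ).meas) ∞,
      (∀ z, (∀ γ, 0 ≤ z γ) → ∀ γ, 0 ≤ P z γ) ∧
      (∀ z, P (P z) = P z) ∧
      Set.range P = closure (Submodule.span ℝ (Set.range x) :
        Set (lp (fun γ : Γ => Lp ℝ (ENNReal.ofReal p) (M γ).meas) ∞)) ∧
      (∀ z, ‖P z‖ ≤ c ^ (-p) * ‖z‖) := by
  have hp0 : 0 < p := by linarith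
  obtain ⟨f, h1, h2, h3, h4⟩ := aux_limit (c := c) hp hc0 x {z | ∀ γ, 0 ≤ z γ}
    (aux_finite hp hc0 x hpos hdisj hlp)
  have hx : ∀ (s : Finset ℕ) (a : ℕ → ℝ),
      ‖∑ n ∈ s, a n • x n‖ ≤ (∑ n ∈ s, |a n| ^ p) ^ (1/p) := by
    intro s a
    by_cases h : ∃ n ∈ s, a n ≠ 0
    · exact (hlp s a h).2
    · push Not at h
      rw [Finset.sum_eq_zero fun n hn => by rw [h n hn, zero_smul], norm_zero]
      exact Real.rpow_nonneg (Finset.sum_nonneg fun n _ => by positivity) _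
  obtain ⟨P, hP, hPP, hr, hb⟩ := aux_proj (c := c) hp hc0 x f hx h2 h3 h4
  refine ⟨P, ?_, hPP, hr, fun z => (hb z).trans ?_⟩
  · intro z hz γ
    have hs := (lp.evalCLM ℝ (fun γ : Γ => Lp ℝ (ENNReal.ofReal p) (M γ).meas) ∞ γ).hasSum (hP z)
    refine hs.nonneg fun n => ?_
    have e : (lp.evalCLM ℝ (fun γ : Γ => Lp ℝ (ENNReal.ofReal p) (M γ).meas) ∞ γ)
      (f n z • x n) = f n z • x n γ := rfl
    have hfz : 0 ≤ f n z := h1 n z hz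
    change 0 ≤ f n z • x n γ
    rw [← Lp.coeFn_nonneg]
    filter_upwards [Lp.coeFn_smul (f n z) (x n γ), (Lp.coeFn_nonneg (x n γ)).2 (hpos n γ)]
      with w hw hw2
    rw [hw]
    exact mul_nonneg hfz hw2
  · refine mul_le_mul_of_nonneg_right ?_ (norm_nonneg _)
    rw [← Real.rpow_neg_one]
    exact Real.rpow_le_rpow_of_exponent_ge hc0 hc1 (by linarith)
end
end

section
/- Let 1 < p < ∞ and let ℓ^{p,∞} be the Banach lattice of real sequences a = (a_i)_{i∈ℕ} with finite norm ‖a‖_{p,∞} = sup{|I|^{(1/p)−1} Σ_{i∈I} |a_i| : I ⊆ ℕ finite, nonempty}, ordered coordinatewise. Let X = (⊕_{ℕ} ℓ^{p,∞})_∞ be the Banach lattice of bounded sequences of elements of ℓ^{p,∞} with the supremum norm and coordinatewise order; X satisfies an upper p-estimate with constant 1. Let (S_j)_{j∈ℕ} be an enumeration of the Schreier family 𝒮 = {S ⊆ ℕ : |S| ≤ min S}, and define T : ℓ^{p,∞} → X by T a = (a·χ_{S_j})_{j∈ℕ}. Then T is a vector lattice homomorphism which is an isomorphism onto its closed range Y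 = T(ℓ^{p,∞}), and there is no bounded linear projection from X onto Y. Consequently, there exists a Banach lattice X with an upper p-estimate and an uncomplemented closed sublattice Y of X lattice isomorphic to ℓ^{p,∞}; in particular, ℓ^{p,∞} is not injective in the class of Banach lattices with upper p-estimates. -/
noncomputable section

/-- The set of values whose supremum is the weak-`ℓ^p` norm
`‖a‖_{p,∞} = sup {|I|^{1/p−1} Σ_{i∈I} |a_i| : I ⊆ ℕ finite nonempty}`. -/
def wSeqSet (p : ℝ) (a : ℕ → ℝ) : Set ℝ :=
  {r : ℝ | ∃ I : Finset ℕ, I.Nonempty ∧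
    r = (I.card : ℝ) ^ (1/p - 1) * ∑ i ∈ I, |a i|}

/-- The weak-`ℓ^p` norm of a sequence. -/
def wSeqNorm (p : ℝ) (a : ℕ → ℝ) : ℝ := sSup (wSeqSet p a)

/-- Membership in `ℓ^{p,∞}`: the weak norm is finite. -/
def MemWp (p : ℝ) (a : ℕ → ℝ) : Prop := BddAbove (wSeqSet p a)

/-- The set of values whose supremum is the norm of `X = (⊕_ℕ ℓ^{p,∞})_∞`. -/
def XSeqSet (p : ℝ) (x : ℕ → ℕ → ℝ) : Set ℝ := {r : ℝ | ∃ j : ℕ, r = wSeqNorm p (x j)}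

/-- The norm of `X = (⊕_ℕ ℓ^{p,∞})_∞`: the supremum over `j` of the weak norms of the
columns. -/
def XSeqNorm (p : ℝ) (x : ℕ → ℕ → ℝ) : ℝ := sSup (XSeqSet p x)

/-- Membership in `X = (⊕_ℕ ℓ^{p,∞})_∞`. -/
def MemX (p : ℝ) (x : ℕ → ℕ → ℝ) : Prop :=
  (∀ j, MemWp p (x j)) ∧ BddAbove (XSeqSet p x)

/-- The Schreier family `{S ⊆ ℕ : |S| ≤ min S}` (with indices shifted by one, as the paper's
`ℕ` starts at `1`). -/
def Schreier : Set (Finset ℕ) := {S | ∀ n ∈ S, S.card ≤ n + 1}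

/-- The lattice embedding `T : ℓ^{p,∞} → X`, `T a = (a·χ_{S_j})_j`, associated to an
enumeration `(S_j)` of the Schreier family. -/
def Tmap (SJ : ℕ → Finset ℕ) (a : ℕ → ℝ) : ℕ → ℕ → ℝ :=
  fun j i => if i ∈ SJ j then a i else 0

/-- Uniform bound formulation of the weak norm. -/
def Bd19 (p C : ℝ) (a : ℕ → ℝ) : Prop :=
  ∀ I : Finset ℕ, ∑ i ∈ I, |a i| ≤ C * (I.card : ℝ) ^ (1 - 1/p)

lemma theta_pos19 {p : ℝ} (hp : 1 < p) : 0 < 1 - 1/p := by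
  have : 1/p < 1 := by rw [div_lt_one (by linarith)]; exact hp
  linarith

lemma bd19_mem {p C : ℝ} {a : ℕ → ℝ} (h : Bd19 p C a) :
    ∀ r ∈ wSeqSet p a, r ≤ C := by
  rintro r ⟨I, hI, rfl⟩
  have hc : (0:ℝ) < I.card := by exact_mod_cast hI.card_pos
  have h1 : 0 < (I.card : ℝ) ^ (1/p - 1) := Real.rpow_pos_of_pos hc _
  calc (I.card : ℝ) ^ (1/p - 1) * ∑ i ∈ I, |a i|
      ≤ (I.card : ℝ) ^ (1/p - 1) * (C * (I.card : ℝ) ^ (1 - 1/p)) :=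
        mul_le_mul_of_nonneg_left (h I) h1.le
    _ = C * ((I.card : ℝ) ^ (1/p - 1) * (I.card : ℝ) ^ (1 - 1/p)) := by ring
    _ = C := by rw [← Real.rpow_add hc]; simp

lemma wset_nonempty19 (p : ℝ) (a : ℕ → ℝ) : (wSeqSet p a).Nonempty :=
  ⟨_, {0}, Finset.singleton_nonempty 0, rfl⟩

lemma bd19_memWp {p C : ℝ} {a : ℕ → ℝ} (h : Bd19 p C a) : MemWp p a :=
  ⟨C, bd19_mem h⟩

lemma bd19_norm {p C : ℝ} {a : ℕ → ℝ} (h : Bd19 p C a) : wSeqNorm p a ≤ C :=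
  csSup_le (wset_nonempty19 p a) (bd19_mem h)

lemma memWp_bd19 {p : ℝ} (hp : 1 < p) {a : ℕ → ℝ} (h : MemWp p a) :
    Bd19 p (wSeqNorm p a) a := by
  intro I
  rcases I.eq_empty_or_nonempty with rfl | hI
  · rw [Finset.sum_empty, Finset.card_empty, Nat.cast_zero, Real.zero_rpow (theta_pos19 hp).ne', mul_zero]
  have hc : (0:ℝ) < I.card := by exact_mod_cast hI.card_pos
  have h1 : 0 < (I.card : ℝ) ^ (1 - 1/p) := Real.rpow_pos_of_pos hc _
  have h2 : (I.card : ℝ) ^ (1/p - 1) * ∑ i ∈ I, |a i| ≤ wSeqNorm p a :=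
    le_csSup h ⟨I, hI, rfl⟩
  calc ∑ i ∈ I, |a i|
      = ((I.card : ℝ) ^ (1/p - 1) * (I.card : ℝ) ^ (1 - 1/p)) * ∑ i ∈ I, |a i| := by
        rw [← Real.rpow_add hc]; simp
    _ = ((I.card : ℝ) ^ (1/p - 1) * ∑ i ∈ I, |a i|) * (I.card : ℝ) ^ (1 - 1/p) := by ring
    _ ≤ _ := mul_le_mul_of_nonneg_right h2 h1.le

lemma bd19_nonneg {p C : ℝ} {a : ℕ → ℝ} (h : Bd19 p C a) : 0 ≤ C := by
  have := h {0}
  simp at this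
  exact (abs_nonneg _).trans this

lemma bd19_mono {p C D : ℝ} (hCD : C ≤ D) {a : ℕ → ℝ} (h : Bd19 p C a) : Bd19 p D a :=
  fun I => (h I).trans (mul_le_mul_of_nonneg_right hCD (by positivity))

lemma bd19_memX {p C : ℝ} {x : ℕ → ℕ → ℝ} (h : ∀ j, Bd19 p C (x j)) : MemX p x := by
  refine ⟨fun j => bd19_memWp (h j), C, ?_⟩
  rintro r ⟨j, rfl⟩
  exact bd19_norm (h j)

lemma bd19_normX {p C : ℝ} {x : ℕ → ℕ → ℝ} (h : ∀ j, Bd19 p C (x j)) : XSeqNorm p x ≤ C := by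
  refine csSup_le ⟨_, 0, rfl⟩ ?_
  rintro r ⟨j, rfl⟩
  exact bd19_norm (h j)

lemma memX_bd19 {p : ℝ} (hp : 1 < p) {x : ℕ → ℕ → ℝ} (h : MemX p x) (j : ℕ) :
    Bd19 p (XSeqNorm p x) (x j) :=
  bd19_mono (le_csSup h.2 ⟨j, rfl⟩) (memWp_bd19 hp (h.1 j))

lemma bd19_T {p C : ℝ} {a : ℕ → ℝ} (SJ : ℕ → Finset ℕ) (h : Bd19 p C a) (j : ℕ) :
    Bd19 p C (Tmap SJ a j) := by
  intro I
  refine le_trans (Finset.sum_le_sum fun i _ => ?_) (h I)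
  unfold Tmap
  split_ifs <;> simp

lemma bd19_single {p C : ℝ} (hp : 1 < p) {a : ℕ → ℝ} (hC : 0 ≤ C) (i0 : ℕ)
    (h0 : ∀ i, i ≠ i0 → a i = 0) (h1 : |a i0| ≤ C) : Bd19 p C a := by
  intro I
  rcases I.eq_empty_or_nonempty with rfl | hI
  · rw [Finset.sum_empty, Finset.card_empty, Nat.cast_zero, Real.zero_rpow (theta_pos19 hp).ne', mul_zero]
  have hc : (1:ℝ) ≤ I.card := by exact_mod_cast hI.card_pos
  have h3 : 1 ≤ (I.card : ℝ) ^ (1 - 1/p) := Real.one_le_rpow hc (theta_pos19 hp).le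
  have h4 : ∑ i ∈ I, |a i| ≤ C := by
    by_cases hi : i0 ∈ I
    · rw [Finset.sum_eq_single_of_mem i0 hi (fun b _ hb => by simp [h0 b hb])]
      exact h1
    · rw [Finset.sum_eq_zero]
      · exact hC
      · intro i hi2
        rw [h0 i (fun h => hi (h ▸ hi2))]; simp
  nlinarith

lemma upper19 {p : ℝ} (hp : 1 < p) (m : ℕ) (x : Fin (m + 1) → ℕ → ℝ) (N : Fin (m+1) → ℝ)
    (h : ∀ k, Bd19 p (N k) (x k)) :
    Bd19 p ((∑ k, N k ^ p) ^ (1/p)) (fun i =>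
      (Finset.univ : Finset (Fin (m + 1))).sup' Finset.univ_nonempty fun k => |x k i|) := by
  intro I
  have hN : ∀ k, 0 ≤ N k := fun k => bd19_nonneg (h k)
  have hth := theta_pos19 hp
  have hch : ∀ i, ∃ k : Fin (m+1),
      (Finset.univ : Finset (Fin (m + 1))).sup' Finset.univ_nonempty (fun k => |x k i|)
        = |x k i| := by
    intro i
    obtain ⟨k, -, hk⟩ := Finset.exists_mem_eq_sup' (Finset.univ_nonempty (α := Fin (m+1)))
      (fun k => |x k i|)
    exact ⟨k, hk⟩
  choose f hf using hch
  have hpq : p.HolderConjugate (1 - 1/p)⁻¹ := by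
    rw [Real.holderConjugate_iff]
    refine ⟨hp, ?_⟩
    simp
  have e1 : ∑ i ∈ I, |(fun i => (Finset.univ : Finset (Fin (m + 1))).sup'
      Finset.univ_nonempty fun k => |x k i|) i| = ∑ i ∈ I, |x (f i) i| := by
    refine Finset.sum_congr rfl fun i _ => ?_
    simp only [hf, abs_abs]
  rw [e1, ← Finset.sum_fiberwise I f]
  have e2 : ∀ k, ∑ i ∈ I with f i = k, |x (f i) i|
      ≤ N k * ((I.filter (fun i => f i = k)).card : ℝ) ^ (1 - 1/p) := by
    intro k
    refine le_trans (le_of_eq (Finset.sum_congr rfl fun i hi => ?_)) (h k _)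
    rw [(Finset.mem_filter.1 hi).2]
  refine (Finset.sum_le_sum fun k _ => e2 k).trans ?_
  refine (Real.inner_le_Lp_mul_Lq _ _ _ hpq).trans ?_
  have e3 : ∀ k, |((I.filter (fun i => f i = k)).card : ℝ) ^ (1 - 1/p)| ^ (1 - 1/p)⁻¹
      = ((I.filter (fun i => f i = k)).card : ℝ) := by
    intro k
    rw [abs_of_nonneg (by positivity), ← Real.rpow_mul (by positivity),
      mul_inv_cancel₀ hth.ne', Real.rpow_one]
  simp only [e3, abs_of_nonneg (hN _)]
  rw [one_div (1 - 1/p)⁻¹, inv_inv]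
  have e4 : ∑ k, ((I.filter (fun i => f i = k)).card : ℝ) = I.card := by
    rw [Finset.card_eq_sum_card_fiberwise (f := f) (t := Finset.univ) (by simp)]
    push_cast; rfl
  rw [e4]

lemma half19 (I : Finset ℕ) : ∃ J ⊆ I, J ∈ Schreier ∧ (I \ J).card = I.card / 2 := by
  have h1 : I.card - I.card / 2 ≤ (I.filter (fun i => I.card / 2 ≤ i)).card := by
    have h2 := Finset.card_filter_add_card_filter_not (s := I) (fun i => I.card / 2 ≤ i)
    have h3 : (I.filter (fun i => ¬ I.card / 2 ≤ i)).card ≤ I.card / 2 := by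
      refine (Finset.card_le_card (t := Finset.range (I.card/2)) ?_).trans (by simp)
      intro i hi
      simp at hi ⊢
      omega
    omega
  obtain ⟨J, hJ, hJc⟩ := Finset.exists_subset_card_eq h1
  have hJI : J ⊆ I := hJ.trans (Finset.filter_subset _ _)
  refine ⟨J, hJI, ?_, ?_⟩
  · intro n hn
    have := (Finset.mem_filter.1 (hJ hn)).2
    omega
  · rw [Finset.card_sdiff_of_subset hJI]; omega

lemma lower19 {p : ℝ} (hp : 1 < p) (a : ℕ → ℝ) (N : ℝ) (hN : 0 ≤ N)
    (h : ∀ S ∈ Schreier, ∑ i ∈ S, |a i| ≤ N * (S.card : ℝ) ^ (1 - 1/p)) :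
    ∀ n : ℕ, ∀ I : Finset ℕ, I.card = n →
      (1 - (1/2 : ℝ) ^ (1 - 1/p)) * ∑ i ∈ I, |a i| ≤ N * (n : ℝ) ^ (1 - 1/p) := by
  have hth := theta_pos19 hp
  have hc1 : (1/2 : ℝ) ^ (1 - 1/p) < 1 := Real.rpow_lt_one (by norm_num) (by norm_num) hth
  intro n
  induction n using Nat.strong_induction_on with
  | _ n ih =>
    intro I hI
    rcases Nat.eq_zero_or_pos n with rfl | hn
    · rw [Finset.card_eq_zero] at hI
      subst hI
      rw [Finset.sum_empty, Nat.cast_zero, Real.zero_rpow hth.ne', mul_zero, mul_zero]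
    obtain ⟨J, hJI, hJ, hJc⟩ := half19 I
    have h1 := h J hJ
    have h2 := ih (n/2) (by omega) (I \ J) (by rw [hJc, hI])
    rw [← Finset.sum_sdiff hJI]
    have h3 : (J.card : ℝ) ^ (1 - 1/p) ≤ (n:ℝ) ^ (1 - 1/p) := by
      apply Real.rpow_le_rpow (by positivity) _ hth.le
      rw [← hI]; exact_mod_cast Finset.card_le_card hJI
    have h4 : ((n/2 : ℕ) : ℝ) ^ (1 - 1/p) ≤ (1/2 : ℝ) ^ (1 - 1/p) * (n:ℝ) ^ (1 - 1/p) := by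
      rw [← Real.mul_rpow (by norm_num) (by positivity)]
      apply Real.rpow_le_rpow (by positivity) _ hth.le
      have : ((n/2 : ℕ) : ℝ) ≤ (n:ℝ)/2 := Nat.cast_div_le
      linarith
    have h5 := mul_le_mul_of_nonneg_left h3 hN
    have h6 := mul_le_mul_of_nonneg_left h4 hN
    have h7 := mul_le_mul_of_nonneg_left (h1.trans h5) (sub_nonneg.2 hc1.le)
    rw [mul_add]
    calc _ ≤ N * ((1/2 : ℝ) ^ (1 - 1/p) * (n:ℝ) ^ (1 - 1/p))
          + (1 - (1/2 : ℝ) ^ (1 - 1/p)) * (N * (n:ℝ) ^ (1 - 1/p)) :=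
            add_le_add (h2.trans h6) h7
      _ = _ := by ring

lemma signs19 (M : ℕ → ℕ → ℝ) (s : Finset ℕ) : ∃ ε : ℕ → ℝ, (∀ i, |ε i| = 1) ∧
    ∑ k ∈ s, M k k ≤ ∑ k ∈ s, ε k * ∑ l ∈ s, ε l * M k l := by
  induction s using Finset.induction_on with
  | empty => exact ⟨fun _ => 1, by simp, by simp⟩
  | insert b s hb ih =>
    obtain ⟨ε, h1, h2⟩ := ih
    obtain ⟨t, ht, ht2⟩ : ∃ t : ℝ, |t| = 1 ∧
        0 ≤ t * (∑ l ∈ s, ε l * M b l + ∑ k ∈ s, ε k * M k b) := by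
      rcases le_total 0 (∑ l ∈ s, ε l * M b l + ∑ k ∈ s, ε k * M k b) with h | h
      · exact ⟨1, by simp, by simpa using h⟩
      · exact ⟨-1, by simp, by linarith⟩
    have htt : t * t = 1 := by rw [← abs_mul_abs_self, ht]; norm_num
    refine ⟨fun i => if i = b then t else ε i, ?_, ?_⟩
    · intro i; dsimp only; split_ifs; exacts [ht, h1 i]
    have hs : ∀ i ∈ s, (if i = b then t else ε i) = ε i := by
      intro i hi
      rw [if_neg]; rintro rfl; exact hb hi
    have hin : ∀ k, ∑ l ∈ s, (if l = b then t else ε l) * M k l = ∑ l ∈ s, ε l * M k l :=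
      fun k => Finset.sum_congr rfl fun l hl => by rw [hs l hl]
    simp only [Finset.sum_insert hb, hin, if_true]
    have hout : ∑ k ∈ s, (if k = b then t else ε k) * (t * M k b + ∑ l ∈ s, ε l * M k l)
        = t * ∑ k ∈ s, ε k * M k b + ∑ k ∈ s, ε k * ∑ l ∈ s, ε l * M k l := by
      rw [Finset.mul_sum, ← Finset.sum_add_distrib]
      refine Finset.sum_congr rfl fun k hk => ?_
      rw [hs k hk]; ring
    rw [hout]
    have : t * (t * M b b) = M b b := by rw [← mul_assoc, htt, one_mul]
    rw [mul_add, this]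
    rw [mul_add] at ht2
    linarith

/-- The element of `X` supported on the row `i`. -/
def el19 (f : ℕ → ℝ) (i : ℕ) : ℕ → ℕ → ℝ := fun j i' => if i' = i then f j else 0

open Classical in
/-- Indicator of a proposition. -/
def ind19 (A : Prop) : ℝ := if A then 1 else 0

lemma ind19_pos {A : Prop} (h : A) : ind19 A = 1 := if_pos h

lemma ind19_neg {A : Prop} (h : ¬ A) : ind19 A = 0 := if_neg h

lemma ind19_nonneg (A : Prop) : 0 ≤ ind19 A := by
  unfold ind19; split_ifs <;> simp

lemma ind19_abs (A : Prop) : |ind19 A| ≤ 1 := by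
  unfold ind19; split_ifs <;> simp

open Classical in
lemma count19 (S : Finset ℕ) (ms : ℕ → ℕ) (hmono : Monotone ms) (L : ℕ) :
    ∑ k ∈ Finset.range L, ind19 (∃ n ∈ S, ms k < n ∧ n ≤ ms (k+1)) ≤ (S.card : ℝ) := by
  have key : ∀ k, ∃ n, (∃ n ∈ S, ms k < n ∧ n ≤ ms (k+1)) →
      n ∈ S ∧ ms k < n ∧ n ≤ ms (k+1) := by
    intro k
    by_cases hk : ∃ n ∈ S, ms k < n ∧ n ≤ ms (k+1)
    · obtain ⟨n, hn⟩ := hk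
      exact ⟨n, fun _ => hn⟩
    · exact ⟨0, fun h => absurd h hk⟩
  choose g hg using key
  unfold ind19
  have hsb : (∑ k ∈ Finset.range L, if ∃ n ∈ S, ms k < n ∧ n ≤ ms (k+1) then (1:ℝ) else 0)
      = (((Finset.range L).filter (fun k => ∃ n ∈ S, ms k < n ∧ n ≤ ms (k+1))).card : ℝ) :=
    Finset.sum_boole _ _
  refine le_trans (le_of_eq ?_) (le_trans (le_of_eq hsb) ?_)
  · exact Finset.sum_congr rfl fun k _ => by congr
  norm_cast
  refine Finset.card_le_card_of_injOn g ?_ ?_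
  · intro k hk
    exact (hg k (Finset.mem_filter.1 hk).2).1
  · intro k hk l hl hkl
    have a1 := hg k (Finset.mem_filter.1 hk).2
    have a2 := hg l (Finset.mem_filter.1 hl).2
    by_contra hne
    rcases lt_or_gt_of_ne hne with hlt | hlt
    · have := hmono (Nat.succ_le_of_lt hlt)
      simp only [Nat.succ_eq_add_one] at this
      omega
    · have := hmono (Nat.succ_le_of_lt hlt)
      simp only [Nat.succ_eq_add_one] at this
      omega

/-- Abstract contradiction for a linear `Q` from `X` to weak `ℓ^p`. -/
lemma noQ19 {p : ℝ} (hp : 1 < p) (SJ : ℕ → Finset ℕ) (hSJ : ∀ j, SJ j ∈ Schreier)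
    (Q : (ℕ → ℕ → ℝ) → (ℕ → ℝ)) (K : ℝ) (hK : 0 ≤ K)
    (hadd : ∀ x y, MemX p x → MemX p y → Q (x + y) = Q x + Q y)
    (hsmul : ∀ (c : ℝ) x, MemX p x → Q (c • x) = c • Q x)
    (hT : ∀ a, MemWp p a → Q (Tmap SJ a) = a)
    (hb : ∀ x C, (∀ j, Bd19 p C (x j)) → Bd19 p (K * C) (Q x)) : False := by
  have hmem0 : MemX p (0 : ℕ → ℕ → ℝ) := bd19_memX (C := 0) (fun j I => by simp)
  have hQ0 : Q 0 = 0 := by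
    have := hsmul 0 0 hmem0
    simpa using this
  have hmemadd : ∀ x y, MemX p x → MemX p y → MemX p (x + y) := by
    intro x y hx hy
    refine bd19_memX (C := XSeqNorm p x + XSeqNorm p y) (fun j I => ?_)
    rw [add_mul]
    refine le_trans ?_ (add_le_add (memX_bd19 hp hx j I) (memX_bd19 hp hy j I))
    rw [← Finset.sum_add_distrib]
    exact Finset.sum_le_sum fun i _ => abs_add_le _ _
  have hsum : ∀ (s : Finset ℕ) (x : ℕ → ℕ → ℕ → ℝ), (∀ k, MemX p (x k)) →
      MemX p (∑ k ∈ s, x k) ∧ Q (∑ k ∈ s, x k) = ∑ k ∈ s, Q (x k) := by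
    intro s x hx
    induction s using Finset.induction_on with
    | empty => simpa using ⟨hmem0, hQ0⟩
    | insert b s hbs ih =>
      rw [Finset.sum_insert hbs, Finset.sum_insert hbs]
      exact ⟨hmemadd _ _ (hx b) ih.1, by rw [hadd _ _ (hx b) ih.1, ih.2]⟩
  have helbd : ∀ f i C, 0 ≤ C → (∀ j, |f j| ≤ C) → ∀ j, Bd19 p C (el19 f i j) := by
    intro f i C hC hf j
    refine bd19_single hp hC i ?_ ?_
    · intro i' hi'; simp [el19, hi']
    · simpa [el19] using hf j
  have hindmem : ∀ (A : ℕ → Prop) i, MemX p (el19 (fun j => ind19 (A j)) i) := by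
    intro A i
    exact bd19_memX (helbd _ i 1 zero_le_one fun j => ind19_abs _)
  have hone : ∀ i, Q (el19 (fun j => ind19 (i ∈ SJ j)) i) i = 1 := by
    intro i
    have e : el19 (fun j => ind19 (i ∈ SJ j)) i = Tmap SJ (fun i' => if i' = i then 1 else 0) := by
      funext j i'
      by_cases h : i' = i
      · subst h; simp [el19, Tmap, ind19]
      · simp [el19, Tmap, h]
    rw [e, hT]
    · simp
    · refine bd19_memWp (C := 1) (bd19_single hp zero_le_one i ?_ ?_)
      · intro i' h; simp [h]
      · simp
  have claim : ∀ i, ∃ m', i ≤ m' ∧ ∀ m, m' ≤ m → (1/2 : ℝ) ≤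
      Q (el19 (fun j => ind19 (i ∈ SJ j ∧ ∀ n ∈ SJ j, ¬ (m' < n ∧ n ≤ m))) i) i := by
    intro i
    by_contra hcon
    have hcon2 : ∀ m', i ≤ m' → ∃ m, m' ≤ m ∧ Q (el19 (fun j => ind19 (i ∈ SJ j ∧
        ∀ n ∈ SJ j, ¬ (m' < n ∧ n ≤ m))) i) i < 1/2 := by
      intro m' hm'
      by_contra hc
      refine hcon ⟨m', hm', fun m hm => ?_⟩
      by_contra hc2
      exact hc ⟨m, hm, not_le.1 hc2⟩
    choose! h h1 h2 using hcon2
    obtain ⟨ms, hms0, hms⟩ : ∃ ms : ℕ → ℕ, ms 0 = i ∧ ∀ k, ms (k+1) = h (ms k) :=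
      ⟨fun k => Nat.rec i (fun _ r => h r) k, rfl, fun k => rfl⟩
    have hmi : ∀ k, i ≤ ms k := by
      intro k
      induction k with
      | zero => exact hms0.ge
      | succ k ih => rw [hms]; exact ih.trans (h1 _ ih)
    have hmono : Monotone ms := monotone_nat_of_le_succ fun k => by
      rw [hms]; exact h1 _ (hmi k)
    let w : ℕ → ℕ → ℝ := fun k j =>
      ind19 (i ∈ SJ j ∧ ∃ n ∈ SJ j, ms k < n ∧ n ≤ ms (k+1))
    have hw : ∀ k, (1/2:ℝ) ≤ Q (el19 (w k) i) i := by
      intro k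
      have e : el19 (w k) i + el19 (fun j => ind19 (i ∈ SJ j ∧ ∀ n ∈ SJ j,
          ¬ (ms k < n ∧ n ≤ h (ms k)))) i
          = el19 (fun j => ind19 (i ∈ SJ j)) i := by
        funext j i'
        simp only [Pi.add_apply, el19, w, hms]
        by_cases hi : i' = i
        · simp only [hi, if_true]
          by_cases hj : i ∈ SJ j
          · by_cases hex : ∃ n ∈ SJ j, ms k < n ∧ n ≤ h (ms k)
            · rw [ind19_pos ⟨hj, hex⟩, ind19_neg, ind19_pos hj, add_zero]
              rintro ⟨-, hh⟩
              obtain ⟨n, hn, hn2⟩ := hex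
              exact hh n hn hn2
            · rw [ind19_neg (fun hh => hex hh.2), ind19_pos ⟨hj, fun n hn hh => hex ⟨n, hn, hh⟩⟩,
                ind19_pos hj, zero_add]
          · rw [ind19_neg (fun hh => hj hh.1), ind19_neg (fun hh => hj hh.1), ind19_neg hj,
              zero_add]
        · simp [hi]
      have e2 := hone i
      rw [← e, hadd _ _ (hindmem _ i) (hindmem _ i), Pi.add_apply] at e2
      have e3 := h2 (ms k) (hmi k)
      linarith
    obtain ⟨L, hL⟩ := exists_nat_gt (2 * (K * (i + 1)))
    have hs := hsum (Finset.range L) (fun k => el19 (w k) i) (fun k => hindmem _ i)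
    have hbd : ∀ j, Bd19 p ((i:ℝ) + 1) ((∑ k ∈ Finset.range L, el19 (w k) i) j) := by
      have e : ∑ k ∈ Finset.range L, el19 (w k) i
          = el19 (fun j => ∑ k ∈ Finset.range L, w k j) i := by
        funext j i'
        simp only [Finset.sum_apply, el19]
        split_ifs <;> simp
      rw [e]
      refine helbd _ i _ (by positivity) ?_
      intro j
      rw [abs_of_nonneg (Finset.sum_nonneg fun k _ => ind19_nonneg _)]
      by_cases hj : i ∈ SJ j
      · simp only [hj, true_and]
        refine (count19 (SJ j) ms hmono L).trans ?_
        exact_mod_cast hSJ j i hj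
      · simp only [hj, false_and, ind19_neg not_false, Finset.sum_const_zero]
        positivity
    have h3 := hb _ _ hbd {i}
    rw [hs.2] at h3
    simp only [Finset.sum_singleton, Finset.card_singleton, Nat.cast_one, Real.one_rpow,
      mul_one, Finset.sum_apply] at h3
    have h4 : (L:ℝ) * (1/2) ≤ ∑ k ∈ Finset.range L, Q (el19 (w k) i) i := by
      have := Finset.card_nsmul_le_sum (Finset.range L) (fun k => Q (el19 (w k) i) i) (1/2)
        (fun k _ => hw k)
      simpa using this
    have h5 := le_abs_self (∑ k ∈ Finset.range L, Q (el19 (w k) i) i)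
    linarith
  choose g hg1 hg2 using claim
  obtain ⟨is, his⟩ : ∃ is : ℕ → ℕ, ∀ k, is (k+1) = g (is k) + 1 :=
    ⟨fun k => Nat.rec 0 (fun _ r => g r + 1) k, fun k => rfl⟩
  have hmono : StrictMono is := strictMono_nat_of_lt_succ fun k => by
    rw [his]; have := hg1 (is k); omega
  have hlt : ∀ k l, k < l → g (is k) < is l := by
    intro k l hkl
    have := hmono.monotone (Nat.succ_le_of_lt hkl)
    simp only [Nat.succ_eq_add_one, his] at this
    omega
  have hp0 : 0 < 1/p := by positivity
  obtain ⟨N, hN⟩ := ((tendsto_rpow_atTop hp0).comp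
    tendsto_natCast_atTop_atTop).eventually_gt_atTop (2*K) |>.and
    (Filter.eventually_gt_atTop 0) |>.exists
  obtain ⟨hN, hN0⟩ := hN
  simp only [Function.comp] at hN
  let A : ℕ → ℕ → Prop := fun k j =>
    is k ∈ SJ j ∧ ∀ n ∈ SJ j, ¬ (g (is k) < n ∧ n ≤ is N)
  let x : ℕ → ℕ → ℕ → ℝ := fun k => el19 (fun j => ind19 (A k j)) (is k)
  have hx : ∀ k, MemX p (x k) := fun k => hindmem _ _
  have hdiag : ∀ k, k < N → (1/2:ℝ) ≤ Q (x k) (is k) := fun k hk =>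
    hg2 (is k) (is N) (hlt k N hk).le
  obtain ⟨ε, hε, hsg⟩ := signs19 (fun k l => Q (x l) (is k)) (Finset.range N)
  have hdisj : ∀ k l j, k < N → l < N → A k j → A l j → k = l := by
    have aux : ∀ k l j, k < l → l < N → A k j → A l j → False := by
      intro k l j hkl hl hA hB
      exact hA.2 _ hB.1 ⟨hlt k l hkl, hmono.monotone hl.le⟩
    intro k l j hk hl hA hB
    by_contra hne
    rcases lt_or_gt_of_ne hne with h | h
    · exact aux k l j h hl hA hB
    · exact aux l k j h hk hB hA
  have hεx : ∀ k, MemX p (ε k • x k) := by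
    intro k
    have e : ε k • x k = el19 (fun j => ε k * ind19 (A k j)) (is k) := by
      funext j i'
      simp [x, el19]
    rw [e]
    refine bd19_memX (helbd _ _ 1 zero_le_one fun j => ?_)
    rw [abs_mul, hε, one_mul]
    exact ind19_abs _
  have hs := hsum (Finset.range N) (fun k => ε k • x k) hεx
  have hbd : ∀ j, Bd19 p 1 ((∑ k ∈ Finset.range N, ε k • x k) j) := by
    intro j
    have hval : ∀ i, (∑ k ∈ Finset.range N, ε k • x k) j i
        = ∑ k ∈ Finset.range N, ε k * ind19 (A k j ∧ i = is k) := by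
      intro i
      simp only [Finset.sum_apply, Pi.smul_apply, smul_eq_mul, x, el19]
      refine Finset.sum_congr rfl fun k _ => ?_
      by_cases h2 : i = is k <;> simp [h2, ind19]
    by_cases hex : ∃ k, k < N ∧ A k j
    · obtain ⟨k, hk, hA⟩ := hex
      refine bd19_single hp zero_le_one (is k) ?_ ?_
      · intro i hi
        rw [hval]
        refine Finset.sum_eq_zero fun l hl => ?_
        rw [ind19_neg, mul_zero]
        rintro ⟨hB, rfl⟩
        exact hi (by rw [hdisj k l j hk (Finset.mem_range.1 hl) hA hB])
      · rw [hval, Finset.sum_eq_single_of_mem k (Finset.mem_range.2 hk)]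
        · rw [ind19_pos ⟨hA, rfl⟩, mul_one, hε]
        · intro l hl hlk
          rw [ind19_neg, mul_zero]
          rintro ⟨hB, -⟩
          exact hlk (hdisj k l j hk (Finset.mem_range.1 hl) hA hB).symm
    · have hz : ∀ i, (∑ k ∈ Finset.range N, ε k • x k) j i = 0 := by
        intro i
        rw [hval]
        refine Finset.sum_eq_zero fun l hl => ?_
        rw [ind19_neg, mul_zero]
        rintro ⟨hB, -⟩
        exact hex ⟨l, Finset.mem_range.1 hl, hB⟩
      refine bd19_single hp zero_le_one 0 (fun i _ => hz i) ?_
      rw [hz, abs_zero]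
      exact zero_le_one
  have hfin := hb _ _ hbd ((Finset.range N).image is)
  rw [Finset.card_image_of_injective _ hmono.injective,
    Finset.sum_image (fun a _ b _ h => hmono.injective h), hs.2, Finset.card_range, mul_one] at hfin
  have hlow : (N:ℝ) * (1/2) ≤ ∑ k ∈ Finset.range N, Q (x k) (is k) := by
    have := Finset.card_nsmul_le_sum (Finset.range N) (fun k => Q (x k) (is k)) (1/2)
      (fun k hk => hdiag k (Finset.mem_range.1 hk))
    simpa using this
  have hcmp : ∑ k ∈ Finset.range N, ε k * ∑ l ∈ Finset.range N, ε l * Q (x l) (is k)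
      ≤ ∑ k ∈ Finset.range N, |(∑ l ∈ Finset.range N, Q (ε l • x l)) (is k)| := by
    refine Finset.sum_le_sum fun k _ => ?_
    have e : (∑ l ∈ Finset.range N, Q (ε l • x l)) (is k)
        = ∑ l ∈ Finset.range N, ε l * Q (x l) (is k) := by
      rw [Finset.sum_apply]
      refine Finset.sum_congr rfl fun l _ => ?_
      rw [hsmul _ _ (hx l)]; rfl
    rw [e]
    refine (le_abs_self _).trans ?_
    rw [abs_mul, hε, one_mul]
  have hNpos : (0:ℝ) < N := by exact_mod_cast hN0
  have hfinal : (N:ℝ) * (1/2) ≤ K * (N:ℝ) ^ (1 - 1/p) := by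
    linarith [hlow.trans (hsg.trans (hcmp.trans hfin))]
  have hsplit : (N:ℝ) = (N:ℝ) ^ (1/p) * (N:ℝ) ^ (1 - 1/p) := by
    rw [← Real.rpow_add hNpos]; simp
  have hpos : 0 < (N:ℝ) ^ (1 - 1/p) := Real.rpow_pos_of_pos hNpos _
  have : (N:ℝ) ^ (1/p) * (N:ℝ) ^ (1 - 1/p) ≤ 2 * K * (N:ℝ) ^ (1 - 1/p) := by
    rw [← hsplit]; linarith
  have := le_of_mul_le_mul_right this hpos
  linarith

/-- `X = (⊕_ℕ ℓ^{p,∞})_∞` is a Banach lattice with upper `p`-estimate constant one, the map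
`T a = (a·χ_{S_j})_j` (for an enumeration `(S_j)` of the Schreier family) is a vector lattice
homomorphism and an isomorphism from `ℓ^{p,∞}` onto its range `Y`, and there is no bounded
projection from `X` onto `Y`.  Hence `Y` is an uncomplemented closed sublattice of `X`
lattice isomorphic to `ℓ^{p,∞}`: `ℓ^{p,∞}` is not injective in the class of Banach lattices
with upper `p`-estimates. -/
theorem statement19 (p : ℝ) (hp : 1 < p)
    (SJ : ℕ → Finset ℕ) (hSJ : Set.range SJ = Schreier) :
    -- X satisfies an upper p-estimate with constant 1
    (∀ (m : ℕ) (x : Fin (m + 1) → ℕ → ℕ → ℝ), (∀ k, MemX p (x k)) →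
      XSeqNorm p (fun j i =>
          (Finset.univ : Finset (Fin (m + 1))).sup' Finset.univ_nonempty fun k => |x k j i|)
        ≤ (∑ k, XSeqNorm p (x k) ^ p) ^ (1/p)) ∧
    -- T maps ℓ^{p,∞} into X
    (∀ a : ℕ → ℝ, MemWp p a → MemX p (Tmap SJ a)) ∧
    -- T is a vector lattice homomorphism
    (∀ a b : ℕ → ℝ, Tmap SJ (a + b) = Tmap SJ a + Tmap SJ b) ∧
    (∀ (c : ℝ) (a : ℕ → ℝ), Tmap SJ (c • a) = c • Tmap SJ a) ∧
    (∀ a b : ℕ → ℝ, Tmap SJ (a ⊔ b) = Tmap SJ a ⊔ Tmap SJ b) ∧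
    -- T is a lattice isomorphism onto its range
    (∃ c : ℝ, 0 < c ∧ ∀ a : ℕ → ℝ, MemWp p a →
      c * wSeqNorm p a ≤ XSeqNorm p (Tmap SJ a) ∧
      XSeqNorm p (Tmap SJ a) ≤ wSeqNorm p a) ∧
    -- there is no bounded projection from X onto Y = T(ℓ^{p,∞})
    ¬ ∃ (P : (ℕ → ℕ → ℝ) → (ℕ → ℕ → ℝ)) (K : ℝ),
        (∀ x y, MemX p x → MemX p y → P (x + y) = P x + P y) ∧
        (∀ (c : ℝ) (x : ℕ → ℕ → ℝ), MemX p x → P (c • x) = c • P x) ∧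
        (∀ x, MemX p x → ∃ a : ℕ → ℝ, MemWp p a ∧ P x = Tmap SJ a) ∧
        (∀ a : ℕ → ℝ, MemWp p a → P (Tmap SJ a) = Tmap SJ a) ∧
        (∀ x, MemX p x → XSeqNorm p (P x) ≤ K * XSeqNorm p x) := by
  have hS : ∀ j, SJ j ∈ Schreier := fun j => hSJ ▸ Set.mem_range_self j
  have hth := theta_pos19 hp
  have hcpos : 0 < 1 - (1/2 : ℝ) ^ (1 - 1/p) :=
    sub_pos.2 (Real.rpow_lt_one (by norm_num) (by norm_num) hth)
  have hlow : ∀ (a : ℕ → ℝ) (D : ℝ), (∀ j, Bd19 p D (Tmap SJ a j)) →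
      Bd19 p (D / (1 - (1/2 : ℝ) ^ (1 - 1/p))) a := by
    intro a D hD I
    have h1 := lower19 hp a D (bd19_nonneg (hD 0)) (by
      intro S hSS
      rw [← hSJ] at hSS
      obtain ⟨j, rfl⟩ := hSS
      refine le_trans (le_of_eq (Finset.sum_congr rfl fun i hi => ?_)) (hD j (SJ j))
      simp [Tmap, hi]) I.card I rfl
    rw [div_mul_eq_mul_div, le_div_iff₀ hcpos]
    linarith
  refine ⟨?_, ?_, ?_, ?_, ?_, ?_, ?_⟩
  · intro m x hx
    exact bd19_normX fun j => upper19 hp m (fun k => x k j) (fun k => XSeqNorm p (x k))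
      fun k => memX_bd19 hp (hx k) j
  · intro a ha
    exact bd19_memX (bd19_T SJ (memWp_bd19 hp ha))
  · intro a b
    funext j i
    simp only [Tmap, Pi.add_apply]
    split_ifs <;> simp
  · intro c a
    funext j i
    simp [Tmap]
  · intro a b
    funext j i
    simp only [Tmap, Pi.sup_apply]
    split_ifs <;> simp
  · refine ⟨_, hcpos, fun a ha => ⟨?_, bd19_normX (bd19_T SJ (memWp_bd19 hp ha))⟩⟩
    have hm := bd19_memX (bd19_T SJ (memWp_bd19 hp ha))
    have := bd19_norm (hlow a _ (memX_bd19 hp hm))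
    rw [le_div_iff₀ hcpos] at this
    linarith
  · rintro ⟨P, K, hadd, hsmul, hran, hproj, hbd⟩
    have hsing : ∀ i, ∃ j, SJ j = {i} := by
      intro i
      have : ({i} : Finset ℕ) ∈ Set.range SJ := by
        rw [hSJ]
        intro n _
        simp
      exact this
    choose js hjs using hsing
    have hQT : ∀ a : ℕ → ℝ, (fun i => Tmap SJ a (js i) i) = a := by
      intro a; funext i; simp [Tmap, hjs]
    refine noQ19 hp SJ hS (fun x i => P x (js i) i) (|K| / (1 - (1/2 : ℝ) ^ (1 - 1/p)))
      (by positivity) ?_ ?_ ?_ ?_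
    · intro x y hx hy
      funext i
      simp [hadd x y hx hy]
    · intro c x hx
      funext i
      simp [hsmul c x hx]
    · intro a ha
      rw [hproj a ha]
      exact hQT a
    · intro x C hC
      have hx := bd19_memX hC
      obtain ⟨a, ha, hPa⟩ := hran x hx
      have h1 := hbd x hx
      rw [hPa] at h1 ⊢
      rw [hQT]
      have hm := bd19_memX (bd19_T SJ (memWp_bd19 hp ha))
      refine bd19_mono ?_ (hlow a _ (memX_bd19 hp hm))
      rw [div_mul_eq_mul_div]
      refine div_le_div_of_nonneg_right (h1.trans ?_) hcpos.le
      have h0 : 0 ≤ XSeqNorm p x := bd19_nonneg (memX_bd19 hp hx 0)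
      calc K * XSeqNorm p x ≤ |K| * XSeqNorm p x :=
            mul_le_mul_of_nonneg_right (le_abs_self K) h0
        _ ≤ |K| * C := mul_le_mul_of_nonneg_left (bd19_normX hC) (abs_nonneg K)
end
end
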